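/- arXiv:2104.05878 — 3 statements merged into one kernel-verified Lean document; each statement's English description precedes it below -/
import Mathlib

section
/- Let W be an m×k random matrix distributed according to the SUO distribution, let φ : ℝ → ℝ satisfy ‖φ‖_∞ ≤ C and ‖φ'‖_∞ ≤ C, and set n = max(k, m). Suppose δ, ε > 0 satisfy m^{5/2}/(n+1)^2 ≥ log(2/δ) and (n−1)/m^{3/4} ≥ 8√2 C²/ε. Then for all vectors z, z' ∈ ℝ^k with ‖z‖² = ‖z'‖² = k, with probability at least 1 − δ over the draw of W, |κ_f(z, z') − κ̃_f(Σ_{z,z'})| ≤ ε. -/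
open MeasureTheory ProbabilityTheory Matrix Kronecker
open scoped ENNReal NNReal

noncomputable section

instance {m n : Type*} : MeasurableSpace (Matrix m n ℝ) :=
  show MeasurableSpace (m → n → ℝ) from inferInstance

/-- `μ` is the Haar probability measure on the group `O(n)` of `n × n` real orthogonal
matrices: it is a probability measure, it is supported on orthogonal matrices, and it is
invariant under (left) translation by any orthogonal matrix. -/
def IsHaarO (n : ℕ) (μ : Measure (Matrix (Fin n) (Fin n) ℝ)) : Prop :=
  IsProbabilityMeasure μ ∧
  (∀ᵐ M ∂μ, Mᵀ * M = 1) ∧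
  ∀ Q : Matrix (Fin n) (Fin n) ℝ, Qᵀ * Q = 1 → μ.map (fun M => Q * M) = μ

/-- `μ` is the Haar probability measure on `SO(n)`: a probability measure supported on
orthogonal matrices of determinant one, invariant under left translation by `SO(n)`. -/
def IsHaarSO (n : ℕ) (μ : Measure (Matrix (Fin n) (Fin n) ℝ)) : Prop :=
  IsProbabilityMeasure μ ∧
  (∀ᵐ M ∂μ, Mᵀ * M = 1 ∧ M.det = 1) ∧
  ∀ Q : Matrix (Fin n) (Fin n) ℝ, Qᵀ * Q = 1 → Q.det = 1 →
    μ.map (fun M => Q * M) = μ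

/-- The map taking an `n × n` matrix to `√(n/k)` times its top-left `m × k` submatrix. -/
def suoOfHaar {m k n : ℕ} (hm : m ≤ n) (hk : k ≤ n)
    (M : Matrix (Fin n) (Fin n) ℝ) : Matrix (Fin m) (Fin k) ℝ :=
  Real.sqrt ((n : ℝ) / (k : ℝ)) • M.submatrix (Fin.castLE hm) (Fin.castLE hk)

/-- `ν` is the scaled-corrected uniform orthogonal (SUO) distribution on `m × k` matrices:
the law of `√(n/k) • W₀` where `n = max k m` and `W₀` is the top-left `m × k` submatrix of
a Haar-distributed `n × n` orthogonal matrix. -/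
def IsSUO (m k : ℕ) (ν : Measure (Matrix (Fin m) (Fin k) ℝ)) : Prop :=
  ∃ μ : Measure (Matrix (Fin (max k m)) (Fin (max k m)) ℝ),
    IsHaarO (max k m) μ ∧
    ν = μ.map (suoOfHaar (le_max_right k m) (le_max_left k m))

/-- The kernel function `κ_f(z, z') = (1/m) f(z)ᵀ f(z')` of the combined layer
`f(z) = φ(W z)`, with `φ` applied elementwise. -/
def kernelF {m k : ℕ} (φ : ℝ → ℝ) (W : Matrix (Fin m) (Fin k) ℝ)
    (z z' : Fin k → ℝ) : ℝ :=
  (∑ i, φ (W.mulVec z i) * φ (W.mulVec z' i)) / (m : ℝ)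

/-- The input covariance matrix `Σ_{z,z'} = (1/k) [[zᵀz, zᵀz'], [z'ᵀz, z'ᵀz']]`. -/
def covMat {k : ℕ} (z z' : Fin k → ℝ) : Matrix (Fin 2) (Fin 2) ℝ :=
  (k : ℝ)⁻¹ • !![z ⬝ᵥ z, z ⬝ᵥ z'; z' ⬝ᵥ z, z' ⬝ᵥ z']

/-- The approximate kernel function `κ̃_f(Σ) = E_{u ∼ N(0, Σ)}[φ(u₁) φ(u₂)]`, realized by
pushing a pair of independent standard Gaussians through the Cholesky factor of `Σ`. -/
def approxKernel (φ : ℝ → ℝ) (S : Matrix (Fin 2) (Fin 2) ℝ) : ℝ :=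
  ∫ p : ℝ × ℝ,
      φ (Real.sqrt (S 0 0) * p.1) *
      φ ((S 1 0 / Real.sqrt (S 0 0)) * p.1 +
          Real.sqrt (S 1 1 - (S 1 0) ^ 2 / S 0 0) * p.2)
    ∂((gaussianReal 0 1).prod (gaussianReal 0 1))

/-- `γ` is the law of a centered (jointly) Gaussian random vector indexed by `ι` with
covariance matrix `A`: every linear functional of it is a centered real Gaussian with the
corresponding variance. -/
def IsGaussianLaw {ι : Type*} [Fintype ι] (A : Matrix ι ι ℝ)
    (γ : Measure (ι → ℝ)) : Prop :=
  IsProbabilityMeasure γ ∧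
  ∀ l : ι → ℝ,
    γ.map (fun y => ∑ i, l i * y i) =
      gaussianReal 0 (Real.toNNReal (∑ i, ∑ j, l i * A i j * l j))

/-- The Frobenius (Hilbert–Schmidt) norm of a matrix. -/
def frobNorm {m n : ℕ} (M : Matrix (Fin m) (Fin n) ℝ) : ℝ :=
  Real.sqrt (∑ i, ∑ j, (M i j) ^ 2)

/-- The `ℓ²` operator norm of a square matrix. -/
def opNorm {d : ℕ} (A : Matrix (Fin d) (Fin d) ℝ) : ℝ :=
  ‖Matrix.toEuclideanCLM (𝕜 := ℝ) A‖

end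

/-!
The kernel only sees `W z` and `W z'`, hence a Haar matrix applied to an orthonormal pair spanning a
plane that contains the two zero-padded inputs. A rotation-invariant law on orthonormal pairs is
unique, so the image of the pair is distributed like the Gram–Schmidt orthonormalization of two
independent standard Gaussian vectors `g`, `h` in `ℝⁿ`.

Unless one of three events of probability at most `2 exp (-x² / 2)` occurs, `‖g‖` and `‖h‖` are
within `x` of `√n` and the projection of `h` onto `g` has length at most `x`; then `√n` times the
orthonormalized pair is within `O(x)` of `(g, h)`. Since `φ` is bounded and Lipschitz, replacing one
pair by the other moves the kernel by at most `O(C² x / √m)`. Evaluated at `(g, h)`, the kernel is a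
mean of `m` i.i.d. bounded variables whose expectation is the approximate kernel, and Hoeffding's
inequality applies. With `x = √m t` the union of the four events has probability at most
`8 exp (-m t² / 2)`, while off this union the error is at most `(2 + √(4 + 2√2)) C² t`. The theorem
is the case `t = √6 m^(3/4) / (n + 1)`, for which `m t² / 2 = 3 m^(5/2) / (n + 1)²`.
-/

namespace SUO

open Real InnerProductSpace Module Submodule
open NormedSpace (norm_normalize)

section Tails

variable {Ω : Type*} {mΩ : MeasurableSpace Ω} {μ : Measure Ω}

lemma measureReal_lt_abs_le_add (X : Ω → ℝ) (x : ℝ) :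
    μ.real {ω | x < |X ω|} ≤ μ.real {ω | x < X ω} + μ.real {ω | x < -X ω} := by
  simp_rw [lt_abs]
  exact measureReal_union_le _ _

lemma measureReal_lt_abs_le_of_hasSubgaussianMGF [IsFiniteMeasure μ] {X : Ω → ℝ} {c : ℝ≥0}
    (hX : HasSubgaussianMGF X c μ) {x : ℝ} (hx : 0 ≤ x) :
    μ.real {ω | x < |X ω|} ≤ 2 * rexp (-x ^ 2 / (2 * c)) := by
  have upper : μ.real {ω | x < X ω} ≤ rexp (-x ^ 2 / (2 * c)) :=
    (measureReal_mono fun _ (h : x < _) ↦ h.le).trans (hX.measure_ge_le hx)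
  have lower : μ.real {ω | x < -X ω} ≤ rexp (-x ^ 2 / (2 * c)) :=
    (measureReal_mono fun _ (h : x < _) ↦ h.le).trans (hX.neg.measure_ge_le hx)
  linarith [measureReal_lt_abs_le_add (μ := μ) X x]

lemma measureReal_prod_le_of_forall {Ω' : Type*} {mΩ' : MeasurableSpace Ω'} {ν : Measure Ω'}
    [IsProbabilityMeasure μ] [IsFiniteMeasure ν] {S : Set (Ω × Ω')} (hS : MeasurableSet S)
    {c : ℝ} (h : ∀ ω, ν.real (Prod.mk ω ⁻¹' S) ≤ c) :
    (μ.prod ν).real S ≤ c := by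
  have hc : 0 ≤ c := by
    obtain ⟨ω⟩ := nonempty_of_isProbabilityMeasure μ
    exact measureReal_nonneg.trans (h ω)
  refine ENNReal.toReal_le_of_le_ofReal hc ?_
  calc μ.prod ν S = ∫⁻ ω, ν (Prod.mk ω ⁻¹' S) ∂μ := Measure.prod_apply hS
    _ ≤ ∫⁻ _, ENNReal.ofReal c ∂μ :=
      lintegral_mono fun ω ↦ (ENNReal.le_ofReal_iff_toReal_le (measure_ne_top _ _) hc).2 (h ω)
    _ = ENNReal.ofReal c := by simp

lemma measureReal_lt_abs_mean_sub_integral_le {ι α : Type*} [Fintype ι] [Nonempty ι]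
    {mα : MeasurableSpace α} {P : Measure α} [IsProbabilityMeasure P] [IsProbabilityMeasure μ]
    {X : ι → Ω → α} (hX : ∀ i, MeasurePreserving (X i) μ P) (hind : iIndepFun X μ)
    {F : α → ℝ} (hF : Measurable F) {K : ℝ} (hK : 0 < K) (hFK : ∀ a, |F a| ≤ K)
    {t : ℝ} (ht : 0 ≤ t) :
    μ.real {ω | K * t < |(∑ i, F (X i ω)) / Fintype.card ι - ∫ a, F a ∂P|} ≤
      2 * rexp (-(Fintype.card ι * t ^ 2) / 2) := by
  have hcard : (0 : ℝ) < Fintype.card ι := by exact_mod_cast Fintype.card_pos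
  set e := ∫ a, F a ∂P
  set c : ℝ≥0 := (‖K - -K‖₊ / 2) ^ 2
  have hc : (c : ℝ) = K ^ 2 := by
    simp [c, ← two_mul, abs_of_pos hK]
  have hsub (i : ι) : HasSubgaussianMGF (fun ω ↦ F (X i ω) - e) c μ := by
    have hP : HasSubgaussianMGF (fun a ↦ F a - e) c P :=
      hasSubgaussianMGF_of_mem_Icc hF.aemeasurable (.of_forall fun a ↦ abs_le.1 (hFK a))
    rw [← (hX i).map_eq] at hP
    exact .of_map (hX i).measurable.aemeasurable hP
  have hsum : HasSubgaussianMGF (fun ω ↦ ∑ i, (F (X i ω) - e)) (∑ _ : ι, c) μ :=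
    .sum_of_iIndepFun (hind.comp _ fun _ ↦ hF.sub_const e) fun i _ ↦ hsub i
  convert measureReal_lt_abs_le_of_hasSubgaussianMGF hsum
    (x := Fintype.card ι * (K * t)) (by positivity) using 3
  · ext ω
    have : ∑ i, (F (X i ω) - e) =
        Fintype.card ι * ((∑ i, F (X i ω)) / Fintype.card ι - e) := by
      rw [Finset.sum_sub_distrib, Finset.sum_const, Finset.card_univ, nsmul_eq_mul, mul_sub,
        mul_div_cancel₀ _ hcard.ne']
    rw [this, abs_mul, abs_of_pos hcard, mul_lt_mul_iff_right₀ hcard]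
  · push_cast [Finset.sum_const, Finset.card_univ, nsmul_eq_mul, hc]
    field_simp

end Tails

section InnerProductSpace

variable {E : Type*} [NormedAddCommGroup E] [InnerProductSpace ℝ E]

lemma norm_starProjection_span_singleton (g h : E) :
    ‖(ℝ ∙ g).starProjection h‖ = |inner ℝ (NormedSpace.normalize g) h| := by
  rcases eq_or_ne g 0 with rfl | hg
  · simp
  rw [starProjection_singleton, norm_smul, NormedSpace.normalize, real_inner_smul_left, norm_eq_abs,
    abs_div, abs_mul, abs_inv, abs_norm]
  simp only [RCLike.ofReal_real_eq_id, id_eq, abs_pow, abs_norm]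
  field_simp

lemma measurable_starProjection_span_singleton [MeasurableSpace E] [BorelSpace E]
    [SecondCountableTopology E] :
    Measurable fun p : E × E ↦ (ℝ ∙ p.1).starProjection p.2 := by
  simp_rw [starProjection_singleton]
  exact ((measurable_fst.inner measurable_snd).div
    (RCLike.measurable_ofReal.comp (measurable_fst.norm.pow_const 2))).smul measurable_fst

end InnerProductSpace

section StdGaussian

variable {E : Type*} [NormedAddCommGroup E] [InnerProductSpace ℝ E] [FiniteDimensional ℝ E]
  [MeasurableSpace E] [BorelSpace E]

-- The exponent is the optimal Chernoff parameter for `‖g‖ ^ 2` at `N * a ^ 2` in dimension `N`.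
lemma integral_exp_mul_sq_gaussianReal {a : ℝ} (ha : 0 < a) :
    ∫ x, rexp ((1 - (a ^ 2)⁻¹) / 2 * x ^ 2) ∂gaussianReal 0 1 = a := by
  have hdens (x : ℝ) : gaussianPDFReal 0 1 x • rexp ((1 - (a ^ 2)⁻¹) / 2 * x ^ 2) =
      (√(2 * π))⁻¹ * rexp (-(1 / (2 * a ^ 2)) * x ^ 2) := by
    simp only [gaussianPDFReal_def, smul_eq_mul, NNReal.coe_one, mul_one, sub_zero]
    rw [mul_assoc, ← exp_add]
    congr 2
    field_simp
    ring
  have hsqrt : √(π / (1 / (2 * a ^ 2))) = √(2 * π) * a := by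
    rw [show π / (1 / (2 * a ^ 2)) = 2 * π * a ^ 2 by field_simp, sqrt_mul (by positivity),
      sqrt_sq ha.le]
  rw [integral_gaussianReal_eq_integral_smul one_ne_zero]
  simp_rw [hdens]
  rw [integral_const_mul, integral_gaussian, hsqrt, inv_mul_cancel_left₀ (by positivity)]

lemma integral_exp_mul_norm_sq_stdGaussian {a : ℝ} (ha : 0 < a) :
    ∫ g : E, rexp ((1 - (a ^ 2)⁻¹) / 2 * ‖g‖ ^ 2) ∂stdGaussian E = a ^ finrank ℝ E := by
  have hnorm (x : Fin (finrank ℝ E) → ℝ) :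
      ‖∑ i, x i • stdOrthonormalBasis ℝ E i‖ ^ 2 = ∑ i, x i ^ 2 := by
    rw [← (stdOrthonormalBasis ℝ E).sum_sq_inner_right]
    simp [inner_sum, inner_smul_right, OrthonormalBasis.inner_eq_ite]
  rw [stdGaussian, integral_map (Measurable.aemeasurable (by fun_prop)) (by fun_prop)]
  simp_rw [hnorm, Finset.mul_sum, Real.exp_sum]
  rw [integral_fintype_prod_eq_pow (fun x ↦ rexp ((1 - (a ^ 2)⁻¹) / 2 * x ^ 2)),
    integral_exp_mul_sq_gaussianReal ha, Fintype.card_fin]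

lemma integrable_exp_mul_norm_sq_stdGaussian {a : ℝ} (ha : 0 < a) :
    Integrable (fun g : E ↦ rexp ((1 - (a ^ 2)⁻¹) / 2 * ‖g‖ ^ 2)) (stdGaussian E) := by
  refine .of_integral_ne_zero ?_
  rw [integral_exp_mul_norm_sq_stdGaussian ha]
  positivity

lemma exp_mul_pow_le (N : ℕ) {a : ℝ} (ha : 0 < a) :
    rexp (-((1 - (a ^ 2)⁻¹) / 2) * (N * a ^ 2)) * a ^ N ≤ rexp (-(N * (a - 1) ^ 2) / 2) := by
  have hexp : a ≤ rexp (a - 1) := by linarith [add_one_le_exp (a - 1)]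
  calc _ ≤ rexp (-((1 - (a ^ 2)⁻¹) / 2) * (N * a ^ 2)) * rexp (a - 1) ^ N := by gcongr
    _ = _ := by
      rw [← exp_nat_mul, ← exp_add]
      congr 1
      field_simp
      ring

lemma measureReal_le_norm_sq_stdGaussian_le {a : ℝ} (ha : 1 ≤ a) :
    (stdGaussian E).real {g | finrank ℝ E * a ^ 2 ≤ ‖g‖ ^ 2} ≤
      rexp (-(finrank ℝ E * (a - 1) ^ 2) / 2) := by
  have ha0 : 0 < a := by linarith
  have hs : 0 ≤ (1 - (a ^ 2)⁻¹) / 2 := by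
    linarith [inv_le_one_of_one_le₀ (one_le_pow₀ ha : 1 ≤ a ^ 2)]
  have chernoff := measure_ge_le_exp_mul_mgf (X := fun g : E ↦ ‖g‖ ^ 2) (finrank ℝ E * a ^ 2) hs
    (integrable_exp_mul_norm_sq_stdGaussian ha0)
  rw [mgf, integral_exp_mul_norm_sq_stdGaussian ha0] at chernoff
  exact chernoff.trans (exp_mul_pow_le _ ha0)

lemma measureReal_norm_sq_le_stdGaussian_le {a : ℝ} (ha0 : 0 < a) (ha1 : a ≤ 1) :
    (stdGaussian E).real {g | ‖g‖ ^ 2 ≤ finrank ℝ E * a ^ 2} ≤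
      rexp (-(finrank ℝ E * (a - 1) ^ 2) / 2) := by
  have hs : (1 - (a ^ 2)⁻¹) / 2 ≤ 0 := by
    linarith [(one_le_inv₀ (by positivity)).2 (pow_le_one₀ ha0.le ha1 : a ^ 2 ≤ 1)]
  have chernoff := measure_le_le_exp_mul_mgf (X := fun g : E ↦ ‖g‖ ^ 2) (finrank ℝ E * a ^ 2) hs
    (integrable_exp_mul_norm_sq_stdGaussian ha0)
  rw [mgf, integral_exp_mul_norm_sq_stdGaussian ha0] at chernoff
  exact chernoff.trans (exp_mul_pow_le _ ha0)

lemma measureReal_lt_abs_norm_sub_sqrt_finrank_le [Nontrivial E] {x : ℝ} (hx : 0 ≤ x) :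
    (stdGaussian E).real {g | x < |‖g‖ - √(finrank ℝ E)|} ≤ 2 * rexp (-x ^ 2 / 2) := by
  set r := √(finrank ℝ E)
  have hr : 0 < r := sqrt_pos.2 (by exact_mod_cast finrank_pos)
  have hr2 : (finrank ℝ E : ℝ) = r ^ 2 := (sq_sqrt (Nat.cast_nonneg _)).symm
  have upper : (stdGaussian E).real {g | x < ‖g‖ - r} ≤ rexp (-x ^ 2 / 2) := by
    have h := measureReal_le_norm_sq_stdGaussian_le (E := E) (a := 1 + x / r)
      (by linarith [div_nonneg hx hr.le])
    rw [hr2, ← mul_pow, ← mul_pow, show r * (1 + x / r) = r + x by field_simp,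
      show r * (1 + x / r - 1) = x by field_simp; ring] at h
    refine (measureReal_mono fun g hg ↦ ?_).trans h
    simp only [Set.mem_ofPred_eq] at hg ⊢
    gcongr
    linarith
  have lower : (stdGaussian E).real {g | x < -(‖g‖ - r)} ≤ rexp (-x ^ 2 / 2) := by
    rcases le_or_gt r x with hrx | hxr
    · have : {g : E | x < -(‖g‖ - r)} = ∅ :=
        Set.eq_empty_of_forall_notMem fun g hg ↦ by
          simp only [Set.mem_ofPred_eq] at hg
          linarith [norm_nonneg g]
      rw [this, measureReal_empty]
      positivity
    have h := measureReal_norm_sq_le_stdGaussian_le (E := E) (a := 1 - x / r)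
      (by linarith [(div_lt_one hr).2 hxr]) (by linarith [div_nonneg hx hr.le])
    rw [hr2, ← mul_pow, ← mul_pow, show r * (1 - x / r) = r - x by field_simp,
      show r * (1 - x / r - 1) = -x by field_simp; ring, neg_sq] at h
    refine (measureReal_mono fun g hg ↦ ?_).trans h
    simp only [Set.mem_ofPred_eq] at hg ⊢
    gcongr
    linarith
  linarith [measureReal_lt_abs_le_add (μ := stdGaussian E) (fun g ↦ ‖g‖ - r) x]

lemma map_inner_stdGaussian (u : E) :
    (stdGaussian E).map (inner ℝ u) = gaussianReal 0 (‖u‖₊ ^ 2) := by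
  have h := IsGaussian.map_eq_gaussianReal (μ := stdGaussian E) (innerSL ℝ u)
  rw [integral_strongDual_stdGaussian, variance_dual_stdGaussian, innerSL_apply_norm] at h
  rwa [toNNReal_pow (norm_nonneg u), norm_toNNReal] at h

lemma hasSubgaussianMGF_inner_stdGaussian (u : E) :
    HasSubgaussianMGF (inner ℝ u) (‖u‖₊ ^ 2) (stdGaussian E) := by
  refine .of_map (Y := inner ℝ u) (X := id) (by fun_prop) ?_
  rw [map_inner_stdGaussian]
  exact ⟨integrable_exp_mul_gaussianReal, fun t ↦ by simp [mgf_id_gaussianReal]⟩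

lemma measureReal_lt_norm_starProjection_span_singleton_le {x : ℝ} (hx : 0 ≤ x) :
    ((stdGaussian E).prod (stdGaussian E)).real {p | x < ‖(ℝ ∙ p.1).starProjection p.2‖} ≤
      2 * rexp (-x ^ 2 / 2) := by
  refine measureReal_prod_le_of_forall
    (measurableSet_lt measurable_const measurable_starProjection_span_singleton.norm) fun g ↦ ?_
  rcases eq_or_ne g 0 with rfl | hg
  · simp [hx.not_gt, exp_nonneg]
  have h := measureReal_lt_abs_le_of_hasSubgaussianMGF
    (hasSubgaussianMGF_inner_stdGaussian (NormedSpace.normalize g)) hx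
  simp_rw [← norm_starProjection_span_singleton] at h
  have hu : ‖NormedSpace.normalize g‖₊ = 1 := NNReal.eq (norm_normalize hg)
  simpa [hu] using h

lemma ae_notMem_of_ne_top {S : Submodule ℝ E} (hS : S ≠ ⊤) : ∀ᵐ g ∂stdGaussian E, g ∉ S := by
  obtain ⟨w, hw, hw0⟩ := Sᗮ.exists_mem_ne_zero_of_ne_bot (by rwa [Ne, orthogonal_eq_bot_iff])
  have hne : ∀ᵐ y ∂gaussianReal 0 (‖w‖₊ ^ 2), y ≠ 0 := by
    have := nullSingletonClass_gaussianReal (μ := 0) (v := ‖w‖₊ ^ 2) (by simpa using hw0)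
    exact Measure.ae_ne _ 0
  rw [← map_inner_stdGaussian] at hne
  filter_upwards [ae_of_ae_map (by fun_prop) hne] with g hg hgS
  exact hg (inner_left_of_mem_orthogonal hgS hw)

lemma ae_linearIndependent_pair (hE : 1 < finrank ℝ E) :
    ∀ᵐ p ∂(stdGaussian E).prod (stdGaussian E), LinearIndependent ℝ ![p.1, p.2] := by
  have hopen : IsOpen {p : E × E | LinearIndependent ℝ ![p.1, p.2]} :=
    isOpen_setOfPred_linearIndependent.preimage (by fun_prop)
  have hne (S : Submodule ℝ E) (hS : finrank ℝ S ≤ 1) : S ≠ ⊤ := by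
    rintro rfl
    rw [finrank_top] at hS
    omega
  rw [Measure.ae_prod_iff_ae_ae hopen.measurableSet]
  filter_upwards [ae_notMem_of_ne_top (hne ⊥ (by simp))] with g hg
  have hg0 : g ≠ 0 := by simpa using hg
  filter_upwards [ae_notMem_of_ne_top (hne (ℝ ∙ g) (finrank_span_singleton hg0).le)] with h hh
  refine (LinearIndependent.pair_iff' hg0).2 fun a ha ↦ hh ?_
  exact mem_span_singleton.2 ⟨a, ha⟩

end StdGaussian

section Coordinates

variable {κ : Type*} [Fintype κ]

lemma measurePreserving_ofLp_stdGaussian :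
    MeasurePreserving WithLp.ofLp (stdGaussian (EuclideanSpace ℝ κ))
      (Measure.pi fun _ ↦ gaussianReal 0 1) := by
  refine ⟨by fun_prop, ?_⟩
  rw [← map_pi_eq_stdGaussian, Measure.map_map (by fun_prop) (by fun_prop)]
  exact Measure.map_id

lemma measurePreserving_zip_stdGaussian :
    MeasurePreserving (fun (p : EuclideanSpace ℝ κ × EuclideanSpace ℝ κ) i ↦ (p.1 i, p.2 i))
      ((stdGaussian _).prod (stdGaussian _))
      (Measure.pi fun _ ↦ (gaussianReal 0 1).prod (gaussianReal 0 1)) :=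
  ((measurePreserving_arrowProdEquivProdArrow ℝ ℝ κ _ _).symm _).comp
    (measurePreserving_ofLp_stdGaussian.prod measurePreserving_ofLp_stdGaussian)

lemma measurePreserving_zip_apply_stdGaussian (i : κ) :
    MeasurePreserving (fun p : EuclideanSpace ℝ κ × EuclideanSpace ℝ κ ↦ (p.1 i, p.2 i))
      ((stdGaussian _).prod (stdGaussian _)) ((gaussianReal 0 1).prod (gaussianReal 0 1)) :=
  (measurePreserving_eval _ i).comp measurePreserving_zip_stdGaussian

lemma iIndepFun_zip_apply_stdGaussian :
    iIndepFun (fun i (p : EuclideanSpace ℝ κ × EuclideanSpace ℝ κ) ↦ (p.1 i, p.2 i))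
      ((stdGaussian _).prod (stdGaussian _)) := by
  rw [iIndepFun_iff_map_fun_eq_pi_map fun i ↦
    (measurePreserving_zip_apply_stdGaussian i).measurable.aemeasurable]
  simp_rw [(measurePreserving_zip_apply_stdGaussian _).map_eq]
  exact measurePreserving_zip_stdGaussian.map_eq

end Coordinates

section GramSchmidt

variable {E : Type*} [NormedAddCommGroup E] [InnerProductSpace ℝ E]

section General

variable {ι : Type*} [LinearOrder ι] [LocallyFiniteOrderBot ι] [WellFoundedLT ι]

lemma gramSchmidt_comp_linearIsometry {F : Type*} [NormedAddCommGroup F] [InnerProductSpace ℝ F]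
    (L : E →ₗᵢ[ℝ] F) (f : ι → E) (i : ι) : gramSchmidt ℝ (L ∘ f) i = L (gramSchmidt ℝ f i) := by
  induction i using WellFoundedLT.induction with
  | ind i ih =>
    simp only [gramSchmidt_def ℝ _ i, map_sub, map_sum, Function.comp_apply]
    congr 1
    refine Finset.sum_congr rfl fun j hj ↦ ?_
    simp [starProjection_singleton, ih j (Finset.mem_Iio.1 hj)]

lemma gramSchmidtNormed_comp_linearIsometry {F : Type*} [NormedAddCommGroup F]
    [InnerProductSpace ℝ F] (L : E →ₗᵢ[ℝ] F) (f : ι → E) :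
    gramSchmidtNormed ℝ (L ∘ f) = L ∘ gramSchmidtNormed ℝ f := by
  ext i
  simp [gramSchmidtNormed, gramSchmidt_comp_linearIsometry]

variable [MeasurableSpace E] [BorelSpace E] [SecondCountableTopology E]

lemma measurable_gramSchmidt_apply (i : ι) : Measurable fun f : ι → E ↦ gramSchmidt ℝ f i := by
  induction i using WellFoundedLT.induction with
  | ind i ih =>
    simp only [gramSchmidt_def ℝ _ i, starProjection_singleton]
    refine (measurable_pi_apply i).sub (Finset.measurable_fun_sum _ fun j hj ↦ ?_)
    have hj := ih j (Finset.mem_Iio.1 hj)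
    exact ((hj.inner (measurable_pi_apply i)).div
      (RCLike.measurable_ofReal.comp (hj.norm.pow_const 2))).smul hj

lemma measurable_gramSchmidtNormed : Measurable fun f : ι → E ↦ gramSchmidtNormed ℝ f :=
  measurable_pi_lambda _ fun i ↦
    (measurable_gramSchmidt_apply i).norm.inv.smul (measurable_gramSchmidt_apply i)

end General

lemma gramSchmidtNormed_pair_zero (g h : E) :
    gramSchmidtNormed ℝ ![g, h] 0 = NormedSpace.normalize g := by
  have : gramSchmidt ℝ ![g, h] 0 = g := gramSchmidt_bot ℝ ![g, h]
  simp [gramSchmidtNormed, NormedSpace.normalize, this]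

lemma gramSchmidtNormed_pair_one (g h : E) :
    gramSchmidtNormed ℝ ![g, h] 1 = NormedSpace.normalize (h - (ℝ ∙ g).starProjection h) := by
  have : gramSchmidt ℝ ![g, h] 0 = g := gramSchmidt_bot ℝ ![g, h]
  simp [gramSchmidtNormed, gramSchmidt_def ℝ _ (1 : Fin 2), NormedSpace.normalize, this,
    show Finset.Iio (1 : Fin 2) = {0} from rfl]

lemma measurable_gramSchmidtNormed_pair [MeasurableSpace E] [BorelSpace E]
    [SecondCountableTopology E] :
    Measurable fun p : E × E ↦ gramSchmidtNormed ℝ ![p.1, p.2] :=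
  have hpair : Measurable fun p : E × E ↦ ![p.1, p.2] := by fun_prop
  measurable_gramSchmidtNormed.comp hpair

lemma norm_normalize_le_one (g : E) : ‖NormedSpace.normalize g‖ ≤ 1 := by
  rcases eq_or_ne g 0 with rfl | hg
  · simp
  · exact (norm_normalize hg).le

lemma norm_smul_normalize_sub_le (r : ℝ) (g : E) :
    ‖r • NormedSpace.normalize g - g‖ ≤ |‖g‖ - r| := by
  nth_rw 2 [← NormedSpace.norm_smul_normalize g]
  rw [← sub_smul, norm_smul, norm_eq_abs, abs_sub_comm]
  exact mul_le_of_le_one_right (abs_nonneg _) (norm_normalize_le_one g)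

lemma norm_smul_normalize_sub_starProjection_sub_le (S : Submodule ℝ E)
    [S.HasOrthogonalProjection] (r : ℝ) (h : E) :
    ‖r • NormedSpace.normalize (h - S.starProjection h) - h‖ ≤
      |‖h‖ - r| + √2 * ‖S.starProjection h‖ := by
  set w := h - S.starProjection h with hw
  set p := S.starProjection h
  have hh : h = w + p := by rw [hw, sub_add_cancel]
  have hwp : inner ℝ w p = 0 :=
    inner_left_of_mem_orthogonal (starProjection_apply_mem S h)
      (sub_starProjection_mem_orthogonal h)
  have horth : inner ℝ (r • NormedSpace.normalize w - w) (-p) = 0 := by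
    simp [NormedSpace.normalize, inner_sub_left, inner_smul_left, hwp]
  have hw_le : |‖w‖ - r| ≤ |‖h‖ - r| + ‖p‖ := by
    have : |‖w‖ - ‖h‖| ≤ ‖p‖ := by
      simpa [hw, p] using abs_norm_sub_norm_le w h
    linarith [abs_sub_le ‖w‖ ‖h‖ r]
  have hsq : ‖r • NormedSpace.normalize w - h‖ ^ 2 ≤ (|‖h‖ - r| + ‖p‖) ^ 2 + ‖p‖ ^ 2 := by
    have := norm_add_sq_eq_norm_sq_add_norm_sq_of_inner_eq_zero _ _ horth
    rw [hh, ← sub_sub, sub_eq_add_neg _ p, sq, this, norm_neg, ← hh, ← sq, ← sq]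
    gcongr
    exact (norm_smul_normalize_sub_le r w).trans hw_le
  refine le_of_sq_le_sq (hsq.trans ?_) (by positivity)
  nlinarith [sq_sqrt (zero_le_two (α := ℝ)), one_le_sqrt.2 (one_le_two (α := ℝ)),
    mul_nonneg (abs_nonneg (‖h‖ - r)) (norm_nonneg p)]

end GramSchmidt

section ProdMap

variable {α β δ : Type*} [MeasurableSpace α] [MeasurableSpace β] [MeasurableSpace δ]
  {μ : Measure α} {ν : Measure β} [IsProbabilityMeasure μ] [IsProbabilityMeasure ν]
  {f : α → β → δ} {ρ ρ' : Measure δ}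

lemma map_uncurry_prod_eq_of_ae_map_eq (hf : Measurable (Function.uncurry f))
    (h : ∀ᵐ a ∂μ, ν.map (f a) = ρ) : (μ.prod ν).map (Function.uncurry f) = ρ := by
  obtain ⟨a, rfl⟩ := h.exists
  exact (measurePreserving_snd.comp ((MeasurePreserving.id μ).skew_product hf h)).map_eq

lemma eq_of_ae_map_eq (hf : Measurable (Function.uncurry f))
    (h : ∀ᵐ a ∂μ, ν.map (f a) = ρ) (h' : ∀ᵐ b ∂ν, μ.map (fun a ↦ f a b) = ρ') : ρ = ρ' := by
  have hf' : Measurable (Function.uncurry fun b a ↦ f a b) := hf.comp measurable_swap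
  rw [← map_uncurry_prod_eq_of_ae_map_eq hf h, ← map_uncurry_prod_eq_of_ae_map_eq hf' h',
    ← Measure.prod_swap, Measure.map_map hf measurable_swap]
  rfl

end ProdMap

section InvariantFrames

lemma exists_linearIsometry_comp_eq {E ι : Type*} [NormedAddCommGroup E] [InnerProductSpace ℝ E]
    [FiniteDimensional ℝ E] {v w : ι → E} (hv : Orthonormal ℝ v) (hw : Orthonormal ℝ w) :
    ∃ L : E →ₗᵢ[ℝ] E, L ∘ v = w := by
  have horth {u : ι → E} (hu : Orthonormal ℝ u) :
      Orthonormal ℝ (Basis.span hu.linearIndependent) := by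
    refine (span ℝ (Set.range u)).subtypeₗᵢ.orthonormal_comp_iff.1 ?_
    convert hu
    ext i
    simp [Basis.span_apply]
  set e := (horth hv).equiv (horth hw) (.refl ι)
  refine ⟨((span ℝ (Set.range w)).subtypeₗᵢ.comp e.toLinearIsometry).extend, funext fun i ↦ ?_⟩
  have hvi : v i = (Basis.span hv.linearIndependent i : E) := by rw [Basis.span_apply]
  calc _ = (e (Basis.span hv.linearIndependent i) : E) := by
        rw [Function.comp_apply, hvi, LinearIsometry.extend_apply]
        rfl
    _ = w i := by rw [Orthonormal.equiv_apply, Equiv.refl_apply, Basis.span_apply]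

variable {n : ℕ} {ι : Type*}

/-- The family obtained by applying the matrix `M` to every vector of the family `v`. -/
noncomputable def mulFrame (M : Matrix (Fin n) (Fin n) ℝ) (v : ι → EuclideanSpace ℝ (Fin n)) :
    ι → EuclideanSpace ℝ (Fin n) :=
  toEuclideanCLM (𝕜 := ℝ) M ∘ v

lemma mulFrame_mul (M N : Matrix (Fin n) (Fin n) ℝ) (v : ι → EuclideanSpace ℝ (Fin n)) :
    mulFrame (M * N) v = mulFrame M (mulFrame N v) := by
  ext1 i
  simp [mulFrame]

lemma transpose_mul_self_eq_one_iff_norm_map {M : Matrix (Fin n) (Fin n) ℝ} :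
    Mᵀ * M = 1 ↔ ∀ x, ‖toEuclideanCLM (𝕜 := ℝ) M x‖ = ‖x‖ := by
  set T := toEuclideanCLM (n := Fin n) (𝕜 := ℝ)
  have hadj : (T M).adjoint = T Mᵀ := by
    rw [← conjTranspose_eq_transpose_of_trivial]
    exact (map_star T M).symm
  rw [ContinuousLinearMap.norm_map_iff_adjoint_comp_self, hadj,
    ← (EquivLike.injective T).eq_iff, map_one T]
  exact Eq.congr_left (map_mul T _ _)

lemma exists_mulFrame_eq {v w : ι → EuclideanSpace ℝ (Fin n)} (hv : Orthonormal ℝ v)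
    (hw : Orthonormal ℝ w) :
    ∃ Q : Matrix (Fin n) (Fin n) ℝ, Qᵀ * Q = 1 ∧ mulFrame Q v = w := by
  obtain ⟨L, hL⟩ := exists_linearIsometry_comp_eq hv hw
  refine ⟨(toEuclideanCLM (𝕜 := ℝ)).symm L.toContinuousLinearMap, ?_, ?_⟩
  · rw [transpose_mul_self_eq_one_iff_norm_map, StarAlgEquiv.apply_symm_apply]
    exact L.norm_map
  · simpa [mulFrame] using hL

lemma exists_linearIsometryEquiv_mulFrame_eq {Q : Matrix (Fin n) (Fin n) ℝ} (hQ : Qᵀ * Q = 1) :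
    ∃ L : EuclideanSpace ℝ (Fin n) ≃ₗᵢ[ℝ] EuclideanSpace ℝ (Fin n),
      ∀ v : ι → EuclideanSpace ℝ (Fin n), mulFrame Q v = L ∘ v :=
  ⟨LinearIsometry.toLinearIsometryEquiv
    ⟨(toEuclideanCLM (𝕜 := ℝ) Q).toLinearMap, transpose_mul_self_eq_one_iff_norm_map.1 hQ⟩ rfl,
    fun _ ↦ rfl⟩

lemma orthonormal_mulFrame {Q : Matrix (Fin n) (Fin n) ℝ} (hQ : Qᵀ * Q = 1)
    {v : ι → EuclideanSpace ℝ (Fin n)} (hv : Orthonormal ℝ v) : Orthonormal ℝ (mulFrame Q v) := by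
  obtain ⟨L, hL⟩ := exists_linearIsometryEquiv_mulFrame_eq (ι := ι) hQ
  rw [hL]
  exact hv.comp_linearIsometryEquiv L

lemma measurable_matrix_apply {m n : Type*} (i : m) (j : n) :
    Measurable fun M : Matrix m n ℝ ↦ M i j :=
  (measurable_pi_apply j).comp (measurable_pi_apply i)

lemma measurable_matrix_transpose {m n : Type*} : Measurable fun M : Matrix m n ℝ ↦ Mᵀ :=
  measurable_pi_lambda _ fun i ↦ measurable_pi_lambda _ fun j ↦ measurable_matrix_apply j i

lemma measurable_matrix_const_mul {l m n : Type*} [Fintype m] (A : Matrix l m ℝ) :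
    Measurable fun M : Matrix m n ℝ ↦ A * M := by
  refine measurable_pi_lambda _ fun i ↦ measurable_pi_lambda _ fun j ↦ ?_
  simp only [Matrix.mul_apply]
  exact Finset.measurable_fun_sum _ fun l _ ↦ (measurable_matrix_apply l j).const_mul _

lemma measurable_uncurry_mulFrame :
    Measurable (Function.uncurry (mulFrame (n := n) (ι := ι))) := by
  refine measurable_pi_lambda _ fun l ↦ ?_
  change Measurable fun p : Matrix (Fin n) (Fin n) ℝ × (ι → EuclideanSpace ℝ (Fin n)) ↦
    WithLp.toLp 2 (p.1 *ᵥ (p.2 l).ofLp)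
  refine (WithLp.measurable_toLp _ _).comp (measurable_pi_lambda _ fun i ↦ ?_)
  simp only [mulVec, dotProduct]
  refine Finset.measurable_fun_sum _ fun j _ ↦ ?_
  exact ((measurable_matrix_apply i j).comp measurable_fst).mul (by fun_prop)

lemma measurable_mulFrame_left (v : ι → EuclideanSpace ℝ (Fin n)) :
    Measurable fun M : Matrix (Fin n) (Fin n) ℝ ↦ mulFrame M v :=
  measurable_uncurry_mulFrame.of_uncurry_right

lemma measurable_mulFrame_right (M : Matrix (Fin n) (Fin n) ℝ) :
    Measurable fun v : ι → EuclideanSpace ℝ (Fin n) ↦ mulFrame M v :=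
  measurable_uncurry_mulFrame.of_uncurry_left

lemma measurableSet_orthonormal [Countable ι] :
    MeasurableSet {v : ι → EuclideanSpace ℝ (Fin n) | Orthonormal ℝ v} := by
  classical
  simp_rw [orthonormal_iff_ite, Set.ofPred_forall]
  refine .iInter fun i ↦ .iInter fun j ↦ measurableSet_eq_fun ?_ measurable_const
  fun_prop

variable {μ : Measure (Matrix (Fin n) (Fin n) ℝ)} {ρ : Measure (ι → EuclideanSpace ℝ (Fin n))}
  {v : ι → EuclideanSpace ℝ (Fin n)}

-- Both sides are the law of `Mᵀ w` for independent `M ∼ μ` and `w ∼ ρ`: conditionally on `M` it is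
-- `ρ`, and conditionally on `w = Q v` it is the law of `Mᵀ v`, because `Qᵀ M` has law `μ`.
lemma map_mulFrame_transpose_eq [IsProbabilityMeasure ρ] (hμ : IsHaarO n μ)
    (hρ : ∀ Q : Matrix (Fin n) (Fin n) ℝ, Qᵀ * Q = 1 → ρ.map (mulFrame Q) = ρ)
    (hρ' : ∀ᵐ w ∂ρ, Orthonormal ℝ w) (hv : Orthonormal ℝ v) :
    μ.map (fun M ↦ mulFrame Mᵀ v) = ρ := by
  obtain ⟨_, horth, hinv⟩ := hμ
  have htr {Q : Matrix (Fin n) (Fin n) ℝ} (hQ : Qᵀ * Q = 1) : Qᵀᵀ * Qᵀ = 1 := by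
    rwa [transpose_transpose, mul_eq_one_comm]
  have hmeas := (measurable_uncurry_mulFrame (n := n) (ι := ι)).comp
    (measurable_matrix_transpose.prodMap measurable_id)
  refine (eq_of_ae_map_eq (μ := μ) (ν := ρ) (f := fun M ↦ mulFrame Mᵀ) hmeas
    (horth.mono fun M hM ↦ hρ Mᵀ (htr hM)) (hρ'.mono fun w hw ↦ ?_)).symm
  obtain ⟨Q, hQ, rfl⟩ := exists_mulFrame_eq hv hw
  conv_rhs => rw [← hinv Qᵀ (htr hQ)]
  have hmeas_v : Measurable fun M : Matrix (Fin n) (Fin n) ℝ ↦ mulFrame Mᵀ v :=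
    (measurable_mulFrame_left v).comp measurable_matrix_transpose
  rw [Measure.map_map hmeas_v (measurable_matrix_const_mul _)]
  congr 1
  ext1 M
  simp [← mulFrame_mul]

lemma map_mulFrame_eq [Countable ι] [IsProbabilityMeasure ρ] (hμ : IsHaarO n μ)
    (hρ : ∀ Q : Matrix (Fin n) (Fin n) ℝ, Qᵀ * Q = 1 → ρ.map (mulFrame Q) = ρ)
    (hρ' : ∀ᵐ w ∂ρ, Orthonormal ℝ w) (hv : Orthonormal ℝ v) :
    μ.map (fun M ↦ mulFrame M v) = ρ := by
  rw [← map_mulFrame_transpose_eq hμ hρ hρ' hv]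
  have hmeas := measurable_mulFrame_left v
  have := hμ.1
  have := Measure.isProbabilityMeasure_map (μ := μ) hmeas.aemeasurable
  refine (map_mulFrame_transpose_eq hμ (fun Q hQ ↦ ?_) ?_ hv).symm
  · conv_rhs => rw [← hμ.2.2 Q hQ]
    rw [Measure.map_map (measurable_mulFrame_right Q) hmeas,
      Measure.map_map hmeas (measurable_matrix_const_mul Q)]
    congr 1
    ext1 M
    simp [mulFrame_mul]
  · rw [ae_map_iff hmeas.aemeasurable measurableSet_orthonormal]
    filter_upwards [hμ.2.1] with M hM using orthonormal_mulFrame hM hv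

end InvariantFrames

section HaarFrames

variable {n : ℕ} {μ : Measure (Matrix (Fin n) (Fin n) ℝ)}

lemma map_mulFrame_eq_map_gramSchmidtNormed (hμ : IsHaarO n μ) (hn : 1 < n)
    {v : Fin 2 → EuclideanSpace ℝ (Fin n)} (hv : Orthonormal ℝ v) :
    μ.map (fun M ↦ mulFrame M v) =
      ((stdGaussian (EuclideanSpace ℝ (Fin n))).prod (stdGaussian _)).map
        fun p ↦ gramSchmidtNormed ℝ ![p.1, p.2] := by
  set γ := stdGaussian (EuclideanSpace ℝ (Fin n))
  have hGS := measurable_gramSchmidtNormed_pair (E := EuclideanSpace ℝ (Fin n))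
  have := Measure.isProbabilityMeasure_map (μ := γ.prod γ) hGS.aemeasurable
  refine map_mulFrame_eq hμ (fun Q hQ ↦ ?_) ?_ hv
  · obtain ⟨L, hL⟩ := exists_linearIsometryEquiv_mulFrame_eq (ι := Fin 2) hQ
    have hLγ : MeasurePreserving L γ γ := ⟨L.continuous.measurable, stdGaussian_map L⟩
    conv_rhs => rw [← (hLγ.prod hLγ).map_eq]
    rw [Measure.map_map (measurable_mulFrame_right Q) hGS,
      Measure.map_map hGS (hLγ.prod hLγ).measurable]
    congr 1
    ext1 p
    have hpair : L ∘ ![p.1, p.2] = ![L p.1, L p.2] := by ext i; fin_cases i <;> rfl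
    calc mulFrame Q (gramSchmidtNormed ℝ ![p.1, p.2])
        = L ∘ gramSchmidtNormed ℝ ![p.1, p.2] := hL _
      _ = gramSchmidtNormed ℝ (L ∘ ![p.1, p.2]) :=
        (gramSchmidtNormed_comp_linearIsometry L.toLinearIsometry _).symm
      _ = gramSchmidtNormed ℝ ![L p.1, L p.2] := by rw [hpair]
  · rw [ae_map_iff hGS.aemeasurable measurableSet_orthonormal]
    filter_upwards [ae_linearIndependent_pair (by simpa using hn)] with p hp
    exact gramSchmidtNormed_orthonormal hp

end HaarFrames

section PairMean

variable {ι κ : Type*} [Fintype ι]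

/-- The average of `F` over those pairs of coordinates of the vectors `a` and `b` that are selected
by the embedding `f`. -/
noncomputable def pairMean (f : ι ↪ κ) (F : ℝ → ℝ → ℝ) (a b : EuclideanSpace ℝ κ) : ℝ :=
  (∑ i, F (a (f i)) (b (f i))) / Fintype.card ι

variable (f : ι ↪ κ) {F : ℝ → ℝ → ℝ} {L₁ L₂ : ℝ≥0}

lemma measurable_pairMean (hF : Measurable (Function.uncurry F)) :
    Measurable fun p : EuclideanSpace ℝ κ × EuclideanSpace ℝ κ ↦ pairMean f F p.1 p.2 := by
  refine (Finset.measurable_fun_sum _ fun i _ ↦ ?_).div_const _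
  have hi : Measurable fun p : EuclideanSpace ℝ κ × EuclideanSpace ℝ κ ↦
      (p.1 (f i), p.2 (f i)) := by fun_prop
  exact hF.comp hi

variable [Fintype κ]

lemma sum_abs_comp_le (d : EuclideanSpace ℝ κ) : ∑ i, |d (f i)| ≤ √(Fintype.card ι) * ‖d‖ := by
  refine le_of_sq_le_sq ?_ (by positivity)
  have hsub : ∑ i, d (f i) ^ 2 ≤ ‖d‖ ^ 2 := by
    rw [EuclideanSpace.real_norm_sq_eq, ← Finset.sum_map Finset.univ f fun j ↦ d j ^ 2]
    exact Finset.sum_le_univ_sum_of_nonneg fun _ ↦ sq_nonneg _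
  calc (∑ i, |d (f i)|) ^ 2 ≤ Fintype.card ι * ∑ i, |d (f i)| ^ 2 := sq_sum_le_card_mul_sum_sq
    _ = Fintype.card ι * ∑ i, d (f i) ^ 2 := by simp only [sq_abs]
    _ ≤ (√(Fintype.card ι) * ‖d‖) ^ 2 := by
      rw [mul_pow, sq_sqrt (Nat.cast_nonneg _)]
      gcongr

lemma abs_pairMean_sub_pairMean_le (h₁ : ∀ t, LipschitzWith L₁ fun s ↦ F s t)
    (h₂ : ∀ s, LipschitzWith L₂ (F s)) (a b a' b' : EuclideanSpace ℝ κ) :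
    |pairMean f F a b - pairMean f F a' b'| ≤
      (L₁ * ‖a - a'‖ + L₂ * ‖b - b'‖) / √(Fintype.card ι) := by
  have hterm (i : ι) : |F (a (f i)) (b (f i)) - F (a' (f i)) (b' (f i))| ≤
      L₁ * |(a - a') (f i)| + L₂ * |(b - b') (f i)| :=
    (abs_sub_le _ (F (a' (f i)) (b (f i))) _).trans
      (add_le_add ((h₁ _).dist_le_mul _ _) ((h₂ _).dist_le_mul _ _))
  have hsum : ∑ i, |F (a (f i)) (b (f i)) - F (a' (f i)) (b' (f i))| ≤
      √(Fintype.card ι) * (L₁ * ‖a - a'‖ + L₂ * ‖b - b'‖) := calc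
    _ ≤ ∑ i, (L₁ * |(a - a') (f i)| + L₂ * |(b - b') (f i)|) := Finset.sum_le_sum fun i _ ↦ hterm i
    _ = L₁ * ∑ i, |(a - a') (f i)| + L₂ * ∑ i, |(b - b') (f i)| := by
      rw [Finset.sum_add_distrib, Finset.mul_sum, Finset.mul_sum]
    _ ≤ L₁ * (√(Fintype.card ι) * ‖a - a'‖) + L₂ * (√(Fintype.card ι) * ‖b - b'‖) := by
      gcongr <;> exact sum_abs_comp_le f _
    _ = _ := by ring
  rw [pairMean, pairMean, ← sub_div, ← Finset.sum_sub_distrib, abs_div, Nat.abs_cast]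
  calc _ ≤ √(Fintype.card ι) * (L₁ * ‖a - a'‖ + L₂ * ‖b - b'‖) / Fintype.card ι := by
        gcongr
        exact (Finset.abs_sum_le_sum_abs _ _).trans hsum
    _ = _ := by rw [mul_comm, mul_div_assoc, sqrt_div_self', mul_one_div]

variable [Nonempty ι] {B t : ℝ}

lemma measureReal_lt_abs_pairMean_sub_integral_stdGaussian_le (hF : Measurable (Function.uncurry F))
    (hB : 0 < B) (hFB : ∀ s t, |F s t| ≤ B) (ht : 0 ≤ t) :
    ((stdGaussian (EuclideanSpace ℝ κ)).prod (stdGaussian _)).real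
        {p | B * t < |pairMean f F p.1 p.2 -
          ∫ q, F q.1 q.2 ∂(gaussianReal 0 1).prod (gaussianReal 0 1)|} ≤
      2 * rexp (-(Fintype.card ι * t ^ 2) / 2) :=
  measureReal_lt_abs_mean_sub_integral_le
    (fun i ↦ measurePreserving_zip_apply_stdGaussian (f i))
    (iIndepFun_zip_apply_stdGaussian.precomp f.injective) hF hB (fun a ↦ hFB a.1 a.2) ht

lemma abs_pairMean_smul_gramSchmidtNormed_sub_pairMean_le
    (h₁ : ∀ t, LipschitzWith L₁ fun s ↦ F s t)
    (h₂ : ∀ s, LipschitzWith L₂ (F s)) {r x : ℝ} {g h : EuclideanSpace ℝ κ}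
    (hg : |‖g‖ - r| ≤ x) (hh : |‖h‖ - r| ≤ x) (hgh : ‖(ℝ ∙ g).starProjection h‖ ≤ x) :
    |pairMean f F (r • gramSchmidtNormed ℝ ![g, h] 0) (r • gramSchmidtNormed ℝ ![g, h] 1) -
        pairMean f F g h| ≤
      (L₁ + (1 + √2) * L₂) * x / √(Fintype.card ι) := by
  rw [gramSchmidtNormed_pair_zero, gramSchmidtNormed_pair_one]
  refine (abs_pairMean_sub_pairMean_le f h₁ h₂ _ _ _ _).trans ?_
  gcongr
  calc _ ≤ L₁ * |‖g‖ - r| + L₂ * (|‖h‖ - r| + √2 * ‖(ℝ ∙ g).starProjection h‖) := by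
        gcongr
        · exact norm_smul_normalize_sub_le r g
        · exact norm_smul_normalize_sub_starProjection_sub_le _ r h
    _ ≤ L₁ * x + L₂ * (x + √2 * x) := by gcongr
    _ = (L₁ + (1 + √2) * L₂) * x := by ring

lemma measureReal_gramSchmidt_perturbation_le [Nonempty κ] {x : ℝ} (hx : 0 ≤ x) :
    ((stdGaussian (EuclideanSpace ℝ κ)).prod (stdGaussian _)).real
        {p | x < |‖p.1‖ - √(Fintype.card κ)| ∨ x < |‖p.2‖ - √(Fintype.card κ)| ∨
          x < ‖(ℝ ∙ p.1).starProjection p.2‖} ≤ 6 * rexp (-x ^ 2 / 2) := by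
  have hnorm := measureReal_lt_abs_norm_sub_sqrt_finrank_le (E := EuclideanSpace ℝ κ) hx
  rw [finrank_euclideanSpace] at hnorm
  have hmeas : MeasurableSet {g : EuclideanSpace ℝ κ | x < |‖g‖ - √(Fintype.card κ)|} :=
    measurableSet_lt measurable_const (by fun_prop)
  have hmarginal {q : EuclideanSpace ℝ κ × EuclideanSpace ℝ κ → EuclideanSpace ℝ κ}
      (hq : MeasurePreserving q ((stdGaussian _).prod (stdGaussian _)) (stdGaussian _)) :
      ((stdGaussian (EuclideanSpace ℝ κ)).prod (stdGaussian _)).real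
        {p | x < |‖q p‖ - √(Fintype.card κ)|} ≤ 2 * rexp (-x ^ 2 / 2) :=
    (hq.measureReal_preimage hmeas.nullMeasurableSet).trans_le hnorm
  calc _ ≤ _ := measureReal_union_le _ _
    _ ≤ _ := add_le_add_right (measureReal_union_le _ _) _
    _ ≤ 2 * rexp (-x ^ 2 / 2) + (2 * rexp (-x ^ 2 / 2) + 2 * rexp (-x ^ 2 / 2)) :=
      add_le_add (hmarginal measurePreserving_fst) (add_le_add (hmarginal measurePreserving_snd)
        (measureReal_lt_norm_starProjection_span_singleton_le hx))
    _ = 6 * rexp (-x ^ 2 / 2) := by ring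

lemma measureReal_lt_abs_pairMean_gramSchmidtNormed_sub_integral_le
    (h₁ : ∀ t, LipschitzWith L₁ fun s ↦ F s t) (h₂ : ∀ s, LipschitzWith L₂ (F s))
    (hB : 0 < B) (hFB : ∀ s t, |F s t| ≤ B) (ht : 0 ≤ t) :
    ((stdGaussian (EuclideanSpace ℝ κ)).prod (stdGaussian _)).real
        {p | (B + L₁ + (1 + √2) * L₂) * t <
          |pairMean f F (√(Fintype.card κ) • gramSchmidtNormed ℝ ![p.1, p.2] 0)
            (√(Fintype.card κ) • gramSchmidtNormed ℝ ![p.1, p.2] 1) -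
          ∫ q, F q.1 q.2 ∂(gaussianReal 0 1).prod (gaussianReal 0 1)|} ≤
      8 * rexp (-(Fintype.card ι * t ^ 2) / 2) := by
  have : Nonempty κ := .map f ‹_›
  have hF : Measurable (Function.uncurry F) := (LipschitzWith.uncurry h₁ h₂).continuous.measurable
  have hcard : √(Fintype.card ι : ℝ) ≠ 0 := by positivity
  set x := √(Fintype.card ι) * t with hx
  have hx2 : Fintype.card ι * t ^ 2 = x ^ 2 := by rw [mul_pow, sq_sqrt (by positivity)]
  have hmean := measureReal_lt_abs_pairMean_sub_integral_stdGaussian_le f hF hB hFB ht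
  have hGS := measureReal_gramSchmidt_perturbation_le (κ := κ) (x := x) (by positivity)
  rw [hx2] at hmean ⊢
  refine (measureReal_mono fun p hp ↦ ?_).trans ((measureReal_union_le _ _).trans
    ((add_le_add hmean hGS).trans_eq (by ring)))
  by_contra! hgood
  simp only [Set.mem_union, Set.mem_ofPred_eq, not_or, not_lt] at hgood hp
  obtain ⟨hsample, hg, hh, hgh⟩ := hgood
  have hpert := abs_pairMean_smul_gramSchmidtNormed_sub_pairMean_le f h₁ h₂ hg hh hgh
  rw [hx, mul_left_comm, mul_div_cancel_left₀ _ hcard] at hpert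
  have htri := abs_sub_le
    (pairMean f F (√(Fintype.card κ) • gramSchmidtNormed ℝ ![p.1, p.2] 0)
      (√(Fintype.card κ) • gramSchmidtNormed ℝ ![p.1, p.2] 1))
    (pairMean f F p.1 p.2) (∫ q, F q.1 q.2 ∂(gaussianReal 0 1).prod (gaussianReal 0 1))
  linarith

end PairMean

section Haar

variable {ι : Type*} [Fintype ι] [Nonempty ι] {n : ℕ} {μ : Measure (Matrix (Fin n) (Fin n) ℝ)}
  {F : ℝ → ℝ → ℝ} {L₁ L₂ : ℝ≥0} {B t : ℝ}

lemma measureReal_lt_abs_pairMean_mulFrame_sub_integral_le (hμ : IsHaarO n μ) (hn : 1 < n)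
    {v : Fin 2 → EuclideanSpace ℝ (Fin n)} (hv : Orthonormal ℝ v) (f : ι ↪ Fin n)
    (h₁ : ∀ t, LipschitzWith L₁ fun s ↦ F s t) (h₂ : ∀ s, LipschitzWith L₂ (F s))
    (hB : 0 < B) (hFB : ∀ s t, |F s t| ≤ B) (ht : 0 ≤ t) :
    μ.real {M | (B + L₁ + (1 + √2) * L₂) * t <
        |pairMean f F (√n • mulFrame M v 0) (√n • mulFrame M v 1) -
          ∫ q, F q.1 q.2 ∂(gaussianReal 0 1).prod (gaussianReal 0 1)|} ≤
      8 * rexp (-(Fintype.card ι * t ^ 2) / 2) := by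
  have hF : Measurable (Function.uncurry F) := (LipschitzWith.uncurry h₁ h₂).continuous.measurable
  let S : Set (Fin 2 → EuclideanSpace ℝ (Fin n)) :=
    {u | (B + L₁ + (1 + √2) * L₂) * t < |pairMean f F (√n • u 0) (√n • u 1) -
      ∫ q, F q.1 q.2 ∂(gaussianReal 0 1).prod (gaussianReal 0 1)|}
  have hscale : Measurable fun u : Fin 2 → EuclideanSpace ℝ (Fin n) ↦ (√n • u 0, √n • u 1) := by
    fun_prop
  have hS : MeasurableSet S :=
    measurableSet_lt measurable_const (((measurable_pairMean f hF).comp hscale).sub_const _).abs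
  have hGS := measureReal_lt_abs_pairMean_gramSchmidtNormed_sub_integral_le f h₁ h₂ hB hFB ht
  rw [Fintype.card_fin] at hGS
  have hlaw := congrArg (fun ν ↦ ν.real S) (map_mulFrame_eq_map_gramSchmidtNormed hμ hn hv)
  rw [map_measureReal_apply (measurable_mulFrame_left v) hS,
    map_measureReal_apply measurable_gramSchmidtNormed_pair hS] at hlaw
  exact hlaw.trans_le hGS

end Haar

section ZeroPad

variable {ι κ : Type*} [Fintype ι] [Fintype κ]

lemma dotProduct_extend_zero (f : ι ↪ κ) (c : κ → ℝ) (z : ι → ℝ) :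
    c ⬝ᵥ Function.extend f z 0 = (c ∘ f) ⬝ᵥ z := by
  refine (Fintype.sum_of_injective f f.injective _ _ (fun j hj ↦ ?_) fun i ↦ ?_).symm
  · rw [Function.extend_apply' _ _ _ hj, Pi.zero_apply, mul_zero]
  · rw [f.injective.extend_apply, Function.comp_apply]

/-- The vector `z`, extended by zero to the coordinates outside the range of `f`. -/
noncomputable def zeroPad (f : ι ↪ κ) (z : ι → ℝ) : EuclideanSpace ℝ κ :=
  WithLp.toLp 2 (Function.extend f z 0)

lemma inner_zeroPad (f : ι ↪ κ) (z z' : ι → ℝ) :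
    inner ℝ (zeroPad f z) (zeroPad f z') = z ⬝ᵥ z' := by
  rw [zeroPad, zeroPad, EuclideanSpace.inner_toLp_toLp, star_trivial, dotProduct_extend_zero,
    Function.extend_comp f.injective, dotProduct_comm]

lemma norm_zeroPad (f : ι ↪ κ) (z : ι → ℝ) : ‖zeroPad f z‖ = √(z ⬝ᵥ z) := by
  rw [norm_eq_sqrt_real_inner, inner_zeroPad]

lemma submatrix_mulVec_eq_toEuclideanCLM_zeroPad [DecidableEq κ] {ι' : Type*} (M : Matrix κ κ ℝ)
    (g : ι' → κ) (f : ι ↪ κ) (z : ι → ℝ) (i : ι') :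
    (M.submatrix g f *ᵥ z) i = toEuclideanCLM (𝕜 := ℝ) M (zeroPad f z) (g i) :=
  (dotProduct_extend_zero f (M (g i)) z).symm

end ZeroPad

section OrthonormalPair

variable {E : Type*} [NormedAddCommGroup E]

lemma exists_norm_eq_one_norm_smul_eq [NormedSpace ℝ E] [Nontrivial E] (y : E) :
    ∃ u : E, ‖u‖ = 1 ∧ ‖y‖ • u = y := by
  rcases eq_or_ne y 0 with rfl | hy
  · obtain ⟨u, hu⟩ := exists_norm_eq E zero_le_one
    exact ⟨u, hu, by simp⟩
  · exact ⟨_, NormedSpace.norm_normalize hy, NormedSpace.norm_smul_normalize y⟩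

lemma exists_orthonormal_pair_eq_add [InnerProductSpace ℝ E] [FiniteDimensional ℝ E]
    (hE : 1 < finrank ℝ E) {e w : E} (he : ‖e‖ = 1) (hw : ‖w‖ = 1) :
    ∃ v : Fin 2 → E, Orthonormal ℝ v ∧ e = v 0 ∧
      w = inner ℝ e w • v 0 + √(1 - inner ℝ e w ^ 2) • v 1 := by
  have he0 : e ≠ 0 := norm_ne_zero_iff.1 (he ▸ one_ne_zero)
  have hfin := finrank_add_finrank_orthogonal (ℝ ∙ e)
  rw [finrank_span_singleton he0] at hfin
  have : Nontrivial (ℝ ∙ e)ᗮ := nontrivial_of_finrank_pos (R := ℝ) (by omega)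
  have hmem : w - inner ℝ e w • e ∈ (ℝ ∙ e)ᗮ := by
    rw [mem_orthogonal_singleton_iff_inner_right]
    simp [inner_sub_right, inner_smul_right, he]
  have hnorm : ‖w - inner ℝ e w • e‖ = √(1 - inner ℝ e w ^ 2) := by
    rw [← sqrt_sq (norm_nonneg _), norm_sub_sq_real, norm_smul, inner_smul_right, he, hw,
      real_inner_comm, norm_eq_abs, mul_one, sq_abs]
    ring_nf
  obtain ⟨u, hu, huw⟩ := exists_norm_eq_one_norm_smul_eq (⟨_, hmem⟩ : (ℝ ∙ e)ᗮ)
  refine ⟨![e, u], ?_, rfl, ?_⟩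
  · have heu : inner ℝ e (u : E) = 0 := mem_orthogonal_singleton_iff_inner_right.1 u.2
    simp [orthonormal_vecCons_iff, he, heu, ← hu]
  · have huw' : √(1 - inner ℝ e w ^ 2) • (u : E) = w - inner ℝ e w • e := by
      rw [← hnorm]
      exact congrArg Subtype.val huw
    simp [huw']

lemma exists_orthonormal_pair_eq_smul [InnerProductSpace ℝ E] [FiniteDimensional ℝ E]
    (hE : 1 < finrank ℝ E) {x y : E} {r : ℝ} (hr : 0 < r) (hx : ‖x‖ = r) (hy : ‖y‖ = r) :
    ∃ v : Fin 2 → E, Orthonormal ℝ v ∧ x = r • v 0 ∧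
      y = r • ((inner ℝ x y / r ^ 2) • v 0 + √(1 - (inner ℝ x y / r ^ 2) ^ 2) • v 1) := by
  have hunit {u : E} (hu : ‖u‖ = r) : ‖r⁻¹ • u‖ = 1 := by
    rw [norm_smul, hu, norm_inv, norm_of_nonneg hr.le, inv_mul_cancel₀ hr.ne']
  have hinner : inner ℝ (r⁻¹ • x) (r⁻¹ • y) = inner ℝ x y / r ^ 2 := by
    rw [real_inner_smul_left, real_inner_smul_right]
    ring
  obtain ⟨v, hv, hxv, hyv⟩ := exists_orthonormal_pair_eq_add hE (hunit hx) (hunit hy)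
  rw [hinner] at hyv
  exact ⟨v, hv, (inv_smul_eq_iff₀ hr.ne').1 hxv, (inv_smul_eq_iff₀ hr.ne').1 hyv⟩

end OrthonormalPair

section CorrelatedProd

/-- The product `φ(X) φ(Y)`, where `X = s` and `Y = ρ s + σ t`; for independent standard Gaussian
`s`, `t` and `ρ ^ 2 + σ ^ 2 = 1`, the pair `(X, Y)` is standard Gaussian with correlation `ρ`. -/
def correlatedProd (φ : ℝ → ℝ) (ρ σ s t : ℝ) : ℝ :=
  φ s * φ (ρ * s + σ * t)

variable {φ : ℝ → ℝ} {C : ℝ≥0}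

lemma abs_correlatedProd_le (hφ : ∀ x, |φ x| ≤ C) (ρ σ s t : ℝ) :
    |correlatedProd φ ρ σ s t| ≤ C ^ 2 := by
  rw [correlatedProd, abs_mul, sq]
  exact mul_le_mul (hφ _) (hφ _) (abs_nonneg _) C.2

lemma lipschitzWith_mul_of_abs_le {f g : ℝ → ℝ} {K L A B : ℝ≥0} (hf : LipschitzWith K f)
    (hg : LipschitzWith L g) (hfA : ∀ x, |f x| ≤ A) (hgB : ∀ x, |g x| ≤ B) :
    LipschitzWith (K * B + A * L) fun x ↦ f x * g x := by
  refine .of_dist_le_mul fun x y ↦ ?_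
  have h₁ : |f x - f y| ≤ K * |x - y| := hf.dist_le_mul x y
  have h₂ : |g x - g y| ≤ L * |x - y| := hg.dist_le_mul x y
  calc |f x * g x - f y * g y| = |(f x - f y) * g x + f y * (g x - g y)| := by ring_nf
    _ ≤ |f x - f y| * |g x| + |f y| * |g x - g y| := by
      simpa only [abs_mul] using abs_add_le ((f x - f y) * g x) (f y * (g x - g y))
    _ ≤ K * |x - y| * B + A * (L * |x - y|) := by
      gcongr
      exacts [hgB x, hfA y]
    _ = _ := by push_cast; rw [dist_eq]; ring

lemma lipschitzWith_correlatedProd_left (hφ : LipschitzWith C φ) (hφC : ∀ x, |φ x| ≤ C)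
    (ρ σ t : ℝ) :
    LipschitzWith (C ^ 2 * (1 + ‖ρ‖₊)) fun s ↦ correlatedProd φ ρ σ s t := by
  have hlin : LipschitzWith ‖ρ‖₊ fun s ↦ ρ * s + σ * t := by
    simpa using (lipschitzWith_smul ρ).add (.const (σ * t))
  convert lipschitzWith_mul_of_abs_le hφ (hφ.comp hlin) hφC fun _ ↦ hφC _ using 1
  · ring
  · rfl

lemma lipschitzWith_correlatedProd_right (hφ : LipschitzWith C φ) (hφC : ∀ x, |φ x| ≤ C)
    (ρ σ s : ℝ) : LipschitzWith (C ^ 2 * ‖σ‖₊) (correlatedProd φ ρ σ s) := by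
  have hlin : LipschitzWith ‖σ‖₊ fun t ↦ ρ * s + σ * t := by
    simpa using (LipschitzWith.const (ρ * s)).add (lipschitzWith_smul σ)
  convert lipschitzWith_mul_of_abs_le (.const (φ s)) (hφ.comp hlin) (fun _ ↦ hφC s)
    fun _ ↦ hφC _ using 1
  · ring
  · rfl

lemma pairMean_mul_add_smul {ι κ : Type*} [Fintype ι] (f : ι ↪ κ) (φ : ℝ → ℝ) (ρ σ : ℝ)
    (a b : EuclideanSpace ℝ κ) :
    pairMean f (fun s t ↦ φ s * φ t) a (ρ • a + σ • b) = pairMean f (correlatedProd φ ρ σ) a b :=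
  rfl

lemma approxKernel_covMat {k : ℕ} (hk : 0 < k) (φ : ℝ → ℝ) {z z' : Fin k → ℝ}
    (hz : z ⬝ᵥ z = k) (hz' : z' ⬝ᵥ z' = k) :
    approxKernel φ (covMat z z') =
      ∫ q, correlatedProd φ ((z ⬝ᵥ z') / k) √(1 - ((z ⬝ᵥ z') / k) ^ 2) q.1 q.2
        ∂(gaussianReal 0 1).prod (gaussianReal 0 1) := by
  have hk' : (k : ℝ) ≠ 0 := by positivity
  simp [approxKernel, covMat, correlatedProd, hz, hz', hk', dotProduct_comm z' z,
    div_eq_inv_mul]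

end CorrelatedProd

lemma kernelF_suoOfHaar {m k n : ℕ} (hmn : m ≤ n) (hkn : k ≤ n) (φ : ℝ → ℝ)
    (M : Matrix (Fin n) (Fin n) ℝ) (z z' : Fin k → ℝ) :
    kernelF φ (suoOfHaar hmn hkn M) z z' =
      pairMean (Fin.castLEEmb hmn) (fun s t ↦ φ s * φ t)
        (√(n / k) • toEuclideanCLM (𝕜 := ℝ) M (zeroPad (Fin.castLEEmb hkn) z))
        (√(n / k) • toEuclideanCLM (𝕜 := ℝ) M (zeroPad (Fin.castLEEmb hkn) z')) := by
  have hrow (y : Fin k → ℝ) (i : Fin m) := submatrix_mulVec_eq_toEuclideanCLM_zeroPad M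
    (Fin.castLE hmn) (Fin.castLEEmb hkn) y i
  simp only [Fin.coe_castLEEmb] at hrow
  simp only [kernelF, pairMean, suoOfHaar, smul_mulVec, Pi.smul_apply, hrow, PiLp.smul_apply,
    Fintype.card_fin, Fin.coe_castLEEmb]

section SUOKernel

variable {m k n : ℕ} {hmn : m ≤ n} {hkn : k ≤ n} {z z' : Fin k → ℝ}

lemma exists_orthonormal_kernelF_suoOfHaar_eq (hk : 0 < k) (hn : 1 < n) (φ : ℝ → ℝ)
    (hz : z ⬝ᵥ z = k) (hz' : z' ⬝ᵥ z' = k) :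
    ∃ v : Fin 2 → EuclideanSpace ℝ (Fin n), Orthonormal ℝ v ∧ ∀ M,
      kernelF φ (suoOfHaar hmn hkn M) z z' = pairMean (Fin.castLEEmb hmn)
        (correlatedProd φ ((z ⬝ᵥ z') / k) √(1 - ((z ⬝ᵥ z') / k) ^ 2))
        (√n • mulFrame M v 0) (√n • mulFrame M v 1) := by
  have hk' : (0 : ℝ) < √k := by positivity
  obtain ⟨v, hv, hzv, hzv'⟩ := exists_orthonormal_pair_eq_smul
    (x := zeroPad (Fin.castLEEmb hkn) z) (y := zeroPad (Fin.castLEEmb hkn) z') (by simpa using hn)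
    hk' (by rw [norm_zeroPad, hz]) (by rw [norm_zeroPad, hz'])
  rw [inner_zeroPad, sq_sqrt (Nat.cast_nonneg k)] at hzv'
  have hscale : √(n / k : ℝ) * √k = √n := by
    rw [sqrt_div (Nat.cast_nonneg n), div_mul_cancel₀ _ hk'.ne']
  refine ⟨v, hv, fun M ↦ ?_⟩
  rw [kernelF_suoOfHaar, hzv, hzv', map_smul, map_smul, smul_smul, smul_smul, hscale, map_add,
    map_smul, map_smul, smul_add, smul_comm (√n : ℝ), smul_comm (√n : ℝ), pairMean_mul_add_smul]
  rfl

-- Cauchy–Schwarz, with `1 + (1 + √2) ^ 2 = 4 + 2 * √2`.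
lemma one_add_one_add_abs_add_le {ρ σ : ℝ} (h : ρ ^ 2 + σ ^ 2 = 1) :
    1 + (1 + |ρ|) + (1 + √2) * |σ| ≤ 2 + √(4 + 2 * √2) := by
  have h2 : √(2 : ℝ) ^ 2 = 2 := sq_sqrt zero_le_two
  have : |ρ| + (1 + √2) * |σ| ≤ √(4 + 2 * √2) := by
    refine le_sqrt_of_sq_le ?_
    rw [← sq_abs ρ, ← sq_abs σ] at h
    nlinarith [sq_nonneg ((1 + √2) * |ρ| - |σ|)]
  linarith

lemma sq_dotProduct_div_le_one (hk : 0 < k) (hz : z ⬝ᵥ z = k) (hz' : z' ⬝ᵥ z' = k) :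
    ((z ⬝ᵥ z') / k) ^ 2 ≤ 1 := by
  have hcs : (z ⬝ᵥ z') ^ 2 ≤ (k : ℝ) ^ 2 := by
    have := Finset.sum_mul_sq_le_sq_mul_sq Finset.univ z z'
    simp only [dotProduct, ← sq] at hz hz' this ⊢
    rwa [hz, hz', ← sq] at this
  rw [div_pow]
  exact div_le_one_of_le₀ hcs (by positivity)

theorem measureReal_lt_abs_kernelF_suoOfHaar_sub_approxKernel_le
    {μ : Measure (Matrix (Fin n) (Fin n) ℝ)} (hμ : IsHaarO n μ) (hm : 0 < m) (hk : 0 < k)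
    (hn : 1 < n) {φ : ℝ → ℝ} {C : ℝ≥0} (hC : 0 < C) (hφ : LipschitzWith C φ)
    (hφC : ∀ x, |φ x| ≤ C) (hz : z ⬝ᵥ z = k) (hz' : z' ⬝ᵥ z' = k) {t : ℝ} (ht : 0 ≤ t) :
    μ.real {M | (2 + √(4 + 2 * √2)) * C ^ 2 * t <
        |kernelF φ (suoOfHaar hmn hkn M) z z' - approxKernel φ (covMat z z')|} ≤
      8 * rexp (-(m * t ^ 2) / 2) := by
  have := hμ.1
  have : Nonempty (Fin m) := ⟨⟨0, hm⟩⟩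
  obtain ⟨v, hv, hkernel⟩ := exists_orthonormal_kernelF_suoOfHaar_eq (hmn := hmn) (hkn := hkn)
    hk hn φ hz hz'
  simp only [hkernel, approxKernel_covMat hk φ hz hz']
  set ρ := (z ⬝ᵥ z') / k
  set σ := √(1 - ρ ^ 2) with hσ
  have hρσ : ρ ^ 2 + σ ^ 2 = 1 := by
    rw [hσ, sq_sqrt (sub_nonneg.2 (sq_dotProduct_div_le_one hk hz hz')), add_sub_cancel]
  have hconst : (C ^ 2 + C ^ 2 * (1 + |ρ|) + (1 + √2) * (C ^ 2 * |σ|)) * t ≤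
      (2 + √(4 + 2 * √2)) * C ^ 2 * t := by
    have := mul_le_mul_of_nonneg_left (one_add_one_add_abs_add_le hρσ) (sq_nonneg (C : ℝ))
    gcongr
    linarith
  have htail := measureReal_lt_abs_pairMean_mulFrame_sub_integral_le hμ hn hv (Fin.castLEEmb hmn)
    (lipschitzWith_correlatedProd_left hφ hφC ρ σ)
    (lipschitzWith_correlatedProd_right hφ hφC ρ σ) (by positivity)
    (abs_correlatedProd_le hφC ρ σ) ht
  push_cast [Fintype.card_fin, coe_nnnorm, norm_eq_abs] at htail
  exact (measureReal_mono fun M hM ↦ hconst.trans_lt hM).trans htail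

end SUOKernel

section Measurability

variable {m k n : ℕ}

lemma measurable_suoOfHaar (hmn : m ≤ n) (hkn : k ≤ n) : Measurable (suoOfHaar hmn hkn) :=
  measurable_pi_lambda _ fun _ ↦ measurable_pi_lambda _ fun _ ↦
    (measurable_matrix_apply _ _).const_mul _

lemma measurable_kernelF {φ : ℝ → ℝ} (hφ : Measurable φ) (z z' : Fin k → ℝ) :
    Measurable fun W : Matrix (Fin m) (Fin k) ℝ ↦ kernelF φ W z z' := by
  have hrow (y : Fin k → ℝ) (i : Fin m) :
      Measurable fun W : Matrix (Fin m) (Fin k) ℝ ↦ (W *ᵥ y) i := by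
    simp only [mulVec, dotProduct]
    exact Finset.measurable_fun_sum _ fun j _ ↦ (measurable_matrix_apply i j).mul_const _
  exact (Finset.measurable_fun_sum _ fun i _ ↦
    (hφ.comp (hrow z i)).mul (hφ.comp (hrow z' i))).div_const _

lemma ofReal_one_sub_le_measure_le {Ω : Type*} [MeasurableSpace Ω] {μ : Measure Ω}
    [IsProbabilityMeasure μ] {f : Ω → ℝ} (hf : Measurable f) {δ ε : ℝ}
    (h : μ.real {ω | ε < f ω} ≤ δ) : ENNReal.ofReal (1 - δ) ≤ μ {ω | f ω ≤ ε} := by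
  have hcompl : {ω | f ω ≤ ε} = {ω | ε < f ω}ᶜ := by
    ext ω
    simp
  rw [← ofReal_measureReal, hcompl,
    probReal_compl_eq_one_sub (measurableSet_lt measurable_const hf)]
  gcongr

end Measurability

section Parameters

variable {m n : ℕ} {δ ε C : ℝ}

lemma eight_mul_exp_neg_le (hδ : 0 < δ) (hδ1 : δ ≤ 1) {s : ℝ} (h : log (2 / δ) ≤ s) :
    8 * rexp (-(3 * s)) ≤ δ := by
  have hexp : rexp (-s) ≤ δ / 2 := by
    rw [← neg_le_neg_iff, ← log_inv, inv_div] at h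
    exact (le_log_iff_exp_le (by positivity)).1 h
  calc 8 * rexp (-(3 * s)) = 8 * rexp (-s) ^ 3 := by rw [← exp_nat_mul]; norm_num
    _ ≤ 8 * (δ / 2) ^ 3 := by gcongr
    _ = δ ^ 3 := by ring
    _ ≤ δ := pow_le_of_le_one hδ.le hδ1 three_ne_zero

lemma mul_sq_rpow_div_eq (m : ℕ) (x : ℝ) :
    m * (m ^ (3 / 4 : ℝ) / x) ^ 2 = (m : ℝ) ^ (5 / 2 : ℝ) / x ^ 2 := by
  rw [div_pow, mul_div_assoc', ← rpow_mul_natCast (Nat.cast_nonneg m),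
    ← rpow_one_add' (Nat.cast_nonneg m) (by norm_num)]
  norm_num

lemma two_add_sqrt_mul_sqrt_six_le : (2 + √(4 + 2 * √2)) * √6 ≤ 8 * √2 := by
  have h2 : √2 ≤ 1.4143 := sqrt_le_iff.2 ⟨by norm_num, by norm_num⟩
  have h2' : 1.4142 ≤ √2 := le_sqrt_of_sq_le (by norm_num)
  have h6 : √6 ≤ 2.4495 := sqrt_le_iff.2 ⟨by norm_num, by norm_num⟩
  have h : √(4 + 2 * √2) ≤ 2.6132 := sqrt_le_iff.2 ⟨by norm_num, by norm_num; linarith⟩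
  calc _ ≤ (2 + 2.6132) * 2.4495 := by gcongr
    _ ≤ 8 * √2 := by linarith

lemma mul_le_of_le_div_rpow (hm : 0 < m) (hε : 0 < ε)
    (h : 8 * √2 * C ^ 2 / ε ≤ ((n : ℝ) - 1) / (m : ℝ) ^ (3 / 4 : ℝ)) :
    (2 + √(4 + 2 * √2)) * C ^ 2 * (√6 * ((m : ℝ) ^ (3 / 4 : ℝ) / (n + 1))) ≤ ε := by
  have hr : (0 : ℝ) < (m : ℝ) ^ (3 / 4 : ℝ) := by positivity
  set r := (m : ℝ) ^ (3 / 4 : ℝ)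
  rw [div_le_div_iff₀ hε hr] at h
  calc _ = (2 + √(4 + 2 * √2)) * √6 * (C ^ 2 * r) / (n + 1) := by ring
    _ ≤ 8 * √2 * (C ^ 2 * r) / (n + 1) := by
      gcongr ?_ * _ / _
      exact two_add_sqrt_mul_sqrt_six_le
    _ ≤ ε := by
      rw [div_le_iff₀ (by positivity)]
      linarith

lemma one_lt_of_le_sub_one_div_rpow (hC : 0 < C) (hε : 0 < ε)
    (h : 8 * √2 * C ^ 2 / ε ≤ ((n : ℝ) - 1) / (m : ℝ) ^ (3 / 4 : ℝ)) : 1 < n := by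
  by_contra! hn
  have hle : (n : ℝ) - 1 ≤ 0 := sub_nonpos.2 (by exact_mod_cast hn)
  have hpos : 0 < 8 * √2 * C ^ 2 / ε := by positivity
  exact (hpos.trans_le h).not_ge (div_nonpos_of_nonpos_of_nonneg hle (by positivity))

end Parameters

end SUO

theorem suo_kernel_approx_general {m k n : ℕ} (hm : 0 < m) (hk : 0 < k) (hmn : m ≤ n) (hkn : k ≤ n)
    {μ : Measure (Matrix (Fin n) (Fin n) ℝ)} (hμ : IsHaarO n μ) {φ : ℝ → ℝ} {C : ℝ≥0}
    (hφ : LipschitzWith C φ) (hφC : ∀ x, |φ x| ≤ C) {δ ε : ℝ} (hδ : 0 < δ) (hε : 0 < ε)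
    (h1 : Real.log (2 / δ) ≤ (m : ℝ) ^ ((5 : ℝ) / 2) / ((n : ℝ) + 1) ^ 2)
    (h2 : 8 * Real.sqrt 2 * C ^ 2 / ε ≤ ((n : ℝ) - 1) / (m : ℝ) ^ ((3 : ℝ) / 4))
    {z z' : Fin k → ℝ} (hz : z ⬝ᵥ z = k) (hz' : z' ⬝ᵥ z' = k) :
    ENNReal.ofReal (1 - δ) ≤ μ.map (suoOfHaar hmn hkn)
      {W | |kernelF φ W z z' - approxKernel φ (covMat z z')| ≤ ε} := by
  have := hμ.1
  have hsuo := SUO.measurable_suoOfHaar hmn hkn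
  have := Measure.isProbabilityMeasure_map (μ := μ) hsuo.aemeasurable
  have herr := ((SUO.measurable_kernelF (m := m) hφ.continuous.measurable z z').sub_const
    (approxKernel φ (covMat z z'))).abs
  refine SUO.ofReal_one_sub_le_measure_le herr ?_
  rcases le_total 1 δ with hδ1 | hδ1
  · exact measureReal_le_one.trans hδ1
  rcases eq_zero_or_pos C with rfl | hC
  · have hφ0 : φ = 0 := funext fun x ↦ abs_nonpos_iff.1 (hφC x)
    simpa [hφ0, kernelF, approxKernel, hε.not_gt] using hδ.le
  rw [map_measureReal_apply hsuo (measurableSet_lt measurable_const herr)]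
  set t := √6 * ((m : ℝ) ^ ((3 : ℝ) / 4) / (n + 1)) with ht
  calc _ ≤ μ.real {M | (2 + √(4 + 2 * √2)) * C ^ 2 * t <
          |kernelF φ (suoOfHaar hmn hkn M) z z' - approxKernel φ (covMat z z')|} :=
        measureReal_mono fun M hM ↦ (SUO.mul_le_of_le_div_rpow hm hε h2).trans_lt hM
    _ ≤ 8 * Real.exp (-(m * t ^ 2) / 2) :=
      SUO.measureReal_lt_abs_kernelF_suoOfHaar_sub_approxKernel_le hμ hm hk
        (SUO.one_lt_of_le_sub_one_div_rpow hC hε h2) hC hφ hφC hz hz' (by positivity)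
    _ = 8 * Real.exp (-(3 * ((m : ℝ) ^ ((5 : ℝ) / 2) / ((n : ℝ) + 1) ^ 2))) := by
      rw [← SUO.mul_sq_rpow_div_eq, ht, mul_pow, Real.sq_sqrt (by norm_num)]
      ring_nf
    _ ≤ δ := SUO.eight_mul_exp_neg_le hδ hδ1 h1

/-- **Theorem (main result).** If `W` is SUO-distributed, `φ` and its derivative are
bounded by `C`, and `m^{5/2}/(n+1)² ≥ log(2/δ)` and `(n-1)/m^{3/4} ≥ 8√2 C²/ε` with
`n = max k m`, then for all inputs `z, z'` with `‖z‖² = ‖z'‖² = k`, with probability at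
least `1 - δ` we have `|κ_f(z,z') - κ̃_f(Σ_{z,z'})| ≤ ε`. -/
theorem suo_kernel_approx (m k : ℕ) (hm : 0 < m) (hk : 0 < k)
    (ν : Measure (Matrix (Fin m) (Fin k) ℝ)) (hν : IsSUO m k ν)
    (φ : ℝ → ℝ) (C : ℝ) (hφdiff : Differentiable ℝ φ)
    (hφ : ∀ x, |φ x| ≤ C) (hφ' : ∀ x, |deriv φ x| ≤ C)
    (δ ε : ℝ) (hδ : 0 < δ) (hε : 0 < ε)
    (h1 : Real.log (2 / δ) ≤ (m : ℝ) ^ ((5 : ℝ) / 2) / (((max k m : ℕ) : ℝ) + 1) ^ 2)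
    (h2 : 8 * Real.sqrt 2 * C ^ 2 / ε ≤
      (((max k m : ℕ) : ℝ) - 1) / (m : ℝ) ^ ((3 : ℝ) / 4)) :
    ∀ z z' : Fin k → ℝ, z ⬝ᵥ z = (k : ℝ) → z' ⬝ᵥ z' = (k : ℝ) →
      ENNReal.ofReal (1 - δ) ≤
        ν {W | |kernelF φ W z z' - approxKernel φ (covMat z z')| ≤ ε} := by
  intro z z' hz hz'
  obtain ⟨μ, hμ, rfl⟩ := hν
  lift C to ℝ≥0 using (abs_nonneg _).trans (hφ 0)
  exact suo_kernel_approx_general hm hk _ _ hμ (lipschitzWith_of_nnnorm_deriv_le hφdiff hφ') hφ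
    hδ hε h1 h2 hz hz'
end

section
/- Let W be an m×k random matrix whose entries are drawn i.i.d. from N(0, 1/k), and let φ : ℝ → ℝ be twice continuously differentiable with E_{x∼N(0,1)}[φ(x)²] = 1 and ‖φ‖_∞, ‖φ'‖_∞, ‖φ''‖_∞ ≤ C. Suppose m ≥ 4 C⁴ log(8/δ)/ε². Then for all vectors z, z' ∈ ℝ^k with ‖z‖² = ‖z'‖² = k, with probability at least 1 − δ over the draw of W, |κ_f(z, z') − κ̃_f(Σ_{z,z'})| ≤ ε. -/
open MeasureTheory ProbabilityTheory Matrix Kronecker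
open scoped ENNReal NNReal

/-! Since the rows `w` of `W` are i.i.d., the kernel `κ_f(z, z')` is the empirical mean of `m`
i.i.d. variables `φ(w ⬝ᵥ z) φ(w ⬝ᵥ z')` with values in `[-C², C²]`. The pair `(w ⬝ᵥ z, w ⬝ᵥ z')` is
a linear image of a Gaussian vector, with law `N(0, Σ_{z,z'})`, so the common expectation is
`κ̃_f(Σ_{z,z'})`. Hoeffding's inequality bounds the probability of an `ε`-deviation by
`2 exp (-m ε² / (2 C⁴))`, which is at most `δ` as soon as `m ≥ 2 C⁴ log (2 / δ) / ε²`. -/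

section Concentration

lemma measureReal_le_abs_le_of_hasSubgaussianMGF {Ω : Type*} [MeasurableSpace Ω] {μ : Measure Ω}
    [IsFiniteMeasure μ] {X : Ω → ℝ} {c : ℝ≥0} (hX : HasSubgaussianMGF X c μ) {ε : ℝ}
    (hε : 0 ≤ ε) :
    μ.real {ω | ε ≤ |X ω|} ≤ 2 * Real.exp (-ε ^ 2 / (2 * c)) := by
  have hsplit : {ω | ε ≤ |X ω|} = {ω | ε ≤ X ω} ∪ {ω | ε ≤ (-X) ω} := by
    ext ω
    exact le_abs (b := X ω)
  calc μ.real {ω | ε ≤ |X ω|}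
      ≤ μ.real {ω | ε ≤ X ω} + μ.real {ω | ε ≤ (-X) ω} := hsplit ▸ measureReal_union_le _ _
    _ ≤ 2 * Real.exp (-ε ^ 2 / (2 * c)) := by
        linarith [hX.measure_ge_le hε, hX.neg.measure_ge_le hε]

variable {ι E : Type*} [Fintype ι] [Nonempty ι] [MeasurableSpace E] {γ : Measure E}
  [IsProbabilityMeasure γ] {g : E → ℝ} {a b : ℝ}

lemma hasSubgaussianMGF_pi_mean_sub_integral (hg : AEMeasurable g γ)
    (hab : ∀ᵐ x ∂γ, g x ∈ Set.Icc a b) :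
    HasSubgaussianMGF (fun x : ι → E ↦ (∑ i, g (x i)) / Fintype.card ι - ∫ y, g y ∂γ)
      ((‖b - a‖₊ / 2) ^ 2 / Fintype.card ι) (Measure.pi fun _ ↦ γ) := by
  have hcoord (i : ι) : HasSubgaussianMGF (fun x : ι → E ↦ g (x i) - ∫ y, g y ∂γ)
      ((‖b - a‖₊ / 2) ^ 2) (Measure.pi fun _ ↦ γ) := by
    have heval := measurePreserving_eval (fun _ : ι ↦ γ) i
    refine HasSubgaussianMGF.of_map (X := fun y ↦ g y - ∫ y, g y ∂γ) heval.aemeasurable ?_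
    rw [heval.map_eq]
    exact hasSubgaussianMGF_of_mem_Icc hg hab
  have hindep : iIndepFun (fun (i : ι) (x : ι → E) ↦ g (x i) - ∫ y, g y ∂γ)
      (Measure.pi fun _ ↦ γ) := iIndepFun_pi fun _ ↦ hg.sub_const _
  have hcard : (Fintype.card ι : ℝ) ≠ 0 := Nat.cast_ne_zero.2 Fintype.card_ne_zero
  have hmean := (HasSubgaussianMGF.sum_of_iIndepFun hindep (s := Finset.univ)
    fun i _ ↦ hcoord i).const_mul (Fintype.card ι : ℝ)⁻¹
  convert hmean using 1
  · ext x
    simp only [Finset.sum_sub_distrib, Finset.sum_const, Finset.card_univ, nsmul_eq_mul]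
    field_simp
  · ext
    change _ = ((Fintype.card ι : ℝ)⁻¹) ^ 2 * ((∑ _i : ι, (‖b - a‖₊ / 2) ^ 2 : ℝ≥0) : ℝ)
    push_cast
    simp only [Finset.sum_const, Finset.card_univ, nsmul_eq_mul]
    field_simp

lemma measureReal_pi_le_abs_mean_sub_integral_le (hg : AEMeasurable g γ)
    (hab : ∀ᵐ x ∂γ, g x ∈ Set.Icc a b) {ε : ℝ} (hε : 0 ≤ ε) :
    (Measure.pi fun _ : ι ↦ γ).real
        {x | ε ≤ |(∑ i, g (x i)) / Fintype.card ι - ∫ y, g y ∂γ|} ≤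
      2 * Real.exp (-(2 * Fintype.card ι * ε ^ 2 / (b - a) ^ 2)) := by
  refine (measureReal_le_abs_le_of_hasSubgaussianMGF
    (hasSubgaussianMGF_pi_mean_sub_integral hg hab) hε).trans_eq ?_
  congr 2
  push_cast
  rw [Real.norm_eq_abs, div_pow, sq_abs]
  field_simp

end Concentration

section GaussianLaw

variable {ι κ : Type*} [Fintype ι] [Fintype κ]

lemma isGaussianLaw_pi_gaussianReal [DecidableEq ι] (v : ι → ℝ≥0) :
    IsGaussianLaw (Matrix.diagonal fun i ↦ (v i : ℝ))
      (Measure.pi fun i ↦ gaussianReal 0 (v i)) := by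
  refine ⟨inferInstance, fun l ↦ ?_⟩
  have hcoord (i : ι) : MemLp (fun t ↦ l i * t) 2 (gaussianReal 0 (v i)) :=
    (memLp_id_gaussianReal 2).const_mul (l i)
  have hlaw : HasGaussianLaw (fun y : ι → ℝ ↦ ∑ i, l i * y i)
      (Measure.pi fun i ↦ gaussianReal 0 (v i)) := by
    refine iIndepFun.hasGaussianLaw_fun_sum (fun i ↦ ?_)
      (iIndepFun_pi (X := fun i t ↦ l i * t) fun i ↦ by fun_prop)
    have heval := (measurePreserving_eval (fun i ↦ gaussianReal 0 (v i)) i).hasLaw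
    exact heval.hasGaussianLaw.fun_smul (l i)
  have hmean : ∫ y, ∑ i, l i * y i ∂(Measure.pi fun i ↦ gaussianReal 0 (v i)) = 0 := by
    rw [integral_finsetSum _ fun i _ ↦
      integrable_comp_eval (μ := fun i ↦ gaussianReal 0 (v i)) ((hcoord i).integrable one_le_two)]
    refine Finset.sum_eq_zero fun i _ ↦ ?_
    rw [integral_comp_eval (μ := fun i ↦ gaussianReal 0 (v i)) (f := fun t ↦ l i * t)
      (by fun_prop), integral_const_mul, integral_id_gaussianReal, mul_zero]
  have hvar : Var[fun y : ι → ℝ ↦ ∑ i, l i * y i; Measure.pi fun i ↦ gaussianReal 0 (v i)] =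
      ∑ i, l i ^ 2 * v i := by
    have hsum := variance_sum_pi hcoord
    rw [Finset.sum_fn] at hsum
    refine hsum.trans (Finset.sum_congr rfl fun i _ ↦ ?_)
    rw [variance_const_mul, variance_fun_id_gaussianReal]
  rw [hlaw.map_eq_gaussianReal, hmean, hvar]
  simp [Matrix.diagonal_apply, pow_two, mul_right_comm]

lemma sum_mul_apply_mul_eq_dotProduct_mulVec (M : Matrix ι ι ℝ) (v : ι → ℝ) :
    ∑ i, ∑ j, v i * M i j * v j = v ⬝ᵥ M *ᵥ v := by
  simp [dotProduct, mulVec, Finset.mul_sum, mul_assoc]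

namespace IsGaussianLaw

variable {A : Matrix ι ι ℝ} {γ γ' : Measure (ι → ℝ)}

protected lemma unique (h : IsGaussianLaw A γ) (h' : IsGaussianLaw A γ') : γ = γ' := by
  have := h.1
  have := h'.1
  classical
  -- Cramér–Wold: the one-dimensional marginals determine a finite measure.
  refine Measure.ext_of_charFunDual (funext fun L ↦ ?_)
  have hL : ⇑L = fun y ↦ ∑ i, L (fun j ↦ if i = j then 1 else 0) * y i := by
    ext y
    simpa [mul_comm] using L.toLinearMap.pi_apply_eq_sum_univ y
  rw [charFunDual_eq_charFun_map_one, charFunDual_eq_charFun_map_one, hL, h.2, h'.2]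

lemma map_mulVec (h : IsGaussianLaw A γ) (B : Matrix κ ι ℝ) :
    IsGaussianLaw (B * A * Bᵀ) (γ.map (B *ᵥ ·)) := by
  have := h.1
  have hB : Measurable (B *ᵥ · : (ι → ℝ) → κ → ℝ) := by fun_prop
  refine ⟨Measure.isProbabilityMeasure_map hB.aemeasurable, fun l ↦ ?_⟩
  rw [Measure.map_map (by fun_prop) hB]
  have hcomp : (fun y ↦ ∑ i, l i * y i) ∘ (B *ᵥ ·) = fun y ↦ ∑ i, (l ᵥ* B) i * y i :=
    funext fun y ↦ Matrix.dotProduct_mulVec l B y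
  rw [hcomp, h.2, sum_mul_apply_mul_eq_dotProduct_mulVec, sum_mul_apply_mul_eq_dotProduct_mulVec]
  simp [← Matrix.mulVec_mulVec, Matrix.mulVec_transpose, Matrix.dotProduct_mulVec]

end IsGaussianLaw

end GaussianLaw

section ApproxKernel

/-- The lower-triangular Cholesky factor of a `2 × 2` positive semidefinite matrix `S` with
`S 0 0 ≠ 0`; it is the matrix through which `approxKernel` realizes `N(0, S)`. -/
noncomputable def choleskyFactor (S : Matrix (Fin 2) (Fin 2) ℝ) : Matrix (Fin 2) (Fin 2) ℝ :=
  !![Real.sqrt (S 0 0), 0;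
    S 1 0 / Real.sqrt (S 0 0), Real.sqrt (S 1 1 - S 1 0 ^ 2 / S 0 0)]

variable {S : Matrix (Fin 2) (Fin 2) ℝ}

lemma choleskyFactor_mul_transpose (hS : S.PosSemidef) (hS₀ : 0 < S 0 0) :
    choleskyFactor S * (choleskyFactor S)ᵀ = S := by
  have hsymm : S 0 1 = S 1 0 := hS.isHermitian.apply 1 0
  have hschur : 0 ≤ S 1 1 - S 1 0 ^ 2 / S 0 0 := by
    have hdet := hS.det_nonneg
    rw [Matrix.det_fin_two, hsymm] at hdet
    rw [sub_nonneg, div_le_iff₀ hS₀]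
    linarith
  have hsqrt : Real.sqrt (S 0 0) ≠ 0 := (Real.sqrt_pos.2 hS₀).ne'
  ext i j
  fin_cases i <;> fin_cases j <;>
    simp [choleskyFactor, Matrix.mul_apply, Fin.sum_univ_two, hsymm, hS₀.le, hsqrt,
      mul_div_cancel₀, ← pow_two, div_pow, Real.sq_sqrt hschur]

theorem integral_mul_eq_approxKernel {γ : Measure (Fin 2 → ℝ)} (hγ : IsGaussianLaw S γ)
    (hS : S.PosSemidef) (hS₀ : 0 < S 0 0) {φ : ℝ → ℝ} (hφ : Measurable φ) :
    ∫ u, φ (u 0) * φ (u 1) ∂γ = approxKernel φ S := by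
  have hstd : IsGaussianLaw 1 (Measure.pi fun _ : Fin 2 ↦ gaussianReal 0 1) := by
    simpa using isGaussianLaw_pi_gaussianReal fun _ : Fin 2 ↦ 1
  have hchol := hstd.map_mulVec (choleskyFactor S)
  rw [mul_one, choleskyFactor_mul_transpose hS hS₀] at hchol
  rw [hγ.unique hchol, integral_map (by fun_prop) (by fun_prop), approxKernel,
    ← (measurePreserving_finTwoArrow (gaussianReal 0 1)).integral_comp']
  simp [choleskyFactor, Matrix.mulVec, dotProduct, Fin.sum_univ_two]

end ApproxKernel

section Kernel

variable {m k : ℕ} {z z' : Fin k → ℝ} {φ : ℝ → ℝ} {C ε : ℝ}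

lemma covMat_eq_mul_transpose (z z' : Fin k → ℝ) :
    covMat z z' =
      Matrix.of ![z, z'] * Matrix.diagonal (fun _ : Fin k ↦ (k : ℝ)⁻¹) * (Matrix.of ![z, z'])ᵀ := by
  ext i j
  fin_cases i <;> fin_cases j <;>
    simp [covMat, Matrix.mul_apply, dotProduct, Finset.mul_sum, mul_assoc, mul_comm, mul_left_comm]

lemma posSemidef_covMat (z z' : Fin k → ℝ) : (covMat z z').PosSemidef := by
  rw [covMat_eq_mul_transpose]
  exact (Matrix.PosSemidef.diagonal fun _ ↦ by positivity).mul_mul_conjTranspose_same _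

lemma covMat_zero_zero_pos (hz : z ≠ 0) : 0 < covMat z z' 0 0 := by
  obtain ⟨i, -⟩ := Function.ne_iff.1 hz
  have hk : (0 : ℝ) < k := Nat.cast_pos.2 i.pos
  have hzz : 0 < z ⬝ᵥ z := by simpa using Matrix.dotProduct_star_self_pos_iff.2 hz
  simpa [covMat] using mul_pos (inv_pos.2 hk) hzz

lemma integral_mul_dotProduct_eq_approxKernel (hz : z ≠ 0) (hφ : Measurable φ) :
    ∫ w, φ (w ⬝ᵥ z) * φ (w ⬝ᵥ z') ∂(Measure.pi fun _ : Fin k ↦ gaussianReal 0 (k : ℝ≥0)⁻¹) =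
      approxKernel φ (covMat z z') := by
  have hlaw := (isGaussianLaw_pi_gaussianReal fun _ : Fin k ↦ (k : ℝ≥0)⁻¹).map_mulVec
    (Matrix.of ![z, z'])
  simp only [NNReal.coe_inv, NNReal.coe_natCast, ← covMat_eq_mul_transpose] at hlaw
  rw [← integral_mul_eq_approxKernel hlaw (posSemidef_covMat z z') (covMat_zero_zero_pos hz) hφ,
    integral_map (by fun_prop) (by fun_prop)]
  simp [Matrix.mulVec, dotProduct_comm]

theorem measureReal_le_abs_kernelF_sub_integral_le (hm : 0 < m) (γ : Measure (Fin k → ℝ))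
    [IsProbabilityMeasure γ] (hφm : Measurable φ) (hφ : ∀ x, |φ x| ≤ C) (z z' : Fin k → ℝ)
    (hε : 0 ≤ ε) :
    (Measure.pi fun _ : Fin m ↦ γ).real
        {W | ε ≤ |kernelF φ W z z' - ∫ w, φ (w ⬝ᵥ z) * φ (w ⬝ᵥ z') ∂γ|} ≤
      2 * Real.exp (-(m * ε ^ 2 / (2 * C ^ 4))) := by
  have := Fin.pos_iff_nonempty.1 hm
  have hdot (y : Fin k → ℝ) : Measurable (· ⬝ᵥ y : (Fin k → ℝ) → ℝ) := by
    unfold dotProduct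
    fun_prop
  have hbound (w : Fin k → ℝ) : φ (w ⬝ᵥ z) * φ (w ⬝ᵥ z') ∈ Set.Icc (-C ^ 2) (C ^ 2) := by
    rw [Set.mem_Icc, ← abs_le, abs_mul, pow_two]
    exact mul_le_mul (hφ _) (hφ _) (abs_nonneg _) ((abs_nonneg _).trans (hφ 0))
  have hoeffding := measureReal_pi_le_abs_mean_sub_integral_le (ι := Fin m) (γ := γ)
    ((hφm.comp (hdot z)).mul (hφm.comp (hdot z'))).aemeasurable
    (Filter.Eventually.of_forall hbound) hε
  simp only [Fintype.card_fin] at hoeffding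
  refine hoeffding.trans_eq ?_
  congr 3
  ring

end Kernel

lemma ofReal_one_sub_le_measure {Ω : Type*} [MeasurableSpace Ω] {μ : Measure Ω}
    [IsProbabilityMeasure μ] {s : Set Ω} {δ : ℝ} (h : μ.real sᶜ ≤ δ) :
    ENNReal.ofReal (1 - δ) ≤ μ s := by
  have hunion : 1 ≤ μ.real s + μ.real sᶜ := by
    simpa using measureReal_union_le (μ := μ) s sᶜ
  rw [← ofReal_measureReal]
  exact ENNReal.ofReal_le_ofReal (by linarith)

lemma two_mul_exp_neg_le_of_log_two_div_le {x δ : ℝ} (hδ : 0 < δ) (h : Real.log (2 / δ) ≤ x) :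
    2 * Real.exp (-x) ≤ δ :=
  calc 2 * Real.exp (-x) ≤ 2 * Real.exp (-Real.log (2 / δ)) := by gcongr
    _ = δ := by
      rw [Real.exp_neg, Real.exp_log (by positivity)]
      field_simp

lemma two_mul_log_two_div_le_of_four_mul_log_eight_div_le {c d δ x : ℝ} (hc : 0 ≤ c) (hd : 0 ≤ d)
    (hδ : 0 < δ) (hx : 0 ≤ x) (h : 4 * c * Real.log (8 / δ) / d ≤ x) :
    2 * c * Real.log (2 / δ) / d ≤ x :=
  calc 2 * c * Real.log (2 / δ) / d ≤ 2 * c * Real.log (8 / δ) / d := by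
        gcongr
        norm_num
    _ = 4 * c * Real.log (8 / δ) / d / 2 := by ring
    _ ≤ x := by linarith

theorem gaussian_kernel_approx_general {m k : ℕ} (hm : 0 < m)
    {ν : Measure (Matrix (Fin m) (Fin k) ℝ)}
    (hν : ν = Measure.pi fun _ : Fin m ↦ Measure.pi fun _ : Fin k ↦
      gaussianReal 0 ((k : ℝ≥0))⁻¹)
    {φ : ℝ → ℝ} {C : ℝ} (hφm : Measurable φ) (hφ : ∀ x, |φ x| ≤ C)
    {δ ε : ℝ} (hδ : 0 < δ) (hε : 0 < ε)
    (hmC : 2 * C ^ 4 * Real.log (2 / δ) / ε ^ 2 ≤ m)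
    {z : Fin k → ℝ} (hz : z ≠ 0) (z' : Fin k → ℝ) :
    ENNReal.ofReal (1 - δ) ≤
      ν {W | |kernelF φ W z z' - approxKernel φ (covMat z z')| ≤ ε} := by
  have : IsProbabilityMeasure ν := by
    rw [hν]
    exact Measure.pi.instIsProbabilityMeasure _
  rcases eq_or_ne C 0 with rfl | hC
  · have hφ₀ (x : ℝ) : φ x = 0 := abs_nonpos_iff.1 (hφ x)
    simp [kernelF, approxKernel, hφ₀, hε.le, hδ.le]
  have htail : ν.real {W | ε ≤ |kernelF φ W z z' - approxKernel φ (covMat z z')|} ≤ δ := by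
    rw [← integral_mul_dotProduct_eq_approxKernel hz hφm, hν]
    refine (measureReal_le_abs_kernelF_sub_integral_le hm _ hφm hφ z z' hε.le).trans
      (two_mul_exp_neg_le_of_log_two_div_le hδ ?_)
    rw [div_le_iff₀ (by positivity)] at hmC
    rw [le_div_iff₀ (by positivity)]
    linarith
  refine ofReal_one_sub_le_measure ((measureReal_mono fun W hW ↦ ?_).trans htail)
  exact (lt_of_not_ge (Set.notMem_ofPred_iff.1 hW)).le

/-- **Theorem (Daniely et al., adapted).** If the entries of `W` are i.i.d. `N(0, 1/k)`,
`φ` is twice continuously differentiable with `E_{N(0,1)}[φ²] = 1` and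
`‖φ‖_∞, ‖φ'‖_∞, ‖φ''‖_∞ ≤ C`, and `m ≥ 4C⁴ log(8/δ)/ε²`, then for all inputs `z, z'`
with `‖z‖² = ‖z'‖² = k`, with probability at least `1 - δ` we have
`|κ_f(z,z') - κ̃_f(Σ_{z,z'})| ≤ ε`. -/
theorem gaussian_kernel_approx (m k : ℕ) (hm : 0 < m) (hk : 0 < k)
    (ν : Measure (Matrix (Fin m) (Fin k) ℝ))
    (hν : ν = Measure.pi fun _ : Fin m => Measure.pi fun _ : Fin k =>
      gaussianReal 0 ((k : ℝ≥0))⁻¹)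
    (φ : ℝ → ℝ) (C : ℝ) (hφC2 : ContDiff ℝ 2 φ)
    (hnorm : ∫ x, (φ x) ^ 2 ∂(gaussianReal 0 1) = 1)
    (hφ : ∀ x, |φ x| ≤ C) (hφ' : ∀ x, |deriv φ x| ≤ C)
    (hφ'' : ∀ x, |deriv (deriv φ) x| ≤ C)
    (δ ε : ℝ) (hδ : 0 < δ) (hε : 0 < ε)
    (hm4 : 4 * C ^ 4 * Real.log (8 / δ) / ε ^ 2 ≤ (m : ℝ)) :
    ∀ z z' : Fin k → ℝ, z ⬝ᵥ z = (k : ℝ) → z' ⬝ᵥ z' = (k : ℝ) →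
      ENNReal.ofReal (1 - δ) ≤
        ν {W | |kernelF φ W z z' - approxKernel φ (covMat z z')| ≤ ε} := by
  intro z z' hz _
  have hz₀ : z ≠ 0 := by
    rintro rfl
    rw [zero_dotProduct, eq_comm, Nat.cast_eq_zero] at hz
    exact hk.ne' hz
  exact gaussian_kernel_approx_general hm hν hφC2.continuous.measurable hφ hδ hε
    (two_mul_log_two_div_le_of_four_mul_log_eight_div_le (by positivity) (by positivity) hδ
      (by positivity) hm4) hz₀ z'
end

section
/- Let B₁, B₂, …, B_d ∈ ℝ^{n×n} be linearly independent matrices with tr(B_i B_iᵀ) = n for each i, let M be a random n×n orthogonal matrix distributed according to the Haar measure on O(n), and let X = (tr(B₁M), tr(B₂M), …, tr(B_dM)) ∈ ℝ^d. Define A ∈ ℝ^{d×d} by A_{ij} = (1/n) tr(B_i B_jᵀ) and let Y ∼ N(0, A). Then for n ≥ 2, the 1st Wasserstein distance satisfies D_Wass(X, Y) ≤ d√(2‖A‖)/(n−1), where ‖A‖ is the operator norm of A; equivalently, for every 1-Lipschitz function g : ℝ^d → ℝ, |E[g(X)] − E[g(Y)]| ≤ d√(2‖A‖)/(n−1). 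-/
open MeasureTheory ProbabilityTheory Matrix Kronecker
open scoped ENNReal NNReal

/-!
A *Stein kernel* of a random vector `X` is a family of random vectors `τ i` with
`E[X i f(X)] = E[⟪τ i, ∇f(X)⟫]` for all test functions `f`. Interpolating between `X` and a standard
Gaussian vector by `√s X + √(1 - s) Z` and integrating by parts in both arguments bounds the
Wasserstein distance of `X` from the Gaussian by the mean distance of the kernel from the identity
(the Stein discrepancy).

For Haar-distributed `M`, invariance under the rotations `exp (t S)` with `S` skew-symmetric gives
an integration by parts formula for `M`, which exhibits
`τ i = (n - 1)⁻¹ (tr(Cⱼ (Cᵢᵀ - M Cᵢ M)))ⱼ` as a Stein kernel of `(tr(Cⱼ M))ⱼ`. When the `Cⱼ` are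
orthogonal of squared Frobenius norm `n`, its discrepancy involves only the moments of order two and
four of `M`, and the latter follow from the symmetries of the rows together with orthogonality.
Writing the given matrices in such an orthogonal frame, `B = S C`, gives `A = S Sᵀ`, and the linear
map `S` is Lipschitz with constant `√‖A‖`.
-/

section GaussianIntegrationByParts

open ContinuousLinearMap
open scoped RealInnerProductSpace

section Rotation

variable {E : Type*} [NormedAddCommGroup E] [NormedSpace ℝ E]

theorem norm_cos_smul_add_sin_smul_le (t : ℝ) (x y : E) :
    ‖Real.cos t • x + Real.sin t • y‖ ≤ ‖x‖ + ‖y‖ := by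
  refine (norm_add_le _ _).trans (add_le_add ?_ ?_) <;> rw [norm_smul, Real.norm_eq_abs]
  · exact mul_le_of_le_one_left (norm_nonneg x) (Real.abs_cos_le_one t)
  · exact mul_le_of_le_one_left (norm_nonneg y) (Real.abs_sin_le_one t)

theorem norm_neg_sin_smul_add_cos_smul_le (t : ℝ) (x y : E) :
    ‖-Real.sin t • x + Real.cos t • y‖ ≤ ‖x‖ + ‖y‖ := by
  simpa [neg_smul, smul_neg, add_comm] using norm_cos_smul_add_sin_smul_le t y (-x)

theorem hasDerivAt_cos_smul_add_sin_smul (t : ℝ) (x y : E) :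
    HasDerivAt (fun t => Real.cos t • x + Real.sin t • y)
      (-Real.sin t • x + Real.cos t • y) t :=
  ((Real.hasDerivAt_cos t).smul_const x).add ((Real.hasDerivAt_sin t).smul_const y)

theorem hasDerivAt_neg_sin_smul_add_cos_smul (t : ℝ) (x y : E) :
    HasDerivAt (fun t => -Real.sin t • x + Real.cos t • y)
      (-(Real.cos t • x + Real.sin t • y)) t := by
  simpa [add_comm] using hasDerivAt_cos_smul_add_sin_smul t y (-x)

end Rotation

theorem abs_le_of_lipschitzWith {E : Type*} [NormedAddCommGroup E] {f : E → ℝ} {K : ℝ≥0}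
    (hK : LipschitzWith K f) (x : E) : |f x| ≤ |f 0| + K * ‖x‖ := by
  have h := hK.dist_le_mul x 0
  rw [Real.dist_eq, dist_zero_right] at h
  linarith [abs_sub_abs_le_abs_sub (f x) (f 0)]

theorem abs_fderiv_apply_le {E : Type*} [NormedAddCommGroup E] [NormedSpace ℝ E] {f : E → ℝ}
    {K : ℝ≥0} (hK : LipschitzWith K f) (x v : E) : |fderiv ℝ f x v| ≤ K * ‖v‖ :=
  (fderiv ℝ f x).le_of_opNorm_le (norm_fderiv_le_of_lipschitz ℝ hK) v

section Gaussian

variable {E : Type*} [NormedAddCommGroup E] [NormedSpace ℝ E]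
    [CompleteSpace E] [SecondCountableTopology E] [MeasurableSpace E] [BorelSpace E]
    {μ : Measure E} [IsGaussian μ]

theorem memLp_two_norm_fst_add_norm_snd :
    MemLp (fun p : E × E => ‖p.1‖ + ‖p.2‖) 2 (μ.prod μ) :=
  (IsGaussian.memLp_two_id.norm.comp_fst μ).add (IsGaussian.memLp_two_id.norm.comp_snd μ)

theorem memLp_two_of_lipschitzWith {f : E → ℝ} {K : ℝ≥0} (hK : LipschitzWith K f) :
    MemLp f 2 μ := by
  have h := (hK.sub (LipschitzWith.const (f 0))).comp_memLp (by simp)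
    (IsGaussian.memLp_two_id (μ := μ))
  simpa [Function.comp_def, Pi.add_def] using h.add (memLp_const (f 0))

theorem integral_comp_rotation (hμ : μ[id] = 0) {G : E × E → ℝ} (hG : Continuous G) (t : ℝ) :
    ∫ p, G (ContinuousLinearMap.rotation t p) ∂(μ.prod μ) = ∫ p, G p ∂(μ.prod μ) := by
  rw [← integral_map (ContinuousLinearMap.rotation t).continuous.aemeasurable
    hG.aestronglyMeasurable, IsGaussian.map_rotation_eq_self hμ]

theorem hasDerivAt_integral_mul_rotation {f : E → ℝ} (hf : ContDiff ℝ 1 f)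
    {K : ℝ≥0} (hK : LipschitzWith K f) (ℓ : StrongDual ℝ E) :
    Integrable (fun p : E × E => fderiv ℝ f p.1 p.2 * ℓ p.2 - f p.1 * ℓ p.1) (μ.prod μ) ∧
    HasDerivAt (fun t => ∫ p : E × E, f (Real.cos t • p.1 + Real.sin t • p.2) *
        ℓ (-Real.sin t • p.1 + Real.cos t • p.2) ∂(μ.prod μ))
      (∫ p, (fderiv ℝ f p.1 p.2 * ℓ p.2 - f p.1 * ℓ p.1) ∂(μ.prod μ)) 0 := by
  have : Continuous (fderiv ℝ f) := hf.continuous_fderiv one_ne_zero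
  have hr : MemLp (fun p : E × E => ‖p.1‖ + ‖p.2‖) 2 (μ.prod μ) := memLp_two_norm_fst_add_norm_snd
  have key := hasDerivAt_integral_of_dominated_loc_of_deriv_le (μ := μ.prod μ) (x₀ := (0 : ℝ))
    (F := fun t p => f (Real.cos t • p.1 + Real.sin t • p.2) *
      ℓ (-Real.sin t • p.1 + Real.cos t • p.2))
    (F' := fun t p => fderiv ℝ f (Real.cos t • p.1 + Real.sin t • p.2)
        (-Real.sin t • p.1 + Real.cos t • p.2) * ℓ (-Real.sin t • p.1 + Real.cos t • p.2) +
      f (Real.cos t • p.1 + Real.sin t • p.2) * ℓ (-(Real.cos t • p.1 + Real.sin t • p.2)))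
    (bound := fun p => K * (‖p.1‖ + ‖p.2‖) * (‖ℓ‖ * (‖p.1‖ + ‖p.2‖)) +
      (|f 0| + K * (‖p.1‖ + ‖p.2‖)) * (‖ℓ‖ * (‖p.1‖ + ‖p.2‖)))
    Filter.univ_mem ?_ ?_ ?_ ?_ ?_ ?_
  · simpa [sub_eq_add_neg] using key
  · exact Filter.Eventually.of_forall fun t => by fun_prop
  · simpa using ((memLp_two_of_lipschitzWith hK).integrable one_le_two).mul_prod
      (ℓ.integrable_comp IsGaussian.integrable_id)
  · fun_prop
  · refine ae_of_all _ fun p t _ => (norm_add_le _ _).trans ?_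
    have hfst := norm_cos_smul_add_sin_smul_le t p.1 p.2
    have hsnd := norm_neg_sin_smul_add_cos_smul_le t p.1 p.2
    rw [norm_mul, norm_mul]
    gcongr
    · exact (abs_fderiv_apply_le hK _ _).trans (by gcongr)
    · exact ℓ.le_opNorm_of_le hsnd
    · exact (abs_le_of_lipschitzWith hK _).trans (by gcongr)
    · exact ℓ.le_opNorm_of_le (by rwa [norm_neg])
  · refine ((hr.integrable_sq.const_mul (2 * K * ‖ℓ‖)).add
      ((hr.integrable one_le_two).const_mul (|f 0| * ‖ℓ‖))).congr (ae_of_all _ fun p => ?_)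
    simp only [Pi.add_apply]
    ring
  · refine ae_of_all _ fun p t _ => HasDerivAt.mul ?_ ?_
    · exact (hf.differentiable one_ne_zero _).hasFDerivAt.comp_hasDerivAt t
        (hasDerivAt_cos_smul_add_sin_smul t p.1 p.2)
    · exact ℓ.hasFDerivAt.comp_hasDerivAt t (hasDerivAt_neg_sin_smul_add_cos_smul t p.1 p.2)

theorem integral_mul_eq_integral_prod_fderiv (hμ : μ[id] = 0) {f : E → ℝ} (hf : ContDiff ℝ 1 f)
    {K : ℝ≥0} (hK : LipschitzWith K f) (ℓ : StrongDual ℝ E) :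
    Integrable (fun p : E × E => fderiv ℝ f p.1 p.2 * ℓ p.2) (μ.prod μ) ∧
    ∫ x, f x * ℓ x ∂μ = ∫ p, fderiv ℝ f p.1 p.2 * ℓ p.2 ∂(μ.prod μ) := by
  obtain ⟨hint, hderiv⟩ := hasDerivAt_integral_mul_rotation (μ := μ) hf hK ℓ
  have hconst : ∀ t, ∫ p : E × E, f (Real.cos t • p.1 + Real.sin t • p.2) *
      ℓ (-Real.sin t • p.1 + Real.cos t • p.2) ∂(μ.prod μ) = ∫ p, f p.1 * ℓ p.2 ∂(μ.prod μ) :=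
    integral_comp_rotation hμ (G := fun p => f p.1 * ℓ p.2) (by fun_prop)
  have hfℓ : Integrable (fun p : E × E => f p.1 * ℓ p.1) (μ.prod μ) :=
    ((memLp_two_of_lipschitzWith hK).integrable_mul
      (memLp_two_of_lipschitzWith ℓ.lipschitz)).comp_fst μ
  have hfst : ∫ p : E × E, f p.1 * ℓ p.1 ∂(μ.prod μ) = ∫ x, f x * ℓ x ∂μ := by
    simpa using integral_fun_fst (μ := μ) (ν := μ) fun x => f x * ℓ x
  have hDf : Integrable (fun p : E × E => fderiv ℝ f p.1 p.2 * ℓ p.2) (μ.prod μ) := by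
    simpa [Pi.add_def] using hint.add hfℓ
  refine ⟨hDf, ?_⟩
  rw [integral_sub hDf hfℓ, hfst] at hderiv
  simp only [hconst] at hderiv
  linarith [hderiv.unique (hasDerivAt_const 0 _)]

end Gaussian

variable {E : Type*} [NormedAddCommGroup E] [InnerProductSpace ℝ E] [FiniteDimensional ℝ E]
  [MeasurableSpace E] [BorelSpace E]

theorem integral_inner_mul_inner_stdGaussian (v w : E) :
    ∫ z, ⟪v, z⟫ * ⟪w, z⟫ ∂(stdGaussian E) = ⟪v, w⟫ := by
  have h := covarianceBilin_apply (μ := stdGaussian E) IsGaussian.memLp_two_id v w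
  rw [covarianceBilin_stdGaussian, innerSL_apply_apply] at h
  simpa using h.symm

theorem integral_inner_mul_stdGaussian {f : E → ℝ} (hf : ContDiff ℝ 1 f) {K : ℝ≥0}
    (hK : LipschitzWith K f) (w : E) :
    ∫ z, ⟪w, z⟫ * f z ∂(stdGaussian E) = ∫ z, fderiv ℝ f z w ∂(stdGaussian E) := by
  obtain ⟨hint, heq⟩ := integral_mul_eq_integral_prod_fderiv (μ := stdGaussian E) (by simp) hf hK
    (innerSL ℝ w)
  have hinner : ∀ x, ∫ z, fderiv ℝ f x z * ⟪w, z⟫ ∂(stdGaussian E) = fderiv ℝ f x w := fun x => by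
    simpa using integral_inner_mul_inner_stdGaussian
      ((InnerProductSpace.toDual ℝ E).symm (fderiv ℝ f x)) w
  simp only [innerSL_apply_apply] at hint heq
  simp_rw [mul_comm, heq, integral_prod _ hint, hinner]

theorem integral_inner_mul_comp_stdGaussian {f : E → ℝ} (hf : ContDiff ℝ 1 f) {K : ℝ≥0}
    (hK : LipschitzWith K f) (w x : E) (s : ℝ) :
    ∫ z, ⟪w, z⟫ * f (x + s • z) ∂(stdGaussian E) =
      s * ∫ z, fderiv ℝ f (x + s • z) w ∂(stdGaussian E) := by
  have hlip : LipschitzWith (K * ‖s‖₊) fun z => f (x + s • z) :=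
    hK.comp ((isometry_add_left x).lipschitz.comp (lipschitzWith_smul s) |>.weaken (by simp))
  have hderiv : ∀ z, fderiv ℝ (fun z => f (x + s • z)) z w = s * fderiv ℝ f (x + s • z) w := by
    intro z
    have h := (hf.differentiable one_ne_zero (x + s • z)).hasFDerivAt.comp z
      (((hasFDerivAt_id z).const_smul s).const_add x)
    simpa [Function.comp_def] using congr($(h.fderiv) w)
  rw [integral_inner_mul_stdGaussian (by fun_prop) hlip, ← integral_const_mul]
  simp_rw [hderiv]

end GaussianIntegrationByParts

section LipschitzApproximation

open Filter
open scoped Topology Convolution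

theorem tendsto_integral_comp_of_lipschitzWith {E Ω : Type*} [NormedAddCommGroup E]
    [MeasurableSpace Ω] {μ : Measure Ω} [IsFiniteMeasure μ] {Y : Ω → E}
    (hY : Integrable Y μ) {h : ℕ → E → ℝ} {g : E → ℝ} {L : ℝ≥0}
    (hL : ∀ m, LipschitzWith L (h m)) (hlim : ∀ x, Tendsto (fun m => h m x) atTop (𝓝 (g x))) :
    Tendsto (fun m => ∫ ω, h m (Y ω) ∂μ) atTop (𝓝 (∫ ω, g (Y ω) ∂μ)) := by
  obtain ⟨b, hb⟩ := (hlim 0).abs.bddAbove_range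
  refine tendsto_integral_of_dominated_convergence (fun ω => b + L * ‖Y ω‖)
    (fun m => (hL m).continuous.comp_aestronglyMeasurable hY.1)
    ((integrable_const b).add (hY.norm.const_mul _)) (fun m => ae_of_all _ fun ω => ?_)
    (ae_of_all _ fun ω => hlim (Y ω))
  exact (abs_le_of_lipschitzWith (hL m) (Y ω)).trans
    (add_le_add_left (hb (Set.mem_range_self m)) _)

variable {E : Type*} [NormedAddCommGroup E] [NormedSpace ℝ E] [FiniteDimensional ℝ E]

theorem exists_lipschitzWith_hasCompactSupport_eqOn {g : E → ℝ} {L : ℝ≥0}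
    (hg : LipschitzWith L g) (hg0 : g 0 = 0) (R : ℝ) :
    ∃ h : E → ℝ, LipschitzWith L h ∧ HasCompactSupport h ∧ ∀ x, 2 * ‖x‖ ≤ R → h x = g x := by
  let T : E → ℝ := fun x => max (L * (R - ‖x‖)) 0
  have hT : LipschitzWith L T := LipschitzWith.max_const (.of_dist_le_mul fun x y => by
    rw [Real.dist_eq, ← mul_sub, abs_mul, NNReal.abs_eq, sub_sub_sub_cancel_left, abs_sub_comm,
      dist_eq_norm]
    gcongr
    exact abs_norm_sub_norm_le x y) 0
  refine ⟨fun x => max (min (g x) (T x)) (-T x), ?_, ?_, fun x hx => ?_⟩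
  · simpa using (hg.min hT).max hT.neg
  · refine .intro (isCompact_closedBall (0 : E) R) fun x hx => ?_
    have hxR : R < ‖x‖ := by simpa using hx
    have hTx : T x = 0 := max_eq_right (mul_nonpos_of_nonneg_of_nonpos L.2 (by linarith))
    simp [hTx]
  · have hgx : |g x| ≤ L * ‖x‖ := by simpa [hg0] using abs_le_of_lipschitzWith hg x
    have hTx : |g x| ≤ T x :=
      hgx.trans ((mul_le_mul_of_nonneg_left (by linarith) L.2).trans (le_max_left _ _))
    simp only [min_eq_left (abs_le.1 hTx).2, max_eq_left (abs_le.1 hTx).1]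

theorem exists_contDiff_hasCompactSupport_lipschitzWith_approx {g : E → ℝ}
    (hs : HasCompactSupport g) {L : ℝ≥0} (hg : LipschitzWith L g) {ε : ℝ} (hε : 0 < ε) :
    ∃ h : E → ℝ, ContDiff ℝ 2 h ∧ HasCompactSupport h ∧ LipschitzWith L h ∧
      ∀ x, |h x - g x| ≤ ε := by
  borelize E
  let ν : Measure E := Measure.addHaar
  have hr : 0 < ε / (L + 1) := by positivity
  let φ : ContDiffBump (0 : E) := ⟨ε / (L + 1) / 2, ε / (L + 1), by positivity, by linarith⟩
  have hφ : Continuous (φ.normed ν) := φ.continuous_normed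
  have hgc : Continuous g := hg.continuous
  refine ⟨φ.normed ν ⋆[ContinuousLinearMap.lsmul ℝ ℝ, ν] g,
    φ.hasCompactSupport_normed.contDiff_convolution_left _ φ.contDiff_normed
      hgc.locallyIntegrable,
    φ.hasCompactSupport_normed.convolution _ hs, .of_dist_le_mul fun x y => ?_, fun x => ?_⟩
  · have hint : ∀ x, Integrable (fun t => φ.normed ν t * g (x - t)) ν := fun x =>
      Continuous.integrable_of_hasCompactSupport (by fun_prop) φ.hasCompactSupport_normed.mul_right
    simp only [dist_eq_norm, convolution_def, ContinuousLinearMap.lsmul_apply, smul_eq_mul]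
    rw [← integral_sub (hint x) (hint y)]
    calc ‖∫ t, (φ.normed ν t * g (x - t) - φ.normed ν t * g (y - t)) ∂ν‖
        ≤ ∫ t, φ.normed ν t * (L * ‖x - y‖) ∂ν := by
          refine norm_integral_le_of_norm_le (φ.integrable_normed.mul_const _)
            (ae_of_all _ fun t => ?_)
          rw [← mul_sub, norm_mul, Real.norm_of_nonneg (φ.nonneg_normed t)]
          refine mul_le_mul_of_nonneg_left ?_ (φ.nonneg_normed t)
          simpa [dist_eq_norm] using hg.dist_le_mul (x - t) (y - t)
      _ = L * ‖x - y‖ := by rw [integral_mul_const, φ.integral_normed, one_mul]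
  · rw [← Real.dist_eq]
    refine φ.dist_normed_convolution_le hgc.aestronglyMeasurable fun y hy => ?_
    calc dist (g y) (g x) ≤ L * (ε / (L + 1)) :=
          (hg.dist_le_mul y x).trans (mul_le_mul_of_nonneg_left (Metric.mem_ball.1 hy).le L.2)
      _ ≤ (L + 1) * (ε / (L + 1)) := by gcongr; linarith
      _ = ε := by field_simp

theorem exists_seq_contDiff_hasCompactSupport_tendsto {g : E → ℝ} {L : ℝ≥0}
    (hg : LipschitzWith L g) (hg0 : g 0 = 0) :
    ∃ h : ℕ → E → ℝ, (∀ m, ContDiff ℝ 2 (h m) ∧ HasCompactSupport (h m) ∧ LipschitzWith L (h m)) ∧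
      ∀ x, Tendsto (fun m => h m x) atTop (𝓝 (g x)) := by
  choose k hkL hks hkg using fun m : ℕ =>
    exists_lipschitzWith_hasCompactSupport_eqOn hg hg0 (m : ℝ)
  choose h h2 hs hL hhk using fun m : ℕ => exists_contDiff_hasCompactSupport_lipschitzWith_approx
    (hks m) (hkL m) (Nat.one_div_pos_of_nat (α := ℝ) (n := m))
  refine ⟨h, fun m => ⟨h2 m, hs m, hL m⟩, fun x => ?_⟩
  obtain ⟨m₀, hm₀⟩ := exists_nat_ge (2 * ‖x‖)
  refine tendsto_iff_dist_tendsto_zero.2 (squeeze_zero' (.of_forall fun _ => dist_nonneg) ?_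
    (tendsto_one_div_add_atTop_nhds_zero_nat (𝕜 := ℝ)))
  filter_upwards [eventually_ge_atTop m₀] with m hm
  rw [← hkg m x (hm₀.trans (by exact_mod_cast hm))]
  exact hhk m x

end LipschitzApproximation

section SteinKernel

open scoped RealInnerProductSpace

variable {Ω ι : Type*} [MeasurableSpace Ω] {μ : Measure Ω} [Fintype ι]

/-- `τ` is a Stein kernel of the random vector `X`: integration by parts against the law of `X`
turns multiplication by the coordinate `X i` into differentiation in the random direction `τ i`,
the `i`-th row of the kernel. The standard Gaussian vector has the constant kernel
`τ i = EuclideanSpace.single i 1`. -/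
def IsSteinKernel (μ : Measure Ω) (X : Ω → EuclideanSpace ℝ ι) (τ : ι → Ω → EuclideanSpace ℝ ι) :
    Prop :=
  ∀ f : EuclideanSpace ℝ ι → ℝ, ContDiff ℝ 1 f → HasCompactSupport f → ∀ i,
    ∫ ω, X ω i * f (X ω) ∂μ = ∫ ω, fderiv ℝ f (X ω) (τ i ω) ∂μ

theorem integral_le_sqrt_integral_sq [IsProbabilityMeasure μ] {Y : Ω → ℝ} (hY : MemLp Y 2 μ) :
    ∫ ω, Y ω ∂μ ≤ √(∫ ω, Y ω ^ 2 ∂μ) := by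
  refine Real.le_sqrt_of_sq_le ?_
  have h := variance_nonneg Y μ
  rw [variance_eq_sub hY] at h
  simpa using h

section RandomVectors

theorem integrable_mul_comp_of_hasCompactSupport {E : Type*} [NormedAddCommGroup E]
    {Y : Ω → ℝ} (hY : Integrable Y μ) {W : Ω → E} (hW : AEStronglyMeasurable W μ)
    {f : E → ℝ} (hf : Continuous f) (hs : HasCompactSupport f) :
    Integrable (fun ω => Y ω * f (W ω)) μ := by
  obtain ⟨b, hb⟩ := hs.exists_bound_of_continuous hf
  exact hY.mul_bdd (hf.comp_aestronglyMeasurable hW) (ae_of_all _ fun ω => hb (W ω))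

theorem integrable_comp_of_lipschitzWith {E : Type*} [NormedAddCommGroup E] [IsFiniteMeasure μ]
    {Y : Ω → E} (hY : Integrable Y μ) {f : E → ℝ} {K : ℝ≥0} (hK : LipschitzWith K f) :
    Integrable (fun ω => f (Y ω)) μ :=
  ((integrable_const |f 0|).add (hY.norm.const_mul (K : ℝ))).mono'
    (hK.continuous.comp_aestronglyMeasurable hY.1)
    (ae_of_all _ fun ω => abs_le_of_lipschitzWith hK (Y ω))

variable {E : Type*} [NormedAddCommGroup E] [NormedSpace ℝ E]

theorem integrable_fderiv_comp_apply {W v : Ω → E} (hW : AEStronglyMeasurable W μ)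
    (hv : Integrable v μ) {f : E → ℝ} (hf : ContDiff ℝ 1 f) {K : ℝ≥0} (hK : LipschitzWith K f) :
    Integrable (fun ω => fderiv ℝ f (W ω) (v ω)) μ :=
  (hv.norm.const_mul (K : ℝ)).mono'
    ((ContinuousLinearMap.id ℝ (E →L[ℝ] ℝ)).aestronglyMeasurable_comp₂
      ((hf.continuous_fderiv one_ne_zero).comp_aestronglyMeasurable hW) hv.1)
    (ae_of_all _ fun ω => abs_fderiv_apply_le hK (W ω) (v ω))

theorem hasDerivAt_integral_comp_cos_smul_add_sin_smul {X Z : Ω → E} [IsFiniteMeasure μ]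
    (hX : Integrable X μ) (hZ : Integrable Z μ) {f : E → ℝ} (hf : ContDiff ℝ 1 f)
    {K : ℝ≥0} (hK : LipschitzWith K f) (t : ℝ) :
    HasDerivAt (fun t => ∫ ω, f (Real.cos t • X ω + Real.sin t • Z ω) ∂μ)
      (∫ ω, fderiv ℝ f (Real.cos t • X ω + Real.sin t • Z ω)
        (-Real.sin t • X ω + Real.cos t • Z ω) ∂μ) t := by
  have hW : ∀ t, Integrable (fun ω => Real.cos t • X ω + Real.sin t • Z ω) μ := fun t =>
    (hX.smul _).add (hZ.smul _)
  have hW' : ∀ t, Integrable (fun ω => -Real.sin t • X ω + Real.cos t • Z ω) μ := fun t =>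
    (hX.smul _).add (hZ.smul _)
  have hfW : ∀ t, Integrable (fun ω => f (Real.cos t • X ω + Real.sin t • Z ω)) μ :=
    fun t => integrable_comp_of_lipschitzWith (hW t) hK
  refine (hasDerivAt_integral_of_dominated_loc_of_deriv_le Filter.univ_mem
    (F' := fun t ω => fderiv ℝ f (Real.cos t • X ω + Real.sin t • Z ω)
      (-Real.sin t • X ω + Real.cos t • Z ω)) (bound := fun ω => K * (‖X ω‖ + ‖Z ω‖))
    (.of_forall fun t => (hfW t).1) (hfW t)
    (integrable_fderiv_comp_apply (hW t).1 (hW' t) hf hK).1 (ae_of_all _ fun ω t _ => ?_)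
    ((hX.norm.add hZ.norm).const_mul _) (ae_of_all _ fun ω t _ => ?_)).2
  · refine (abs_fderiv_apply_le hK _ _).trans ?_
    gcongr
    exact norm_neg_sin_smul_add_cos_smul_le t (X ω) (Z ω)
  · exact (hf.differentiable one_ne_zero _).hasFDerivAt.comp_hasDerivAt t
      (hasDerivAt_cos_smul_add_sin_smul t (X ω) (Z ω))

end RandomVectors

section GaussianNoise

variable {E : Type*} [NormedAddCommGroup E] [InnerProductSpace ℝ E] [FiniteDimensional ℝ E]
  [MeasurableSpace E] [BorelSpace E]

theorem memLp_inner_prod_stdGaussian [SFinite μ] {v : Ω → E} (hv : MemLp v 2 μ) :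
    MemLp (fun p : Ω × E => ⟪v p.1, p.2⟫) 2 (μ.prod (stdGaussian E)) := by
  have hmeas : AEStronglyMeasurable (fun p : Ω × E => ⟪v p.1, p.2⟫) (μ.prod (stdGaussian E)) :=
    hv.1.comp_fst.inner aestronglyMeasurable_id.comp_snd
  refine (memLp_two_iff_integrable_sq hmeas).2 ?_
  refine (hv.integrable_norm_pow two_ne_zero |>.mul_prod
    ((IsGaussian.memLp_two_id (μ := stdGaussian E)).integrable_norm_pow two_ne_zero)).mono'
    (hmeas.pow 2) (ae_of_all _ fun p => ?_)
  rw [Real.norm_of_nonneg (sq_nonneg _), id, ← mul_pow, ← sq_abs]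
  gcongr
  exact abs_real_inner_le_norm _ _

theorem integral_inner_sq_prod_stdGaussian [SFinite μ] {v : Ω → E} (hv : MemLp v 2 μ) :
    ∫ p : Ω × E, ⟪v p.1, p.2⟫ ^ 2 ∂(μ.prod (stdGaussian E)) = ∫ ω, ‖v ω‖ ^ 2 ∂μ := by
  rw [integral_prod _ (memLp_inner_prod_stdGaussian hv).integrable_sq]
  simp_rw [sq, integral_inner_mul_inner_stdGaussian, real_inner_self_eq_norm_mul_norm]

theorem integral_inner_mul_comp_prod_stdGaussian [IsFiniteMeasure μ] {X v : Ω → E}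
    (hX : AEStronglyMeasurable X μ) (hv : MemLp v 2 μ) {f : E → ℝ} (hf : ContDiff ℝ 1 f)
    (hs : HasCompactSupport f) (c s : ℝ) :
    ∫ p : Ω × E, ⟪v p.1, p.2⟫ * f (c • X p.1 + s • p.2) ∂(μ.prod (stdGaussian E)) =
      s * ∫ p : Ω × E, fderiv ℝ f (c • X p.1 + s • p.2) (v p.1) ∂(μ.prod (stdGaussian E)) := by
  obtain ⟨K, hK⟩ := hf.lipschitzWith_of_hasCompactSupport hs one_ne_zero
  have hW : AEStronglyMeasurable (fun p : Ω × E => c • X p.1 + s • p.2)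
      (μ.prod (stdGaussian E)) :=
    (hX.comp_fst.const_smul c).add (aestronglyMeasurable_id.comp_snd.const_smul s)
  rw [integral_prod _ (integrable_mul_comp_of_hasCompactSupport
      ((memLp_inner_prod_stdGaussian hv).integrable one_le_two) hW hf.continuous hs),
    integral_prod _ (integrable_fderiv_comp_apply hW ((hv.integrable one_le_two).comp_fst _) hf hK),
    ← integral_const_mul]
  simp_rw [integral_inner_mul_comp_stdGaussian hf hK]

end GaussianNoise

variable {X : Ω → EuclideanSpace ℝ ι} {τ : ι → Ω → EuclideanSpace ℝ ι}

theorem IsSteinKernel.integral_mul_comp_prod_stdGaussian [IsFiniteMeasure μ]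
    (h : IsSteinKernel μ X τ) (hX : Integrable X μ) (hτ : ∀ i, MemLp (τ i) 2 μ)
    {f : EuclideanSpace ℝ ι → ℝ} (hf : ContDiff ℝ 1 f) (hs : HasCompactSupport f)
    {c : ℝ} (hc : c ≠ 0) (s : ℝ) (i : ι) :
    ∫ p, X p.1 i * f (c • X p.1 + s • p.2) ∂(μ.prod (stdGaussian (EuclideanSpace ℝ ι))) =
      c * ∫ p, fderiv ℝ f (c • X p.1 + s • p.2) (τ i p.1)
        ∂(μ.prod (stdGaussian (EuclideanSpace ℝ ι))) := by
  obtain ⟨K, hK⟩ := hf.lipschitzWith_of_hasCompactSupport hs one_ne_zero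
  have hXi : Integrable (fun ω => X ω i) μ :=
    (EuclideanSpace.proj i : EuclideanSpace ℝ ι →L[ℝ] ℝ).integrable_comp hX
  have hW : AEStronglyMeasurable (fun p : Ω × EuclideanSpace ℝ ι => c • X p.1 + s • p.2)
      (μ.prod (stdGaussian (EuclideanSpace ℝ ι))) :=
    (hX.1.comp_fst.const_smul c).add (aestronglyMeasurable_id.comp_snd.const_smul s)
  have hslice : ∀ z, ∫ ω, X ω i * f (c • X ω + s • z) ∂μ =
      c * ∫ ω, fderiv ℝ f (c • X ω + s • z) (τ i ω) ∂μ := by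
    intro z
    have hcomp : HasCompactSupport fun x => f (c • x + s • z) := by
      exact hs.comp_homeomorph ((Homeomorph.smulOfNeZero c hc).trans (Homeomorph.addRight (s • z)))
    have hderiv : ∀ x v, fderiv ℝ (fun x => f (c • x + s • z)) x v =
        c * fderiv ℝ f (c • x + s • z) v := by
      intro x v
      have h := (hf.differentiable one_ne_zero (c • x + s • z)).hasFDerivAt.comp x
        (((hasFDerivAt_id x).const_smul c).add_const (s • z))
      simpa [Function.comp_def] using congr($(h.fderiv) v)
    rw [h _ (by fun_prop) hcomp, ← integral_const_mul]
    simp_rw [hderiv]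
  rw [integral_prod_symm _ (integrable_mul_comp_of_hasCompactSupport
      (hXi.comp_fst _) hW hf.continuous hs),
    integral_prod_symm _ (integrable_fderiv_comp_apply hW
      (((hτ i).integrable one_le_two).comp_fst _) hf hK),
    ← integral_const_mul]
  simp_rw [hslice]

theorem memLp_toLp {Y : ι → Ω → ℝ} (hY : ∀ i, MemLp (Y i) 2 μ) :
    MemLp (fun ω => (WithLp.toLp 2 fun i => Y i ω : EuclideanSpace ℝ ι)) 2 μ :=
  memLp_piLp_iff.2 hY

theorem integral_norm_toLp_inner_prod_stdGaussian_le [IsProbabilityMeasure μ]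
    {v : ι → Ω → EuclideanSpace ℝ ι} (hv : ∀ i, MemLp (v i) 2 μ) :
    ∫ p, ‖(WithLp.toLp 2 fun i => ⟪v i p.1, p.2⟫ : EuclideanSpace ℝ ι)‖
        ∂(μ.prod (stdGaussian (EuclideanSpace ℝ ι))) ≤ √(∫ ω, ∑ i, ‖v i ω‖ ^ 2 ∂μ) := by
  have hN : ∀ i, MemLp (fun p : Ω × EuclideanSpace ℝ ι => ⟪v i p.1, p.2⟫) 2
      (μ.prod (stdGaussian (EuclideanSpace ℝ ι))) := fun i => memLp_inner_prod_stdGaussian (hv i)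
  refine (integral_le_sqrt_integral_sq (memLp_toLp hN).norm).trans
    (Real.sqrt_le_sqrt (le_of_eq ?_))
  rw [integral_finsetSum _ fun i _ => (hv i).integrable_norm_pow two_ne_zero]
  simp only [EuclideanSpace.real_norm_sq_eq]
  rw [integral_finsetSum _ fun i _ => (hN i).integrable_sq]
  simp only [← EuclideanSpace.real_norm_sq_eq]
  exact Finset.sum_congr rfl fun i _ => integral_inner_sq_prod_stdGaussian (hv i)

variable [DecidableEq ι]

/-- The Stein discrepancy of a kernel: the `L²` distance, in the Hilbert-Schmidt norm, between
`τ` and the identity kernel of the standard Gaussian vector. -/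
noncomputable def steinDiscrepancy (μ : Measure Ω) (τ : ι → Ω → EuclideanSpace ℝ ι) : ℝ :=
  √(∫ ω, ∑ i, ‖τ i ω - EuclideanSpace.single i 1‖ ^ 2 ∂μ)

theorem IsSteinKernel.integral_rotation_mul_comp [IsFiniteMeasure μ]
    (h : IsSteinKernel μ X τ) (hX : Integrable X μ) (hτ : ∀ i, MemLp (τ i) 2 μ)
    {f : EuclideanSpace ℝ ι → ℝ} (hf : ContDiff ℝ 1 f) (hs : HasCompactSupport f)
    {c : ℝ} (hc : c ≠ 0) (s : ℝ) (i : ι) :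
    ∫ p, (-s • X p.1 + c • p.2) i * f (c • X p.1 + s • p.2)
        ∂(μ.prod (stdGaussian (EuclideanSpace ℝ ι))) =
      -c * ∫ p, ⟪τ i p.1 - EuclideanSpace.single i 1, p.2⟫ * f (c • X p.1 + s • p.2)
        ∂(μ.prod (stdGaussian (EuclideanSpace ℝ ι))) := by
  obtain ⟨K, hK⟩ := hf.lipschitzWith_of_hasCompactSupport hs one_ne_zero
  let P := μ.prod (stdGaussian (EuclideanSpace ℝ ι))
  let e : EuclideanSpace ℝ ι := EuclideanSpace.single i 1
  have he : MemLp (fun _ : Ω => e) 2 μ := memLp_const e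
  have hW : AEStronglyMeasurable (fun p : Ω × EuclideanSpace ℝ ι => c • X p.1 + s • p.2) P :=
    (hX.1.comp_fst.const_smul c).add (aestronglyMeasurable_id.comp_snd.const_smul s)
  have hXf : Integrable (fun p => X p.1 i * f (c • X p.1 + s • p.2)) P :=
    integrable_mul_comp_of_hasCompactSupport
      (((EuclideanSpace.proj i : EuclideanSpace ℝ ι →L[ℝ] ℝ).integrable_comp hX).comp_fst _)
      hW hf.continuous hs
  have hZf : Integrable (fun p => ⟪e, p.2⟫ * f (c • X p.1 + s • p.2)) P :=
    integrable_mul_comp_of_hasCompactSupport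
      ((memLp_inner_prod_stdGaussian he).integrable one_le_two) hW hf.continuous hs
  have hDτ : Integrable (fun p => fderiv ℝ f (c • X p.1 + s • p.2) (τ i p.1)) P :=
    integrable_fderiv_comp_apply hW (((hτ i).integrable one_le_two).comp_fst _) hf hK
  have hDe : Integrable (fun p => fderiv ℝ f (c • X p.1 + s • p.2) e) P :=
    integrable_fderiv_comp_apply hW (integrable_const e) hf hK
  calc ∫ p, (-s • X p.1 + c • p.2) i * f (c • X p.1 + s • p.2) ∂P
      = -s * ∫ p, X p.1 i * f (c • X p.1 + s • p.2) ∂P +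
          c * ∫ p, ⟪e, p.2⟫ * f (c • X p.1 + s • p.2) ∂P := by
        rw [← integral_const_mul, ← integral_const_mul,
          ← integral_add (hXf.const_mul _) (hZf.const_mul _)]
        refine integral_congr_ae (ae_of_all _ fun p => ?_)
        have hep : ⟪e, p.2⟫ = p.2 i := by simpa using EuclideanSpace.inner_single_left i 1 p.2
        simp only [hep, PiLp.add_apply, PiLp.smul_apply, smul_eq_mul]
        ring
    _ = -c * (s * ∫ p, fderiv ℝ f (c • X p.1 + s • p.2) (τ i p.1 - e) ∂P) := by
        rw [h.integral_mul_comp_prod_stdGaussian hX hτ hf hs hc,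
          integral_inner_mul_comp_prod_stdGaussian hX.1 he hf hs]
        simp only [map_sub]
        rw [integral_sub hDτ hDe]
        ring
    _ = -c * ∫ p, ⟪τ i p.1 - e, p.2⟫ * f (c • X p.1 + s • p.2) ∂P := by
        rw [integral_inner_mul_comp_prod_stdGaussian (v := fun ω => τ i ω - e) hX.1
          ((hτ i).sub he) hf hs]

theorem fderiv_apply_eq_sum_coord (g : EuclideanSpace ℝ ι → ℝ) (x v : EuclideanSpace ℝ ι) :
    fderiv ℝ g x v = ∑ i, v i * fderiv ℝ g x (EuclideanSpace.single i 1) := by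
  conv_lhs => rw [← (EuclideanSpace.basisFun ι ℝ).sum_repr v]
  simp

theorem memLp_inner_single_sub [IsFiniteMeasure μ] (hτ : ∀ i, MemLp (τ i) 2 μ) (i : ι) :
    MemLp (fun p : Ω × EuclideanSpace ℝ ι => ⟪τ i p.1 - EuclideanSpace.single i 1, p.2⟫) 2
      (μ.prod (stdGaussian (EuclideanSpace ℝ ι))) :=
  memLp_inner_prod_stdGaussian (v := fun ω => τ i ω - EuclideanSpace.single i 1)
    ((hτ i).sub (memLp_const _))

theorem contDiff_one_fderiv_apply {E : Type*} [NormedAddCommGroup E] [NormedSpace ℝ E] {g : E → ℝ}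
    (hg : ContDiff ℝ 2 g) (v : E) : ContDiff ℝ 1 fun x => fderiv ℝ g x v :=
  (hg.fderiv_right (m := 1) (by norm_num)).clm_apply contDiff_const

theorem IsSteinKernel.integral_fderiv_rotation [IsFiniteMeasure μ]
    (h : IsSteinKernel μ X τ) (hX : Integrable X μ) (hτ : ∀ i, MemLp (τ i) 2 μ)
    {g : EuclideanSpace ℝ ι → ℝ} (hg : ContDiff ℝ 2 g) (hs : HasCompactSupport g)
    {c : ℝ} (hc : c ≠ 0) (s : ℝ) :
    ∫ p, fderiv ℝ g (c • X p.1 + s • p.2) (-s • X p.1 + c • p.2)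
        ∂(μ.prod (stdGaussian (EuclideanSpace ℝ ι))) =
      -c * ∫ p, fderiv ℝ g (c • X p.1 + s • p.2)
          (WithLp.toLp 2 fun i => ⟪τ i p.1 - EuclideanSpace.single i 1, p.2⟫)
        ∂(μ.prod (stdGaussian (EuclideanSpace ℝ ι))) := by
  have hg' := fun i => contDiff_one_fderiv_apply hg (EuclideanSpace.single i (1 : ℝ))
  have hs' := fun i => hs.fderiv_apply ℝ (EuclideanSpace.single i (1 : ℝ))
  have hW : AEStronglyMeasurable (fun p : Ω × EuclideanSpace ℝ ι => c • X p.1 + s • p.2)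
      (μ.prod (stdGaussian (EuclideanSpace ℝ ι))) :=
    (hX.1.comp_fst.const_smul c).add (aestronglyMeasurable_id.comp_snd.const_smul s)
  have hW' : Integrable (fun p : Ω × EuclideanSpace ℝ ι => -s • X p.1 + c • p.2)
      (μ.prod (stdGaussian (EuclideanSpace ℝ ι))) :=
    ((hX.comp_fst _).smul (-s)).add ((IsGaussian.integrable_id.comp_snd μ).smul c)
  have hW'i : ∀ i, Integrable (fun p : Ω × EuclideanSpace ℝ ι => (-s • X p.1 + c • p.2) i)
      (μ.prod (stdGaussian (EuclideanSpace ℝ ι))) := fun i =>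
    (EuclideanSpace.proj i : EuclideanSpace ℝ ι →L[ℝ] ℝ).integrable_comp hW'
  rw [integral_congr_ae (ae_of_all _ fun p => fderiv_apply_eq_sum_coord g _ _),
    integral_congr_ae (ae_of_all _ fun p => fderiv_apply_eq_sum_coord g _ (WithLp.toLp 2 _)),
    integral_finsetSum _ fun i _ => integrable_mul_comp_of_hasCompactSupport (hW'i i) hW
      (hg' i).continuous (hs' i), integral_finsetSum _ fun i _ =>
      integrable_mul_comp_of_hasCompactSupport ((memLp_inner_single_sub hτ i).integrable one_le_two)
      hW (hg' i).continuous (hs' i), Finset.mul_sum]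
  exact Finset.sum_congr rfl fun i _ => h.integral_rotation_mul_comp hX hτ (hg' i) (hs' i) hc s i

theorem IsSteinKernel.abs_integral_fderiv_rotation_le [IsProbabilityMeasure μ]
    (h : IsSteinKernel μ X τ) (hX : Integrable X μ) (hτ : ∀ i, MemLp (τ i) 2 μ)
    {g : EuclideanSpace ℝ ι → ℝ} (hg : ContDiff ℝ 2 g) (hs : HasCompactSupport g)
    {L : ℝ≥0} (hL : LipschitzWith L g) {c : ℝ} (hc : 0 < c) (s : ℝ) :
    |∫ p, fderiv ℝ g (c • X p.1 + s • p.2) (-s • X p.1 + c • p.2)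
        ∂(μ.prod (stdGaussian (EuclideanSpace ℝ ι)))| ≤ L * steinDiscrepancy μ τ * c := by
  rw [h.integral_fderiv_rotation hX hτ hg hs hc.ne', abs_mul, abs_neg, abs_of_pos hc, mul_comm]
  gcongr
  calc |∫ p, fderiv ℝ g (c • X p.1 + s • p.2)
          (WithLp.toLp 2 fun i => ⟪τ i p.1 - EuclideanSpace.single i 1, p.2⟫)
          ∂(μ.prod (stdGaussian (EuclideanSpace ℝ ι)))|
      ≤ ∫ p, L * ‖(WithLp.toLp 2 fun i => ⟪τ i p.1 - EuclideanSpace.single i 1, p.2⟫ :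
          EuclideanSpace ℝ ι)‖ ∂(μ.prod (stdGaussian (EuclideanSpace ℝ ι))) := by
        rw [← Real.norm_eq_abs]
        have hN := (memLp_toLp (memLp_inner_single_sub hτ)).integrable one_le_two
        refine norm_integral_le_of_norm_le (hN.norm.const_mul _) (ae_of_all _ fun p => ?_)
        exact abs_fderiv_apply_le hL _ _
    _ ≤ L * steinDiscrepancy μ τ := by
        rw [integral_const_mul]
        gcongr
        exact integral_norm_toLp_inner_prod_stdGaussian_le
          (v := fun i ω => τ i ω - EuclideanSpace.single i 1) fun i => (hτ i).sub (memLp_const _)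

theorem IsSteinKernel.abs_integral_sub_le_of_contDiff [IsProbabilityMeasure μ]
    (h : IsSteinKernel μ X τ) (hX : Integrable X μ) (hτ : ∀ i, MemLp (τ i) 2 μ)
    {g : EuclideanSpace ℝ ι → ℝ} (hg : ContDiff ℝ 2 g) (hs : HasCompactSupport g)
    {L : ℝ≥0} (hL : LipschitzWith L g) :
    |∫ ω, g (X ω) ∂μ - ∫ z, g z ∂(stdGaussian (EuclideanSpace ℝ ι))| ≤
      L * steinDiscrepancy μ τ := by
  let Ψ : ℝ → ℝ := fun t => ∫ p, g (Real.cos t • X p.1 + Real.sin t • p.2)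
    ∂(μ.prod (stdGaussian (EuclideanSpace ℝ ι)))
  have hΨ : ∀ t, HasDerivAt Ψ (∫ p, fderiv ℝ g (Real.cos t • X p.1 + Real.sin t • p.2)
      (-Real.sin t • X p.1 + Real.cos t • p.2)
      ∂(μ.prod (stdGaussian (EuclideanSpace ℝ ι)))) t :=
    hasDerivAt_integral_comp_cos_smul_add_sin_smul (hX.comp_fst _)
      (IsGaussian.integrable_id.comp_snd μ) (hg.of_le one_le_two) hL
  have hΨ0 : Ψ 0 = ∫ ω, g (X ω) ∂μ := by
    simpa [Ψ] using integral_fun_fst (μ := μ) (ν := stdGaussian (EuclideanSpace ℝ ι))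
      fun ω => g (X ω)
  have hΨ1 : Ψ (Real.pi / 2) = ∫ z, g z ∂(stdGaussian (EuclideanSpace ℝ ι)) := by
    simpa [Ψ] using integral_fun_snd (μ := μ) (ν := stdGaussian (EuclideanSpace ℝ ι)) g
  have hbound := image_norm_le_of_norm_deriv_right_le_deriv_boundary (a := 0) (b := Real.pi / 2)
    (f := fun t => Ψ t - Ψ 0) (B := fun t => L * steinDiscrepancy μ τ * Real.sin t)
    (fun t _ => ((hΨ t).sub_const _).continuousAt.continuousWithinAt)
    (fun t _ => ((hΨ t).sub_const _).hasDerivWithinAt) (by simp)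
    (fun t => (Real.hasDerivAt_sin t).const_mul _)
    (fun t ht => h.abs_integral_fderiv_rotation_le hX hτ hg hs hL
      (Real.cos_pos_of_mem_Ioo ⟨by linarith [Real.pi_pos, ht.1], ht.2⟩) _)
    (Set.right_mem_Icc.2 Real.pi_div_two_pos.le)
  rw [← hΨ0, ← hΨ1, abs_sub_comm]
  simpa using hbound

theorem IsSteinKernel.abs_integral_sub_le [IsProbabilityMeasure μ]
    (h : IsSteinKernel μ X τ) (hX : Integrable X μ) (hτ : ∀ i, MemLp (τ i) 2 μ)
    {g : EuclideanSpace ℝ ι → ℝ} {L : ℝ≥0} (hL : LipschitzWith L g) :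
    |∫ ω, g (X ω) ∂μ - ∫ z, g z ∂(stdGaussian (EuclideanSpace ℝ ι))| ≤
      L * steinDiscrepancy μ τ := by
  have hZ : Integrable (fun z : EuclideanSpace ℝ ι => z) (stdGaussian (EuclideanSpace ℝ ι)) :=
    IsGaussian.integrable_id
  have hgX : Integrable (fun ω => g (X ω)) μ := integrable_comp_of_lipschitzWith hX hL
  have hgZ : Integrable g (stdGaussian (EuclideanSpace ℝ ι)) :=
    integrable_comp_of_lipschitzWith hZ hL
  obtain ⟨u, hu, hlim⟩ := exists_seq_contDiff_hasCompactSupport_tendsto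
    (g := fun x => g x - g 0) (by simpa [LipschitzWith] using hL) (sub_self _)
  have hlimit := ((tendsto_integral_comp_of_lipschitzWith hX (fun m => (hu m).2.2) hlim).sub
    (tendsto_integral_comp_of_lipschitzWith hZ (fun m => (hu m).2.2) hlim)).abs
  refine (le_of_eq ?_).trans (le_of_tendsto hlimit (.of_forall fun m =>
    h.abs_integral_sub_le_of_contDiff hX hτ (hu m).1 (hu m).2.1 (hu m).2.2))
  rw [integral_sub hgX (integrable_const _), integral_sub hgZ (integrable_const _)]
  simp

end SteinKernel

section HaarIntegrationByParts

attribute [local instance] Matrix.linftyOpNormedRing Matrix.linftyOpNormedAlgebra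

instance {m n : Type*} [Countable m] [Countable n] : BorelSpace (Matrix m n ℝ) :=
  inferInstanceAs (BorelSpace (m → n → ℝ))

section SkewMatrices

variable {ι : Type*} [Fintype ι] [DecidableEq ι]

theorem exp_transpose_mul_exp_of_transpose_eq_neg {J : Matrix ι ι ℝ} (hJ : Jᵀ = -J) :
    (NormedSpace.exp J)ᵀ * NormedSpace.exp J = 1 := by
  rw [← Matrix.exp_transpose, hJ, ← Matrix.exp_add_of_commute _ _ (Commute.refl J).neg_left]
  simp

theorem isCompact_setOf_transpose_mul_self_eq_one :
    IsCompact {M : Matrix ι ι ℝ | Mᵀ * M = 1} := by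
  have hbox : IsCompact {M : Matrix ι ι ℝ | ∀ i j, M i j ∈ Set.Icc (-1 : ℝ) 1} :=
    isCompact_pi_infinite (s := fun _ : ι => {v : ι → ℝ | ∀ j, v j ∈ Set.Icc (-1 : ℝ) 1})
      fun _ => isCompact_pi_infinite fun _ => isCompact_Icc
  refine hbox.of_isClosed_subset (isClosed_eq (by fun_prop) continuous_const) fun M hM i j => ?_
  exact abs_le.1 (entry_norm_bound_of_unitary (𝕜 := ℝ) (Matrix.mem_unitaryGroup_iff'.2 hM) i j)

/-- The skew-symmetric matrix `E_ab - E_ba` with index `p = (a, b)`. These matrices span the Lie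
algebra of the orthogonal group; each basis vector occurs twice, once with either sign. -/
def skewSingle (p : ι × ι) : Matrix ι ι ℝ :=
  Matrix.single p.1 p.2 1 - Matrix.single p.2 p.1 1

theorem transpose_skewSingle {ι : Type*} [DecidableEq ι] (p : ι × ι) :
    (skewSingle p)ᵀ = -skewSingle p := by
  simp [skewSingle]

theorem sum_trace_mul_skewSingle_smul (K : Matrix ι ι ℝ) :
    ∑ p, trace (K * skewSingle p) • skewSingle p = (2 : ℝ) • (Kᵀ - K) := by
  have htrace : ∀ p, trace (K * skewSingle p) = K p.2 p.1 - K p.1 p.2 := fun p => by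
    simp [skewSingle, Matrix.mul_sub, Matrix.trace_mul_single]
  simp_rw [htrace]
  ext a b
  simp only [skewSingle, Fintype.sum_prod_type, Matrix.sum_apply, Matrix.smul_apply,
    Matrix.sub_apply, Matrix.single_apply, Matrix.transpose_apply, smul_eq_mul, ite_and, mul_sub,
    mul_ite, mul_one, mul_zero, Finset.sum_sub_distrib, Finset.sum_ite_irrel, Finset.sum_ite_eq',
    Finset.sum_const_zero, Finset.mem_univ, if_true]
  ring

theorem sum_skewSingle_mul_self :
    ∑ p : ι × ι, skewSingle p * skewSingle p =
      -(2 * ((Fintype.card ι : ℝ) - 1)) • (1 : Matrix ι ι ℝ) := by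
  ext a b
  have hentry : ∀ c, ∑ p : ι × ι, skewSingle p a c * skewSingle p c b =
      2 * ((if a = c then (1 : Matrix ι ι ℝ) a b else 0) - (1 : Matrix ι ι ℝ) a b) := fun c => by
    have h := congr($(sum_trace_mul_skewSingle_smul (Matrix.single c a (1 : ℝ))) c b)
    simp only [Matrix.trace_single_mul, Matrix.sum_apply, Matrix.smul_apply, Matrix.sub_apply,
      Matrix.transpose_apply, smul_eq_mul, one_mul] at h
    rw [h]
    rcases eq_or_ne a c with rfl | hac <;> simp [Matrix.single_apply, Matrix.one_apply, *]
  simp only [Matrix.sum_apply, Matrix.mul_apply]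
  rw [Finset.sum_comm, Finset.sum_congr rfl fun c _ => hentry c, ← Finset.mul_sum]
  simp
  ring

theorem sum_trace_mul_skewSingle_mul_self_mul (C M : Matrix ι ι ℝ) :
    ∑ p, trace (C * (skewSingle p * skewSingle p) * M) =
      -(2 * ((Fintype.card ι : ℝ) - 1)) * trace (C * M) := by
  rw [← trace_sum, ← Finset.sum_mul, ← Finset.mul_sum, sum_skewSingle_mul_self]
  simp

theorem sum_trace_mul_skewSingle_smul_mul (C : Matrix ι ι ℝ) {M : Matrix ι ι ℝ}
    (hM : Mᵀ * M = 1) :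
    ∑ p, trace (M * C * skewSingle p) • (skewSingle p * M) = (2 : ℝ) • (Cᵀ - M * C * M) := by
  simp_rw [← smul_mul_assoc, ← Finset.sum_mul]
  rw [sum_trace_mul_skewSingle_smul, smul_mul_assoc, sub_mul, transpose_mul, Matrix.mul_assoc, hM,
    Matrix.mul_one]

end SkewMatrices

variable {n : ℕ} {μ : Measure (Matrix (Fin n) (Fin n) ℝ)}

theorem IsHaarO.memLp_of_continuous (hμ : IsHaarO n μ) {E : Type*} [NormedAddCommGroup E]
    [SecondCountableTopology E] {f : Matrix (Fin n) (Fin n) ℝ → E} (hf : Continuous f)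
    (p : ℝ≥0∞) : MemLp f p μ := by
  have := hμ.1
  obtain ⟨K, hK⟩ :=
    isCompact_setOf_transpose_mul_self_eq_one.exists_bound_of_continuousOn hf.continuousOn
  exact .of_bound hf.aestronglyMeasurable K (hμ.2.1.mono hK)

theorem IsHaarO.integrable_of_continuous (hμ : IsHaarO n μ) {E : Type*} [NormedAddCommGroup E]
    [SecondCountableTopology E] {f : Matrix (Fin n) (Fin n) ℝ → E} (hf : Continuous f) :
    Integrable f μ :=
  memLp_one_iff_integrable.1 (hμ.memLp_of_continuous hf 1)

theorem IsHaarO.integral_mul_left (hμ : IsHaarO n μ) {f : Matrix (Fin n) (Fin n) ℝ → ℝ}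
    (hf : Continuous f) {Q : Matrix (Fin n) (Fin n) ℝ} (hQ : Qᵀ * Q = 1) :
    ∫ M, f (Q * M) ∂μ = ∫ M, f M ∂μ := by
  have hmul : Measurable fun M : Matrix (Fin n) (Fin n) ℝ => Q * M :=
    (by fun_prop : Continuous _).measurable
  conv_rhs => rw [← hμ.2.2 Q hQ, integral_map hmul.aemeasurable hf.aestronglyMeasurable]

theorem IsHaarO.integral_fderiv_mul_eq_zero (hμ : IsHaarO n μ)
    {f : Matrix (Fin n) (Fin n) ℝ → ℝ} (hf : ContDiff ℝ 1 f) {J : Matrix (Fin n) (Fin n) ℝ}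
    (hJ : Jᵀ = -J) : ∫ M, fderiv ℝ f M (J * M) ∂μ = 0 := by
  have := hμ.1
  have horth : ∀ t : ℝ, (NormedSpace.exp (t • J))ᵀ * NormedSpace.exp (t • J) = 1 := fun t =>
    exp_transpose_mul_exp_of_transpose_eq_neg (by rw [transpose_smul, hJ, smul_neg])
  have hDf : Continuous fun M => fderiv ℝ f M (J * M) :=
    (hf.continuous_fderiv one_ne_zero).clm_apply (by fun_prop)
  have hrot : ∀ t : ℝ, Continuous fun M => f (NormedSpace.exp (t • J) * M) := fun t =>
    hf.continuous.comp (by fun_prop)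
  obtain ⟨K, hK⟩ :=
    isCompact_setOf_transpose_mul_self_eq_one.exists_bound_of_continuousOn hDf.continuousOn
  have hderiv := (hasDerivAt_integral_of_dominated_loc_of_deriv_le (μ := μ) (x₀ := (0 : ℝ))
    (F := fun t M => f (NormedSpace.exp (t • J) * M))
    (F' := fun t M => fderiv ℝ f (NormedSpace.exp (t • J) * M) (J * (NormedSpace.exp (t • J) * M)))
    (bound := fun _ => K) Filter.univ_mem (.of_forall fun t => (hrot t).aestronglyMeasurable)
    (hμ.integrable_of_continuous (hrot 0)) (by simpa using hDf.aestronglyMeasurable)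
    (hμ.2.1.mono fun M hM t _ => hK _ ?_) (integrable_const K)
    (ae_of_all _ fun M t _ => ?_)).2
  · simp only [hμ.integral_mul_left hf.continuous (horth _)] at hderiv
    simpa using hderiv.unique (hasDerivAt_const _ _)
  · rw [Set.mem_ofPred_eq, transpose_mul, Matrix.mul_assoc, ← Matrix.mul_assoc _ _ M, horth t,
      Matrix.one_mul, hM]
  · have hexp := (hasDerivAt_exp_smul_const' (𝕂 := ℝ) J t).mul_const M
    rw [Matrix.mul_assoc] at hexp
    exact (hf.differentiable one_ne_zero _).hasFDerivAt.comp_hasDerivAt t hexp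

/-- The linear functional `M ↦ tr (C M)`. -/
noncomputable def traceMulCLM (C : Matrix (Fin n) (Fin n) ℝ) : Matrix (Fin n) (Fin n) ℝ →L[ℝ] ℝ :=
  LinearMap.toContinuousLinearMap
    ((Matrix.traceLinearMap (Fin n) ℝ ℝ).comp (LinearMap.mulLeft ℝ C))

@[simp]
theorem traceMulCLM_apply (C M : Matrix (Fin n) (Fin n) ℝ) : traceMulCLM C M = trace (C * M) :=
  rfl

theorem IsHaarO.integral_trace_mul_sq_add_fderiv_eq_zero (hμ : IsHaarO n μ)
    {f : Matrix (Fin n) (Fin n) ℝ → ℝ} (hf : ContDiff ℝ 1 f) (C : Matrix (Fin n) (Fin n) ℝ)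
    {J : Matrix (Fin n) (Fin n) ℝ} (hJ : Jᵀ = -J) :
    ∫ M, (trace (C * (J * J) * M) * f M + fderiv ℝ f M (trace (M * C * J) • (J * M))) ∂μ = 0 := by
  have hprod : ContDiff ℝ 1 fun M => traceMulCLM (C * J) M * f M :=
    (traceMulCLM (C * J)).contDiff.mul hf
  rw [← hμ.integral_fderiv_mul_eq_zero hprod hJ]
  refine integral_congr_ae (ae_of_all _ fun M => ?_)
  have hderiv : fderiv ℝ (fun M => traceMulCLM (C * J) M * f M) M (J * M) =
      trace (C * J * M) * fderiv ℝ f M (J * M) + f M * trace (C * J * (J * M)) :=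
    congr($(((traceMulCLM (C * J)).hasFDerivAt.mul
      (hf.differentiable one_ne_zero M).hasFDerivAt).fderiv) (J * M))
  have hcycle : trace (M * C * J) = trace (C * J * M) := by
    rw [Matrix.mul_assoc, Matrix.trace_mul_comm]
  simp only [hderiv, hcycle, map_smul, smul_eq_mul]
  simp only [Matrix.mul_assoc]
  ring

/-- The Schwinger-Dyson equation of the orthogonal group. -/
theorem IsHaarO.integral_trace_mul_eq_integral_fderiv (hμ : IsHaarO n μ)
    {f : Matrix (Fin n) (Fin n) ℝ → ℝ} (hf : ContDiff ℝ 1 f) (C : Matrix (Fin n) (Fin n) ℝ) :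
    ((n : ℝ) - 1) * ∫ M, trace (C * M) * f M ∂μ = ∫ M, fderiv ℝ f M (Cᵀ - M * C * M) ∂μ := by
  have : Continuous (fderiv ℝ f) := hf.continuous_fderiv one_ne_zero
  have hfc := hf.continuous
  have hpointwise : ∀ᵐ M ∂μ, ∑ p, (trace (C * (skewSingle p * skewSingle p) * M) * f M +
      fderiv ℝ f M (trace (M * C * skewSingle p) • (skewSingle p * M))) =
      2 * fderiv ℝ f M (Cᵀ - M * C * M) - 2 * (n - 1) * (trace (C * M) * f M) := by
    filter_upwards [hμ.2.1] with M hM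
    rw [Finset.sum_add_distrib, ← Finset.sum_mul, ← map_sum,
      sum_trace_mul_skewSingle_mul_self_mul, sum_trace_mul_skewSingle_smul_mul C hM, map_smul,
      Fintype.card_fin, smul_eq_mul]
    ring
  have hsum := Finset.sum_eq_zero fun p (_ : p ∈ Finset.univ) =>
    hμ.integral_trace_mul_sq_add_fderiv_eq_zero hf C (transpose_skewSingle p)
  rw [← integral_finsetSum _ fun p _ => hμ.integrable_of_continuous (by fun_prop),
    integral_congr_ae hpointwise, integral_sub, integral_const_mul, integral_const_mul] at hsum
  · linarith
  all_goals exact hμ.integrable_of_continuous (by fun_prop)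

theorem IsHaarO.integral_trace_mul_mul_trace_mul (hμ : IsHaarO n μ)
    (C D : Matrix (Fin n) (Fin n) ℝ) :
    ((n : ℝ) - 1) * ∫ M, trace (C * M) * trace (D * M) ∂μ =
      ∫ M, trace (D * (Cᵀ - M * C * M)) ∂μ := by
  have hderiv : ∀ M V, fderiv ℝ (fun M => traceMulCLM D M) M V = trace (D * V) := fun M V =>
    congr($((traceMulCLM D).hasFDerivAt.fderiv) V)
  have h := hμ.integral_trace_mul_eq_integral_fderiv (f := fun M => traceMulCLM D M)
    (traceMulCLM D).contDiff C
  simp only [hderiv] at h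
  exact h

theorem IsHaarO.integral_trace_mul_mul_prod_trace_mul (hμ : IsHaarO n μ)
    (C D E F : Matrix (Fin n) (Fin n) ℝ) :
    ((n : ℝ) - 1) * ∫ M, trace (C * M) * (trace (D * M) * trace (E * M) * trace (F * M)) ∂μ =
      ∫ M, (trace (D * (Cᵀ - M * C * M)) * (trace (E * M) * trace (F * M)) +
        trace (E * (Cᵀ - M * C * M)) * (trace (D * M) * trace (F * M)) +
        trace (F * (Cᵀ - M * C * M)) * (trace (D * M) * trace (E * M))) ∂μ := by
  have hderiv : ∀ M V, fderiv ℝ (fun M => traceMulCLM D M * traceMulCLM E M * traceMulCLM F M) M V =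
      traceMulCLM D M * traceMulCLM E M * trace (F * V) +
        traceMulCLM F M * (traceMulCLM D M * trace (E * V) + traceMulCLM E M * trace (D * V)) :=
    fun M V => congr($((((traceMulCLM D).hasFDerivAt.mul (traceMulCLM E).hasFDerivAt).mul
      (traceMulCLM F).hasFDerivAt).fderiv) V)
  have h := hμ.integral_trace_mul_eq_integral_fderiv
    (f := fun M => traceMulCLM D M * traceMulCLM E M * traceMulCLM F M)
    (((traceMulCLM D).contDiff.mul (traceMulCLM E).contDiff).mul (traceMulCLM F).contDiff) C
  simp only [hderiv] at h
  refine h.trans (integral_congr_ae (ae_of_all _ fun M => ?_))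
  simp only [traceMulCLM_apply]
  ring

/-- The random vector of the theorem, `M ↦ (tr (C₁ M), tr (C₂ M), …)`. -/
noncomputable def traceVector {ι : Type*} [Fintype ι] (C : ι → Matrix (Fin n) (Fin n) ℝ) :
    Matrix (Fin n) (Fin n) ℝ →L[ℝ] EuclideanSpace ℝ ι :=
  LinearMap.toContinuousLinearMap
    ((WithLp.linearEquiv 2 ℝ (ι → ℝ)).symm.toLinearMap ∘ₗ
      LinearMap.pi fun i => (traceMulCLM (C i)).toLinearMap)

@[simp]
theorem traceVector_apply {ι : Type*} [Fintype ι] (C : ι → Matrix (Fin n) (Fin n) ℝ)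
    (M : Matrix (Fin n) (Fin n) ℝ) (i : ι) : traceVector C M i = trace (C i * M) :=
  rfl

theorem IsHaarO.isSteinKernel_traceVector (hμ : IsHaarO n μ) (hn : n ≠ 1) {ι : Type*} [Fintype ι]
    (C : ι → Matrix (Fin n) (Fin n) ℝ) :
    IsSteinKernel μ (fun M => traceVector C M)
      (fun i M => ((n : ℝ) - 1)⁻¹ • traceVector C ((C i)ᵀ - M * C i * M)) := by
  intro f hf _ i
  have hn' : (n : ℝ) - 1 ≠ 0 := sub_ne_zero.2 (by exact_mod_cast hn)
  have hcomp : ContDiff ℝ 1 fun M => f (traceVector C M) := hf.comp (traceVector C).contDiff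
  have hderiv : ∀ M V, fderiv ℝ (fun M => f (traceVector C M)) M V =
      fderiv ℝ f (traceVector C M) (traceVector C V) := fun M V =>
    congr($(((hf.differentiable one_ne_zero _).hasFDerivAt.comp M
      (traceVector C).hasFDerivAt).fderiv) V)
  have h := hμ.integral_trace_mul_eq_integral_fderiv hcomp (C i)
  simp only [hderiv] at h
  simp only [traceVector_apply, map_smul, smul_eq_mul, integral_const_mul]
  rw [← h, inv_mul_cancel_left₀ hn']

end HaarIntegrationByParts

section HaarMoments

variable {n : ℕ} {μ : Measure (Matrix (Fin n) (Fin n) ℝ)}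

section RowSymmetries

variable {f : Matrix (Fin n) (Fin n) ℝ → ℝ}

theorem IsHaarO.integral_eq_zero_of_odd_row (hμ : IsHaarO n μ) (hf : Continuous f) (a : Fin n)
    (hodd : ∀ M, f (diagonal (fun c => if c = a then -1 else 1) * M) = -f M) :
    ∫ M, f M ∂μ = 0 := by
  have horth : (diagonal fun c => if c = a then (-1 : ℝ) else 1)ᵀ *
      diagonal (fun c => if c = a then (-1 : ℝ) else 1) = 1 := by
    rw [diagonal_transpose, diagonal_mul_diagonal, ← diagonal_one]
    congr with c
    split_ifs <;> simp
  have h := hμ.integral_mul_left hf horth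
  simp only [hodd, integral_neg] at h
  linarith

theorem IsHaarO.integral_permMatrix_mul (hμ : IsHaarO n μ) (hf : Continuous f)
    (σ : Equiv.Perm (Fin n)) : ∫ M, f (σ.permMatrix ℝ * M) ∂μ = ∫ M, f M ∂μ :=
  hμ.integral_mul_left hf (by rw [transpose_permMatrix, ← permMatrix_mul]; simp)

theorem permMatrix_mul_mulVec {ι κ : Type*} [Fintype ι] [DecidableEq ι] [Fintype κ]
    (σ : Equiv.Perm ι) (M : Matrix ι κ ℝ) (u : κ → ℝ) (a : ι) :
    ((σ.permMatrix ℝ * M) *ᵥ u) a = (M *ᵥ u) (σ a) := by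
  simp [Equiv.Perm.permMatrix, PEquiv.toMatrix_toPEquiv_mul, mulVec, dotProduct]

theorem diagonal_mul_mulVec {ι κ : Type*} [Fintype ι] [DecidableEq ι] [Fintype κ]
    (s : ι → ℝ) (M : Matrix ι κ ℝ) (u : κ → ℝ) (a : ι) :
    ((diagonal s * M) *ᵥ u) a = s a * (M *ᵥ u) a := by
  rw [← mulVec_mulVec, mulVec_diagonal]

end RowSymmetries

section FewRows

theorem trace_vecMulVec_single_mul (u : Fin n → ℝ) (a : Fin n) (M : Matrix (Fin n) (Fin n) ℝ) :
    trace (vecMulVec u (Pi.single a 1) * M) = (M *ᵥ u) a := by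
  rw [trace_mul_comm, mul_vecMulVec, trace_vecMulVec, dotProduct_single, mul_one]

theorem mulVec_reflection_apply (u v : Fin n → ℝ) (a b : Fin n) (M : Matrix (Fin n) (Fin n) ℝ) :
    (((vecMulVec u (Pi.single a 1))ᵀ - M * vecMulVec u (Pi.single a 1) * M) *ᵥ v) b =
      (1 : Matrix _ _ ℝ) a b * (u ⬝ᵥ v) - (M *ᵥ u) b * (M *ᵥ v) a := by
  rw [transpose_vecMulVec, mul_vecMulVec, vecMulVec_mul, sub_mulVec]
  simp [vecMulVec_mulVec, one_apply, Pi.single_apply, eq_comm, mul_comm, mulVec, row_def]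

theorem IsHaarO.natCast_mul_integral_mulVec_mul_mulVec (hμ : IsHaarO n μ) (u v : Fin n → ℝ)
    (a b : Fin n) :
    n * ∫ M, (M *ᵥ u) a * (M *ᵥ v) b ∂μ = (1 : Matrix _ _ ℝ) a b * (u ⬝ᵥ v) := by
  have := hμ.1
  rcases eq_or_ne a b with rfl | hab
  · have h := hμ.integral_trace_mul_mul_trace_mul (vecMulVec u (Pi.single a 1))
      (vecMulVec v (Pi.single a 1))
    simp only [trace_vecMulVec_single_mul, mulVec_reflection_apply] at h
    rw [integral_sub (integrable_const _) (hμ.integrable_of_continuous (by fun_prop)),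
      integral_const, probReal_univ, one_smul] at h
    linarith
  · rw [one_apply_ne hab, zero_mul,
      hμ.integral_eq_zero_of_odd_row (by fun_prop) a fun M => ?_, mul_zero]
    simp [diagonal_mul_mulVec, hab.symm]

/-- The mixed moment of the entries `(M u)_a`, `(M v)_b`, `(M w)_c`, `(M x)_e`. -/
noncomputable def rowMoment (μ : Measure (Matrix (Fin n) (Fin n) ℝ)) (u v w x : Fin n → ℝ)
    (a b c e : Fin n) : ℝ :=
  ∫ M, (M *ᵥ u) a * (M *ᵥ v) b * (M *ᵥ w) c * (M *ᵥ x) e ∂μ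

variable (u v w x : Fin n → ℝ)

theorem rowMoment_swap₁₂ (a b c e : Fin n) :
    rowMoment μ u v w x a b c e = rowMoment μ v u w x b a c e := by
  simp only [rowMoment, mul_comm ((_ *ᵥ u) a)]

theorem rowMoment_swap₂₃ (a b c e : Fin n) :
    rowMoment μ u v w x a b c e = rowMoment μ u w v x a c b e := by
  simp only [rowMoment, mul_right_comm]

theorem rowMoment_swap₃₄ (a b c e : Fin n) :
    rowMoment μ u v w x a b c e = rowMoment μ u v x w a b e c := by
  simp only [rowMoment, mul_right_comm _ _ ((_ *ᵥ x) e)]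

theorem IsHaarO.rowMoment_perm (hμ : IsHaarO n μ) (a b c e : Fin n) (σ : Equiv.Perm (Fin n)) :
    rowMoment μ u v w x (σ a) (σ b) (σ c) (σ e) = rowMoment μ u v w x a b c e := by
  simp only [rowMoment, ← permMatrix_mul_mulVec]
  exact hμ.integral_permMatrix_mul
    (f := fun M => (M *ᵥ u) a * (M *ᵥ v) b * (M *ᵥ w) c * (M *ᵥ x) e) (by fun_prop) σ

theorem IsHaarO.rowMoment_eq_zero (hμ : IsHaarO n μ) {a b c e : Fin n} (hb : b ≠ a) (hc : c ≠ a)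
    (he : e ≠ a) : rowMoment μ u v w x a b c e = 0 :=
  hμ.integral_eq_zero_of_odd_row (by fun_prop) a fun M => by
    simp [diagonal_mul_mulVec, hb, hc, he]

theorem IsHaarO.rowMoment_recursion (hμ : IsHaarO n μ) (a b c e : Fin n) :
    n * (((n : ℝ) - 1) * rowMoment μ u v w x a b c e + rowMoment μ u v w x b a c e +
      rowMoment μ u v w x c b a e + rowMoment μ u v w x e b c a) =
    (1 : Matrix _ _ ℝ) a b * (u ⬝ᵥ v) * ((1 : Matrix _ _ ℝ) c e * (w ⬝ᵥ x)) +
      (1 : Matrix _ _ ℝ) a c * (u ⬝ᵥ w) * ((1 : Matrix _ _ ℝ) b e * (v ⬝ᵥ x)) +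
      (1 : Matrix _ _ ℝ) a e * (u ⬝ᵥ x) * ((1 : Matrix _ _ ℝ) b c * (v ⬝ᵥ w)) := by
  have h := hμ.integral_trace_mul_mul_prod_trace_mul (vecMulVec u (Pi.single a 1))
    (vecMulVec v (Pi.single b 1)) (vecMulVec w (Pi.single c 1)) (vecMulVec x (Pi.single e 1))
  simp only [trace_vecMulVec_single_mul, mulVec_reflection_apply] at h
  have hsplit : ∀ M : Matrix (Fin n) (Fin n) ℝ,
      ((1 : Matrix _ _ ℝ) a b * (u ⬝ᵥ v) - (M *ᵥ u) b * (M *ᵥ v) a) *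
        ((M *ᵥ w) c * (M *ᵥ x) e) +
      ((1 : Matrix _ _ ℝ) a c * (u ⬝ᵥ w) - (M *ᵥ u) c * (M *ᵥ w) a) *
        ((M *ᵥ v) b * (M *ᵥ x) e) +
      ((1 : Matrix _ _ ℝ) a e * (u ⬝ᵥ x) - (M *ᵥ u) e * (M *ᵥ x) a) *
        ((M *ᵥ v) b * (M *ᵥ w) c) =
      (1 : Matrix _ _ ℝ) a b * (u ⬝ᵥ v) * ((M *ᵥ w) c * (M *ᵥ x) e) +
      (1 : Matrix _ _ ℝ) a c * (u ⬝ᵥ w) * ((M *ᵥ v) b * (M *ᵥ x) e) +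
      (1 : Matrix _ _ ℝ) a e * (u ⬝ᵥ x) * ((M *ᵥ v) b * (M *ᵥ w) c) -
      ((M *ᵥ u) b * (M *ᵥ v) a * (M *ᵥ w) c * (M *ᵥ x) e +
        (M *ᵥ u) c * (M *ᵥ v) b * (M *ᵥ w) a * (M *ᵥ x) e +
        (M *ᵥ u) e * (M *ᵥ v) b * (M *ᵥ w) c * (M *ᵥ x) a) := fun M => by ring
  simp only [hsplit, ← mul_assoc ((_ *ᵥ u) a)] at h
  rw [integral_sub, integral_add, integral_add, integral_add, integral_add, integral_const_mul,
    integral_const_mul, integral_const_mul] at h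
  · rw [← hμ.natCast_mul_integral_mulVec_mul_mulVec w x,
      ← hμ.natCast_mul_integral_mulVec_mul_mulVec v x,
      ← hμ.natCast_mul_integral_mulVec_mul_mulVec v w]
    simp only [rowMoment]
    linear_combination (n : ℝ) * h
  all_goals exact hμ.integrable_of_continuous (by fun_prop)

theorem IsHaarO.rowMoment_diag (hμ : IsHaarO n μ) (a : Fin n) :
    (n : ℝ) * (n + 2) * rowMoment μ u v w x a a a a =
      (u ⬝ᵥ v) * (w ⬝ᵥ x) + (u ⬝ᵥ w) * (v ⬝ᵥ x) + (u ⬝ᵥ x) * (v ⬝ᵥ w) := by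
  have h := hμ.rowMoment_recursion u v w x a a a a
  simp only [one_apply_eq, one_mul] at h
  linear_combination h

theorem IsHaarO.rowMoment_pair_recursion (hμ : IsHaarO n μ) {a c : Fin n} (hac : a ≠ c) :
    n * (n * rowMoment μ u v w x a a c c + rowMoment μ u w v x a a c c +
      rowMoment μ u x v w a a c c) = (u ⬝ᵥ v) * (w ⬝ᵥ x) := by
  have h := hμ.rowMoment_recursion u v w x a a c c
  have hw := hμ.rowMoment_perm u v w x a c a c (Equiv.swap a c)
  have hx := hμ.rowMoment_perm u v w x a c c a (Equiv.swap a c)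
  simp only [Equiv.swap_apply_left, Equiv.swap_apply_right] at hw hx
  rw [hw, hx, rowMoment_swap₂₃ u v w x a c a c, rowMoment_swap₃₄ u v w x a c c a,
    rowMoment_swap₂₃ u v x w a c a c] at h
  simp only [one_apply_eq, one_apply_ne hac, one_mul, zero_mul, add_zero] at h
  linear_combination h

theorem IsHaarO.rowMoment_pair (hμ : IsHaarO n μ) {a c : Fin n} (hac : a ≠ c) :
    (n : ℝ) * (n - 1) * (n + 2) * rowMoment μ u v w x a a c c =
      (n + 1) * ((u ⬝ᵥ v) * (w ⬝ᵥ x)) - (u ⬝ᵥ w) * (v ⬝ᵥ x) - (u ⬝ᵥ x) * (v ⬝ᵥ w) := by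
  have hv := hμ.rowMoment_pair_recursion u v w x hac
  have hw := hμ.rowMoment_pair_recursion u w v x hac
  have hx := hμ.rowMoment_pair_recursion u x v w hac
  rw [rowMoment_swap₃₄ u x w v] at hw
  rw [rowMoment_swap₃₄ u v x w, rowMoment_swap₃₄ u w x v] at hx
  linear_combination (n + 1) * hv - hw - hx

theorem IsHaarO.rowMoment_eq_zero_of_ne (hμ : IsHaarO n μ) (a : Fin n) {c e : Fin n}
    (hce : c ≠ e) : rowMoment μ u v w x a a c e = 0 := by
  rcases eq_or_ne a c with rfl | hac
  · rw [rowMoment_swap₃₄, rowMoment_swap₂₃, rowMoment_swap₁₂]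
    exact hμ.rowMoment_eq_zero _ _ _ _ hce hce hce
  · rw [rowMoment_swap₂₃, rowMoment_swap₁₂]
    exact hμ.rowMoment_eq_zero _ _ _ _ hac hac hce.symm

theorem IsHaarO.rowMoment_formula_self (hμ : IsHaarO n μ) (a c e : Fin n) :
    (n : ℝ) * (n - 1) * (n + 2) * rowMoment μ u v w x a a c e =
      (n + 2) * ((1 : Matrix _ _ ℝ) c e * ((u ⬝ᵥ v) * (w ⬝ᵥ x)) +
        (1 : Matrix _ _ ℝ) a c * (1 : Matrix _ _ ℝ) a e *
          ((u ⬝ᵥ w) * (v ⬝ᵥ x) + (u ⬝ᵥ x) * (v ⬝ᵥ w))) -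
      ((1 : Matrix _ _ ℝ) c e + 2 * ((1 : Matrix _ _ ℝ) a c * (1 : Matrix _ _ ℝ) a e)) *
        ((u ⬝ᵥ v) * (w ⬝ᵥ x) + (u ⬝ᵥ w) * (v ⬝ᵥ x) + (u ⬝ᵥ x) * (v ⬝ᵥ w)) := by
  rcases eq_or_ne c e with rfl | hce
  · rcases eq_or_ne a c with rfl | hac
    · simp only [one_apply_eq]
      linear_combination (n - 1 : ℝ) * hμ.rowMoment_diag u v w x a
    · simp only [one_apply_eq, one_apply_ne hac]
      linear_combination hμ.rowMoment_pair u v w x hac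
  · have hace : (1 : Matrix _ _ ℝ) a c * (1 : Matrix _ _ ℝ) a e = 0 := by
      rcases eq_or_ne a c with rfl | hac
      · rw [one_apply_ne hce, mul_zero]
      · rw [one_apply_ne hac, zero_mul]
    simp only [hμ.rowMoment_eq_zero_of_ne u v w x a hce, hace, one_apply_ne hce]
    ring

/-- The Weingarten formula of order four, cleared of denominators. -/
theorem IsHaarO.rowMoment_formula (hμ : IsHaarO n μ) (a b c e : Fin n) :
    (n : ℝ) * (n - 1) * (n + 2) * rowMoment μ u v w x a b c e =
      (n + 2) * ((1 : Matrix _ _ ℝ) a b * (1 : Matrix _ _ ℝ) c e * ((u ⬝ᵥ v) * (w ⬝ᵥ x)) +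
        (1 : Matrix _ _ ℝ) a c * (1 : Matrix _ _ ℝ) b e * ((u ⬝ᵥ w) * (v ⬝ᵥ x)) +
        (1 : Matrix _ _ ℝ) a e * (1 : Matrix _ _ ℝ) b c * ((u ⬝ᵥ x) * (v ⬝ᵥ w))) -
      ((1 : Matrix _ _ ℝ) a b * (1 : Matrix _ _ ℝ) c e +
        (1 : Matrix _ _ ℝ) a c * (1 : Matrix _ _ ℝ) b e +
        (1 : Matrix _ _ ℝ) a e * (1 : Matrix _ _ ℝ) b c) *
      ((u ⬝ᵥ v) * (w ⬝ᵥ x) + (u ⬝ᵥ w) * (v ⬝ᵥ x) + (u ⬝ᵥ x) * (v ⬝ᵥ w)) := by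
  rcases eq_or_ne b a with rfl | hba
  · rw [hμ.rowMoment_formula_self, one_apply_eq]
    ring
  rcases eq_or_ne c a with rfl | hca
  · rw [rowMoment_swap₂₃, hμ.rowMoment_formula_self]
    simp only [one_apply_eq, one_apply_ne hba, one_apply_ne hba.symm, dotProduct_comm w v]
    ring
  rcases eq_or_ne e a with rfl | hea
  · rw [rowMoment_swap₃₄, rowMoment_swap₂₃, hμ.rowMoment_formula_self]
    simp only [one_apply_eq, one_apply_ne hba.symm, one_apply_ne hca.symm, dotProduct_comm x]
    ring
  simp only [hμ.rowMoment_eq_zero u v w x hba hca hea, one_apply_ne hba.symm,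
    one_apply_ne hca.symm, one_apply_ne hea.symm]
  ring

end FewRows
end HaarMoments

section TraceMoments

variable {n : ℕ} {μ : Measure (Matrix (Fin n) (Fin n) ℝ)} (C D : Matrix (Fin n) (Fin n) ℝ)

theorem trace_mul_mul_mul_eq_sum (M : Matrix (Fin n) (Fin n) ℝ) :
    trace (D * (M * C * M)) =
      ∑ p : Fin n × Fin n, (M *ᵥ C.col p.2) p.1 * (M *ᵥ D.col p.1) p.2 := by
  rw [trace_mul_comm, Matrix.mul_assoc, Fintype.sum_prod_type]
  rfl

theorem IsHaarO.natCast_mul_integral_trace (hμ : IsHaarO n μ) :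
    n * ∫ M, trace (D * (M * C * M)) ∂μ = trace (Cᵀ * D) := by
  simp only [trace_mul_mul_mul_eq_sum]
  rw [integral_finsetSum _ fun p _ => hμ.integrable_of_continuous (by fun_prop), Finset.mul_sum]
  simp only [hμ.natCast_mul_integral_mulVec_mul_mulVec, one_apply, ite_mul, one_mul, zero_mul,
    Fintype.sum_prod_type, Finset.sum_ite_eq, Finset.mem_univ, if_true]
  rfl

theorem IsHaarO.integral_trace_sq_eq_sum (hμ : IsHaarO n μ) :
    ∫ M, trace (D * (M * C * M)) ^ 2 ∂μ = ∑ p : Fin n × Fin n, ∑ q : Fin n × Fin n,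
      rowMoment μ (C.col p.2) (D.col p.1) (C.col q.2) (D.col q.1) p.1 p.2 q.1 q.2 := by
  simp only [trace_mul_mul_mul_eq_sum, sq, Finset.sum_mul_sum]
  rw [integral_finsetSum _ fun p _ => hμ.integrable_of_continuous (by fun_prop)]
  refine Finset.sum_congr rfl fun p _ => ?_
  rw [integral_finsetSum _ fun q _ => hμ.integrable_of_continuous (by fun_prop)]
  simp only [rowMoment, mul_assoc]

theorem IsHaarO.integral_trace_sq (hμ : IsHaarO n μ) :
    (n : ℝ) * (n - 1) * (n + 2) * ∫ M, trace (D * (M * C * M)) ^ 2 ∂μ =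
      (n + 1) * (2 * trace (Cᵀ * D) ^ 2 + trace (Cᵀ * C) * trace (Dᵀ * D)) -
        2 * (trace ((Cᵀ * D)ᵀ * (Cᵀ * D)) + trace (Cᵀ * D * (Cᵀ * D)) +
          trace (Cᵀ * C * (Dᵀ * D))) := by
  have hdot : ∀ (K L : Matrix (Fin n) (Fin n) ℝ) i j, K.col i ⬝ᵥ L.col j = (Kᵀ * L) i j :=
    fun _ _ _ _ => rfl
  have hDC : ∀ i j, (Dᵀ * C) i j = (Cᵀ * D) j i := fun i j => dotProduct_comm _ _
  have hD : ∀ i j, (Dᵀ * D) i j = (Dᵀ * D) j i := fun i j => dotProduct_comm _ _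
  rw [hμ.integral_trace_sq_eq_sum]
  simp only [Finset.mul_sum, hμ.rowMoment_formula, hdot, hDC]
  generalize Cᵀ * D = V, Cᵀ * C = G, Dᵀ * D = H at *
  have hVV : ∑ a, ∑ b, V b a * V a b = trace (V * V) := Finset.sum_comm
  have hGH : ∑ a, ∑ b, G a b * H a b = trace (G * H) :=
    Finset.sum_congr rfl fun a _ => Finset.sum_congr rfl fun b _ => by rw [hD]
  have hHG : ∑ a, ∑ b, G b a * H a b = trace (G * H) := Finset.sum_comm
  simp only [Fintype.sum_prod_type, one_apply, mul_add, add_mul, Finset.sum_add_distrib,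
    Finset.sum_sub_distrib, mul_ite, ite_mul, mul_zero, zero_mul, mul_one, one_mul,
    Finset.sum_ite_irrel, Finset.sum_const_zero, Finset.sum_ite_eq, Finset.mem_univ, if_true]
  simp only [← Finset.mul_sum, ← Finset.sum_mul, hVV, hGH, hHG]
  simp only [trace, diag, mul_apply, transpose_apply]
  ring

theorem trace_sq_le_card_mul_trace_transpose_mul_self {ι : Type*} [Fintype ι]
    (K : Matrix ι ι ℝ) : trace K ^ 2 ≤ Fintype.card ι * trace (Kᵀ * K) := by
  refine (sq_sum_le_card_mul_sum_sq (s := Finset.univ) (f := fun a => K a a)).trans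
    (mul_le_mul_of_nonneg_left (Finset.sum_le_sum fun a _ => ?_) (Nat.cast_nonneg _))
  rw [diag_apply, mul_apply, sq]
  exact Finset.single_le_sum (f := fun b => Kᵀ a b * K b a) (fun b _ => mul_self_nonneg (K b a))
    (Finset.mem_univ a)

theorem IsHaarO.integral_trace_sq_le (hμ : IsHaarO n μ) :
    (n : ℝ) * (n * (n - 1) * (n + 2) * ∫ M, trace (D * (M * C * M)) ^ 2 ∂μ) ≤
      n * (n + 1) * (2 * trace (Cᵀ * D) ^ 2 + trace (Cᵀ * C) * trace (Dᵀ * D)) -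
        6 * trace (Cᵀ * D) ^ 2 := by
  have hsymm : 2 * trace (Cᵀ * D) ^ 2 ≤
      n * (trace ((Cᵀ * D)ᵀ * (Cᵀ * D)) + trace (Cᵀ * D * (Cᵀ * D))) := by
    have h := trace_sq_le_card_mul_trace_transpose_mul_self (Cᵀ * D + (Cᵀ * D)ᵀ)
    generalize Cᵀ * D = V at *
    have hV : trace (Vᵀ * Vᵀ) = trace (V * V) := by rw [← transpose_mul, trace_transpose]
    simp only [transpose_add, transpose_transpose, add_mul, mul_add, trace_add, trace_transpose, hV,
      trace_mul_comm V Vᵀ, Fintype.card_fin] at h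
    linarith
  have hmul : trace (Cᵀ * D) ^ 2 ≤ n * trace (Cᵀ * C * (Dᵀ * D)) := by
    have htrace : trace (C * Dᵀ) = trace (Cᵀ * D) := by
      rw [← trace_transpose, transpose_mul, transpose_transpose, trace_mul_comm]
    have hnorm : trace ((C * Dᵀ)ᵀ * (C * Dᵀ)) = trace (Cᵀ * C * (Dᵀ * D)) := by
      rw [transpose_mul, transpose_transpose, Matrix.mul_assoc, trace_mul_comm]
      simp only [Matrix.mul_assoc]
    simpa only [htrace, hnorm, Fintype.card_fin] using
      trace_sq_le_card_mul_trace_transpose_mul_self (C * Dᵀ)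
  rw [hμ.integral_trace_sq]
  linarith

theorem IsHaarO.integral_sub_trace_sq_le (hμ : IsHaarO n μ) (hn : 2 ≤ n)
    {C D : Matrix (Fin n) (Fin n) ℝ} (hC : trace (Cᵀ * C) = n)
    (hD : trace (Dᵀ * D) = n) {δ : ℝ} (hδ : δ = 0 ∨ δ = 1) (hCD : trace (Cᵀ * D) = n * δ) :
    ∫ M, (δ - trace (D * (M * C * M))) ^ 2 ∂μ ≤ 2 := by
  have := hμ.1
  have hn' : (2 : ℝ) ≤ n := by exact_mod_cast hn
  have hmean : ∫ M, trace (D * (M * C * M)) ∂μ = δ :=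
    mul_left_cancel₀ (by positivity) ((hμ.natCast_mul_integral_trace C D).trans hCD)
  have hexpand : ∫ M, (δ - trace (D * (M * C * M))) ^ 2 ∂μ =
      ∫ M, trace (D * (M * C * M)) ^ 2 ∂μ - δ ^ 2 := by
    simp only [sub_sq]
    rw [integral_add, integral_sub, integral_const_mul, hmean, integral_const, probReal_univ,
      one_smul]
    · ring
    all_goals exact hμ.integrable_of_continuous (by fun_prop)
  have hsq := hμ.integral_trace_sq_le C D
  rw [hC, hD, hCD] at hsq
  rw [hexpand]
  have hn₁ : 0 < (n : ℝ) - 1 := by linarith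
  have hquad : 0 ≤ (n : ℝ) ^ 2 * (n ^ 2 + n - 4) := mul_nonneg (sq_nonneg _) (by nlinarith)
  refine le_of_mul_le_mul_left ?_ (by positivity : 0 < (n : ℝ) * (n * (n - 1) * (n + 2)))
  rcases hδ with rfl | rfl <;> linarith

theorem IsHaarO.steinDiscrepancy_traceVector_le (hμ : IsHaarO n μ) (hn : 2 ≤ n) {ι : Type*}
    [Fintype ι] [DecidableEq ι] {C : ι → Matrix (Fin n) (Fin n) ℝ}
    (hC : ∀ i j, trace ((C i)ᵀ * C j) = n * (1 : Matrix ι ι ℝ) i j) :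
    steinDiscrepancy μ (fun i M => ((n : ℝ) - 1)⁻¹ • traceVector C ((C i)ᵀ - M * C i * M)) ≤
      √2 * Fintype.card ι / (n - 1) := by
  have hn' : (0 : ℝ) < n - 1 := by
    have : (2 : ℝ) ≤ n := by exact_mod_cast hn
    linarith
  have hcoord : ∀ i M, ‖((n : ℝ) - 1)⁻¹ • traceVector C ((C i)ᵀ - M * C i * M) -
      EuclideanSpace.single i 1‖ ^ 2 =
      ∑ j, ((n : ℝ) - 1)⁻¹ ^ 2 * ((1 : Matrix ι ι ℝ) i j - trace (C j * (M * C i * M))) ^ 2 :=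
    fun i M => by
      rw [EuclideanSpace.real_norm_sq_eq]
      refine Finset.sum_congr rfl fun j _ => ?_
      rw [← mul_pow]
      congr 1
      simp only [PiLp.sub_apply, PiLp.smul_apply, traceVector_apply, mul_sub, trace_sub,
        trace_mul_comm (C j) (C i)ᵀ, hC, PiLp.single_apply, one_apply, smul_eq_mul,
        eq_comm (a := j)]
      field_simp
      ring
  have hentry : ∀ i j, ∫ M, ((1 : Matrix ι ι ℝ) i j - trace (C j * (M * C i * M))) ^ 2 ∂μ ≤ 2 :=
    fun i j => hμ.integral_sub_trace_sq_le hn (by rw [hC, one_apply_eq, mul_one])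
      (by rw [hC, one_apply_eq, mul_one]) (by rw [one_apply]; split_ifs <;> simp) (hC i j)
  refine Real.sqrt_le_iff.2 ⟨by positivity, ?_⟩
  simp only [hcoord]
  rw [integral_finsetSum _ fun i _ => hμ.integrable_of_continuous (by fun_prop)]
  calc _ ≤ ∑ i : ι, ∑ j : ι, ((n : ℝ) - 1)⁻¹ ^ 2 * 2 := Finset.sum_le_sum fun i _ => by
        rw [integral_finsetSum _ fun j _ => hμ.integrable_of_continuous (by fun_prop)]
        refine Finset.sum_le_sum fun j _ => ?_
        rw [integral_const_mul]
        gcongr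
        exact hentry i j
    _ = (√2 * Fintype.card ι / (n - 1)) ^ 2 := by
        rw [div_pow, mul_pow, Real.sq_sqrt zero_le_two]
        simp
        ring

end TraceMoments

section GaussianLaw

variable {ι κ : Type*} [Fintype ι] [Fintype κ] {A : Matrix ι ι ℝ} {γ ν : Measure (ι → ℝ)}

theorem IsGaussianLaw.unique_s2 (hγ : IsGaussianLaw A γ) (hν : IsGaussianLaw A ν) : γ = ν := by
  classical
  have := hγ.1
  have := hν.1
  refine Measure.ext_of_charFunDual (funext fun L => ?_)
  have hL : ⇑L = fun y : ι → ℝ => ∑ i, L (Pi.single i 1) * y i := by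
    funext y
    conv_lhs => rw [← Finset.univ_sum_single y, map_sum]
    refine Finset.sum_congr rfl fun i _ => ?_
    rw [mul_comm, ← smul_eq_mul, ← map_smul, ← Pi.single_smul, smul_eq_mul, mul_one]
  rw [charFunDual_eq_charFun_map_one, charFunDual_eq_charFun_map_one, hL, hγ.2, hν.2]

theorem isGaussianLaw_map_mulVec_stdGaussian (S : Matrix ι κ ℝ) :
    IsGaussianLaw (S * Sᵀ)
      ((stdGaussian (EuclideanSpace ℝ κ)).map fun z : EuclideanSpace ℝ κ => S *ᵥ (z : κ → ℝ)) := by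
  have hS : Continuous fun z : EuclideanSpace ℝ κ => S *ᵥ (z : κ → ℝ) := by fun_prop
  refine ⟨Measure.isProbabilityMeasure_map hS.measurable.aemeasurable, fun l => ?_⟩
  let w : EuclideanSpace ℝ κ := WithLp.toLp 2 (l ᵥ* S)
  have hw : (fun y : ι → ℝ => ∑ i, l i * y i) ∘ (fun z : EuclideanSpace ℝ κ => S *ᵥ (z : κ → ℝ))
      = innerSL ℝ w := by
    funext z
    change l ⬝ᵥ S *ᵥ (z : κ → ℝ) = inner ℝ w z
    rw [dotProduct_mulVec, EuclideanSpace.inner_eq_star_dotProduct, star_trivial, dotProduct_comm]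
  have hvar : ∑ i, ∑ j, l i * (S * Sᵀ) i j * l j = ‖w‖ ^ 2 := by
    calc ∑ i, ∑ j, l i * (S * Sᵀ) i j * l j = l ⬝ᵥ (S * Sᵀ) *ᵥ l := by
          simp only [dotProduct, mulVec, Finset.mul_sum, mul_assoc]
      _ = (l ᵥ* S) ⬝ᵥ (l ᵥ* S) := by
          rw [← mulVec_mulVec, mulVec_transpose, dotProduct_mulVec]
      _ = ‖w‖ ^ 2 := by
          rw [EuclideanSpace.real_norm_sq_eq]
          simp only [dotProduct, w, sq]
  rw [Measure.map_map (by fun_prop) hS.measurable, hw, IsGaussian.map_eq_gaussianReal,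
    integral_strongDual_stdGaussian, variance_dual_stdGaussian, innerSL_apply_norm, hvar]

end GaussianLaw

section Frame

variable {n d : ℕ}

open scoped Matrix.Norms.L2Operator in
theorem lipschitzWith_toLp_mulVec {κ : Type*} [Fintype κ] (S : Matrix (Fin d) κ ℝ) :
    LipschitzWith (√(opNorm (S * Sᵀ))).toNNReal
      fun z : EuclideanSpace ℝ κ => WithLp.toLp 2 (S *ᵥ (z : κ → ℝ)) := by
  classical
  have hnorm : opNorm (S * Sᵀ) = ‖S‖ ^ 2 := by
    have h := l2_opNorm_conjTranspose_mul_self Sᴴ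
    rw [conjTranspose_conjTranspose, l2_opNorm_conjTranspose,
      conjTranspose_eq_transpose_of_trivial] at h
    rw [opNorm, l2_opNorm_toEuclideanCLM, h, sq]
  refine LipschitzWith.of_dist_le' fun x y => ?_
  rw [hnorm, Real.sqrt_sq (norm_nonneg _), dist_eq_norm, dist_eq_norm, ← WithLp.toLp_sub,
    ← mulVec_sub]
  exact l2_opNorm_mulVec S (x - y)

theorem exists_trace_orthogonal_frame (hn : n ≠ 0) {ι : Type*}
    (B : ι → Matrix (Fin n) (Fin n) ℝ) :
    let r := Module.finrank ℝ (Submodule.span ℝ (Set.range B))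
    ∃ (C : Fin r → Matrix (Fin n) (Fin n) ℝ) (S : Matrix ι (Fin r) ℝ),
      (∀ p q, trace ((C p)ᵀ * C q) = n * (1 : Matrix (Fin r) (Fin r) ℝ) p q) ∧
        ∀ i, B i = ∑ p, S i p • C p := by
  intro r
  let : NormedAddCommGroup (Matrix (Fin n) (Fin n) ℝ) :=
    toMatrixNormedAddCommGroup 1 PosDef.one
  let : InnerProductSpace ℝ (Matrix (Fin n) (Fin n) ℝ) :=
    toMatrixInnerProductSpace 1 PosDef.one.posSemidef
  have hinner : ∀ M N : Matrix (Fin n) (Fin n) ℝ, inner ℝ M N = trace (Mᵀ * N) := fun M N => by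
    change trace (N * 1 * Mᴴ) = _
    rw [mul_one, conjTranspose_eq_transpose_of_trivial, trace_mul_comm]
  let W := Submodule.span ℝ (Set.range B)
  let b : OrthonormalBasis (Fin r) ℝ W := stdOrthonormalBasis ℝ W
  have hw : ∀ i, B i ∈ W := fun i => Submodule.subset_span ⟨i, rfl⟩
  have hs : √(n : ℝ) ≠ 0 := by positivity
  refine ⟨fun p => √(n : ℝ) • (b p : Matrix (Fin n) (Fin n) ℝ),
    fun i p => (√(n : ℝ))⁻¹ * inner ℝ (b p) ⟨B i, hw i⟩, fun p q => ?_, fun i => ?_⟩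
  · rw [← hinner, inner_smul_left, inner_smul_right, ← Submodule.coe_inner,
      b.inner_eq_ite, ← mul_assoc, conj_trivial, Real.mul_self_sqrt n.cast_nonneg, one_apply]
  · have h := congrArg (Subtype.val : W → _) (b.sum_repr' ⟨B i, hw i⟩)
    rw [Submodule.coe_sum] at h
    refine h.symm.trans (Finset.sum_congr rfl fun p _ => ?_)
    rw [Submodule.coe_smul, smul_smul, mul_right_comm, inv_mul_cancel₀ hs, one_mul]

variable {ι κ : Type*} [Fintype κ] {B : ι → Matrix (Fin n) (Fin n) ℝ}
  {C : κ → Matrix (Fin n) (Fin n) ℝ} {S : Matrix ι κ ℝ}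

theorem trace_mul_transpose_eq_mul_transpose [DecidableEq κ]
    (hC : ∀ p q, trace ((C p)ᵀ * C q) = n * (1 : Matrix κ κ ℝ) p q)
    (hB : ∀ i, B i = ∑ p, S i p • C p) (i j : ι) :
    trace (B i * (B j)ᵀ) = n * (S * Sᵀ) i j := by
  calc trace (B i * (B j)ᵀ) = ∑ p, ∑ q, S i p * (S j q * trace ((C q)ᵀ * C p)) := by
        simp only [hB, transpose_sum, transpose_smul, Finset.sum_mul_sum, trace_sum, smul_mul,
          trace_smul, smul_eq_mul, trace_mul_comm (C _)]
    _ = n * (S * Sᵀ) i j := by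
        simp only [hC, one_apply, mul_apply, transpose_apply, mul_ite, mul_one, mul_zero,
          Finset.sum_ite_eq', Finset.mem_univ, if_true, Finset.mul_sum]
        exact Finset.sum_congr rfl fun p _ => by ring

theorem trace_mul_eq_mulVec_traceVector (hB : ∀ i, B i = ∑ p, S i p • C p)
    (M : Matrix (Fin n) (Fin n) ℝ) :
    (fun i => trace (B i * M)) = S *ᵥ (traceVector C M : κ → ℝ) := by
  funext i
  simp only [hB, Finset.sum_mul, trace_sum, smul_mul, trace_smul, smul_eq_mul, mulVec, dotProduct,
    traceVector_apply]

end Frame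

theorem IsHaarO.abs_integral_traceVector_sub_le {n : ℕ} {μ : Measure (Matrix (Fin n) (Fin n) ℝ)}
    (hμ : IsHaarO n μ) (hn : 2 ≤ n) {κ : Type*} [Fintype κ] [DecidableEq κ]
    {C : κ → Matrix (Fin n) (Fin n) ℝ}
    (hC : ∀ p q, trace ((C p)ᵀ * C q) = n * (1 : Matrix κ κ ℝ) p q)
    {f : EuclideanSpace ℝ κ → ℝ} {L : ℝ≥0} (hf : LipschitzWith L f) :
    |(∫ M, f (traceVector C M) ∂μ) - ∫ z, f z ∂(stdGaussian (EuclideanSpace ℝ κ))| ≤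
      L * (√2 * Fintype.card κ / (n - 1)) := by
  have := hμ.1
  refine ((hμ.isSteinKernel_traceVector (by lia) C).abs_integral_sub_le
    (hμ.integrable_of_continuous (by fun_prop))
    (fun i => hμ.memLp_of_continuous (by fun_prop) 2) hf).trans ?_
  exact mul_le_mul_of_nonneg_left (hμ.steinDiscrepancy_traceVector_le hn hC) L.coe_nonneg

theorem haar_trace_wasserstein_general (n d : ℕ) (hn : 2 ≤ n)
    (μ : Measure (Matrix (Fin n) (Fin n) ℝ)) (hμ : IsHaarO n μ)
    (B : Fin d → Matrix (Fin n) (Fin n) ℝ)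
    (A : Matrix (Fin d) (Fin d) ℝ)
    (hA : ∀ i j, A i j = (B i * (B j)ᵀ).trace / (n : ℝ))
    (γ : Measure (Fin d → ℝ)) (hγ : IsGaussianLaw A γ)
    (g : (Fin d → ℝ) → ℝ)
    (hg : ∀ x y : Fin d → ℝ, |g x - g y| ≤ Real.sqrt (∑ i, (x i - y i) ^ 2)) :
    |(∫ M, g (fun i => (B i * M).trace) ∂μ) - ∫ y, g y ∂γ| ≤
      (Module.finrank ℝ (Submodule.span ℝ (Set.range B)) : ℝ) * Real.sqrt (2 * opNorm A) /
        ((n : ℝ) - 1) := by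
  obtain ⟨C, S, hC, hB⟩ := exists_trace_orthogonal_frame (by lia : n ≠ 0) B
  obtain rfl : A = S * Sᵀ := by
    ext i j
    rw [hA, trace_mul_transpose_eq_mul_transpose hC hB, mul_div_cancel_left₀ _ (by positivity)]
  have hgL : LipschitzWith 1 fun x : EuclideanSpace ℝ (Fin d) => g x := by
    refine LipschitzWith.of_dist_le_mul fun x y => ?_
    simpa [Real.dist_eq, EuclideanSpace.dist_eq] using hg x y
  have hgc : Continuous g := hgL.continuous.comp (PiLp.continuous_toLp 2 _)
  have hS : Continuous fun z : EuclideanSpace ℝ _ => S *ᵥ (z : _ → ℝ) := by fun_prop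
  rw [hγ.unique_s2 (isGaussianLaw_map_mulVec_stdGaussian S),
    integral_map hS.measurable.aemeasurable hgc.aestronglyMeasurable]
  simp only [trace_mul_eq_mulVec_traceVector hB]
  refine (hμ.abs_integral_traceVector_sub_le hn hC
    (hgL.comp (lipschitzWith_toLp_mulVec S))).trans_eq ?_
  rw [one_mul, Real.coe_toNNReal _ (Real.sqrt_nonneg _), Fintype.card_fin,
    Real.sqrt_mul zero_le_two]
  ring

/-- **Theorem (Chatterjee–Meckes, adapted).** For linearly independent `B₁, …, B_d` with
`tr(BᵢBᵢᵀ) = n`, a Haar-distributed orthogonal `M`, `X = (tr(B₁M), …, tr(B_dM))`,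
`A_{ij} = tr(BᵢBⱼᵀ)/n` and `Y ∼ N(0, A)`, if `n ≥ 2` then for every `1`-Lipschitz
(w.r.t. the Euclidean norm) `g : ℝ^d → ℝ`,
`|E[g(X)] - E[g(Y)]| ≤ d √(2‖A‖) / (n-1)`. -/
theorem haar_trace_wasserstein (n d : ℕ) (hn : 2 ≤ n)
    (μ : Measure (Matrix (Fin n) (Fin n) ℝ)) (hμ : IsHaarO n μ)
    (B : Fin d → Matrix (Fin n) (Fin n) ℝ) (hB : LinearIndependent ℝ B)
    (htr : ∀ i, (B i * (B i)ᵀ).trace = (n : ℝ))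
    (A : Matrix (Fin d) (Fin d) ℝ)
    (hA : ∀ i j, A i j = (B i * (B j)ᵀ).trace / (n : ℝ))
    (γ : Measure (Fin d → ℝ)) (hγ : IsGaussianLaw A γ) :
    ∀ g : (Fin d → ℝ) → ℝ,
      (∀ x y : Fin d → ℝ, |g x - g y| ≤ Real.sqrt (∑ i, (x i - y i) ^ 2)) →
      |(∫ M, g (fun i => (B i * M).trace) ∂μ) - ∫ y, g y ∂γ| ≤
        (d : ℝ) * Real.sqrt (2 * opNorm A) / ((n : ℝ) - 1) := by
  intro g hg
  simpa [finrank_span_eq_card hB] using haar_trace_wasserstein_general n d hn μ hμ B A hA γ hγ g hg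
end
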